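/- Let K be a finite 2-dimensional geometric simplicial complex in ℝⁿ such that |K| is connected, K is locally planar, every edge of K is an interior edge (K has no boundary edges), and K is orientable. Then the genus g of the space |K| satisfies g = (2 − χ(K))/2, equivalently χ(K) = 2 − 2g. -/

import Mathlib

open Geometry

namespace PaperAlg

/-- Points of `ℝⁿ`. -/
abbrev Pt (n : ℕ) := EuclideanSpace ℝ (Fin n)

variable {n : ℕ}

/-- The 1-skeleton graph of a geometric simplicial complex `K`: its vertex set is the set of
vertices of `K`, and two vertices are adjacent iff they form an edge (a two-element face) of `K`. -/
def skeletonGraph (K : SimplicialComplex ℝ (Pt n)) : SimpleGraph K.vertices where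
  Adj u v := (u : Pt n) ≠ (v : Pt n) ∧
    ∃ s ∈ K.faces, (s : Set (Pt n)) = {(u : Pt n), (v : Pt n)}
  symm := by
    constructor
    rintro u v ⟨hne, s, hs, hset⟩
    exact ⟨fun h => hne h.symm, s, hs, by rw [hset, Set.pair_comm]⟩
  loopless := by constructor; rintro u ⟨hne, -⟩; exact hne rfl

/-- `K` is 2-dimensional: every face has at most three elements. -/
def TwoDimensional (K : SimplicialComplex ℝ (Pt n)) : Prop :=
  ∀ s ∈ K.faces, s.card ≤ 3

/-- The set of triangles (three-element faces) of `K` containing the finset `e`. -/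
def trianglesContaining (K : SimplicialComplex ℝ (Pt n)) (e : Finset (Pt n)) :
    Set (Finset (Pt n)) :=
  {t | t ∈ K.faces ∧ t.card = 3 ∧ e ⊆ t}

/-- An edge of `K` contained in exactly one triangle. -/
def IsBoundaryEdge (K : SimplicialComplex ℝ (Pt n)) (e : Finset (Pt n)) : Prop :=
  e ∈ K.faces ∧ e.card = 2 ∧ (trianglesContaining K e).ncard = 1

/-- An edge of `K` contained in exactly two triangles. -/
def IsInteriorEdge (K : SimplicialComplex ℝ (Pt n)) (e : Finset (Pt n)) : Prop :=
  e ∈ K.faces ∧ e.card = 2 ∧ (trianglesContaining K e).ncard = 2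

/-- The closed upper half-plane `{(a, b) ∈ ℝ² : b ≥ 0}`. -/
def HalfPlane : Set (ℝ × ℝ) := {p | 0 ≤ p.2}

/-- `x` has a neighborhood in `|K|` homeomorphic to an open subset of `ℝ²`. -/
def HasPlanarNbhd (K : SimplicialComplex ℝ (Pt n)) (x : Pt n) : Prop :=
  ∃ U : Set (Pt n), U ⊆ K.space ∧ U ∈ nhdsWithin x K.space ∧
    ∃ V : Set (ℝ × ℝ), IsOpen V ∧ Nonempty (↥U ≃ₜ ↥V)

/-- `x` has a neighborhood in `|K|` homeomorphic to an open subset of the closed half-plane. -/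
def HasHalfPlanarNbhd (K : SimplicialComplex ℝ (Pt n)) (x : Pt n) : Prop :=
  ∃ U : Set (Pt n), U ⊆ K.space ∧ U ∈ nhdsWithin x K.space ∧
    ∃ V : Set ↥HalfPlane, IsOpen V ∧ Nonempty (↥U ≃ₜ ↥V)

/-- `x` is a locally planar point of `|K|`. -/
def IsLocallyPlanarPt (K : SimplicialComplex ℝ (Pt n)) (x : Pt n) : Prop :=
  x ∈ K.space ∧ (HasPlanarNbhd K x ∨ HasHalfPlanarNbhd K x)

/-- `K` is locally planar if every point of `|K|` is locally planar. -/
def LocallyPlanar (K : SimplicialComplex ℝ (Pt n)) : Prop :=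
  ∀ x ∈ K.space, IsLocallyPlanarPt K x

/-- The vertices `a` of `K` such that `{v, a}` is an edge of `K`. -/
def linkVertices (K : SimplicialComplex ℝ (Pt n)) (v : Pt n) : Set (Pt n) :=
  {a | a ≠ v ∧ ∃ s ∈ K.faces, (s : Set (Pt n)) = {v, a}}

/-- The link graph `L(v)`: vertices are the `a` with `{v, a}` an edge of `K`, and `a`, `b`
are adjacent iff `{v, a, b}` is a triangle of `K`. -/
def linkGraph (K : SimplicialComplex ℝ (Pt n)) (v : Pt n) :
    SimpleGraph (linkVertices K v) where
  Adj a b := (a : Pt n) ≠ (b : Pt n) ∧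
    ∃ t ∈ K.faces, t.card = 3 ∧ (t : Set (Pt n)) = {v, (a : Pt n), (b : Pt n)}
  symm := by
    constructor
    rintro a b ⟨hne, t, ht, hc, hset⟩
    exact ⟨fun h => hne h.symm, t, ht, hc, by rw [hset, Set.pair_comm]⟩
  loopless := by constructor; rintro a ⟨hne, -⟩; exact hne rfl

/-- The vertices of `K` lying on some boundary edge. -/
def boundaryVertices (K : SimplicialComplex ℝ (Pt n)) : Set (Pt n) :=
  {v | ∃ e, IsBoundaryEdge K e ∧ v ∈ e}

/-- The boundary graph of `K`: the simple graph formed by the boundary edges of `K`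
and their endpoints. -/
def boundaryGraph (K : SimplicialComplex ℝ (Pt n)) :
    SimpleGraph (boundaryVertices K) where
  Adj u v := (u : Pt n) ≠ (v : Pt n) ∧
    ∃ e, IsBoundaryEdge K e ∧ (e : Set (Pt n)) = {(u : Pt n), (v : Pt n)}
  symm := by
    constructor
    rintro u v ⟨hne, e, he, hset⟩
    exact ⟨fun h => hne h.symm, e, he, by rw [hset, Set.pair_comm]⟩
  loopless := by constructor; rintro u ⟨hne, -⟩; exact hne rfl

/-- The Euler characteristic `χ(K) = V - E + F`. -/
noncomputable def eulerChar (K : SimplicialComplex ℝ (Pt n)) : ℤ :=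
  (K.vertices.ncard : ℤ)
    - ({e : Finset (Pt n) | e ∈ K.faces ∧ e.card = 2}.ncard : ℤ)
    + ({t : Finset (Pt n) | t ∈ K.faces ∧ t.card = 3}.ncard : ℤ)

/-- The three directed edges induced on its boundary by the cyclic ordering `(a, b, c)`. -/
def triDirs (o : Pt n × Pt n × Pt n) : Set (Pt n × Pt n) :=
  {(o.1, o.2.1), (o.2.1, o.2.2), (o.2.2, o.1)}

/-- `K` is orientable: one can assign to each triangle a cyclic ordering of its vertices so
that the two triangles containing any interior edge induce opposite directions on it. -/
def Orientable (K : SimplicialComplex ℝ (Pt n)) : Prop :=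
  ∃ ori : Finset (Pt n) → Pt n × Pt n × Pt n,
    (∀ t ∈ K.faces, t.card = 3 →
      (t : Set (Pt n)) = {(ori t).1, (ori t).2.1, (ori t).2.2}) ∧
    (∀ t₁ ∈ K.faces, ∀ t₂ ∈ K.faces, t₁.card = 3 → t₂.card = 3 → t₁ ≠ t₂ →
      ∀ e ∈ K.faces, e.card = 2 → e ⊆ t₁ → e ⊆ t₂ →
      ∀ x y : Pt n, x ∈ e → y ∈ e → x ≠ y →
        (x, y) ∈ triDirs (ori t₁) → (y, x) ∈ triDirs (ori t₂))

/-- The genus of a topological space `X`: the supremum of the numbers `m` for which there exist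
`m` pairwise disjoint subsets of `X`, each homeomorphic to the circle `S¹`, whose union has
connected complement. -/
noncomputable def genus (X : Type*) [TopologicalSpace X] : ℕ :=
  sSup {m : ℕ | ∃ C : Fin m → Set X,
    (Pairwise fun i j => Disjoint (C i) (C j)) ∧
    (∀ i, Nonempty (↥(C i) ≃ₜ ↥(Metric.sphere (0 : EuclideanSpace ℝ (Fin 2)) 1))) ∧
    IsConnected (⋃ i, C i)ᶜ}

open Relation

/-- Filled triangle. -/
def tri (a b c : Pt n) : Set (Pt n) :=
  {x | ∃ u v w : ℝ, 0 ≤ u ∧ 0 ≤ v ∧ 0 ≤ w ∧ u + v + w = 1 ∧ x = u • a + v • b + w • c}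

/-- Affine independence of three points. -/
def Ind (a b c : Pt n) : Prop :=
  ∀ u v w : ℝ, u + v + w = 0 → u • a + v • b + w • c = 0 → u = 0 ∧ v = 0 ∧ w = 0

lemma Ind.uniq {a b c : Pt n} (h : Ind a b c) {u v w u' v' w' : ℝ} (hs : u + v + w = 1)
    (hs' : u' + v' + w' = 1)
    (he : u • a + v • b + w • c = u' • a + v' • b + w' • c) : u = u' ∧ v = v' ∧ w = w' := by
  have := h (u - u') (v - v') (w - w') (by linarith) (by
    rw [← sub_eq_zero.2 he]; module)
  exact ⟨by linarith [this.1], by linarith [this.2.1], by linarith [this.2.2]⟩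

lemma Ind.rot {a b c : Pt n} (h : Ind a b c) : Ind b c a := by
  intro u v w hs he
  have := h w u v (by linarith) (by rw [← he]; abel)
  tauto

lemma tri_rot (a b c : Pt n) : tri b c a = tri a b c := by
  ext x
  constructor
  · rintro ⟨u, v, w, hu, hv, hw, hs, rfl⟩
    exact ⟨w, u, v, hw, hu, hv, by linarith, by abel⟩
  · rintro ⟨u, v, w, hu, hv, hw, hs, rfl⟩
    exact ⟨v, w, u, hv, hw, hu, by linarith, by abel⟩

lemma tri_eq (a b c : Pt n) : tri a b c = convexHull ℝ {a, b, c} := by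
  apply Set.Subset.antisymm
  · rintro x ⟨u, v, w, hu, hv, hw, hs, rfl⟩
    have hc := convex_convexHull ℝ ({a, b, c} : Set (Pt n))
    have ha : a ∈ convexHull ℝ ({a, b, c} : Set (Pt n)) := subset_convexHull _ _ (by simp)
    have hb : b ∈ convexHull ℝ ({a, b, c} : Set (Pt n)) := subset_convexHull _ _ (by simp)
    have hcc : c ∈ convexHull ℝ ({a, b, c} : Set (Pt n)) := subset_convexHull _ _ (by simp)
    have := hc.sum_mem (t := Finset.univ) (w := ![u, v, w]) (z := ![a, b, c])
      (by intro i _; fin_cases i <;> simpa) (by simp [Fin.sum_univ_three, hs])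
      (by intro i _; fin_cases i <;> simpa)
    simpa [Fin.sum_univ_three] using this
  · apply convexHull_min
    · rintro x (rfl | rfl | rfl)
      · exact ⟨1, 0, 0, by simp⟩
      · exact ⟨0, 1, 0, by simp⟩
      · exact ⟨0, 0, 1, by simp⟩
    · rintro x ⟨u, v, w, hu, hv, hw, hs, rfl⟩ y ⟨u', v', w', hu', hv', hw', hs', rfl⟩ s t h0 h1 hst
      refine ⟨s * u + t * u', s * v + t * v', s * w + t * w', by positivity, by positivity,
        by positivity, by linear_combination s * hs + t * hs' + hst, ?_⟩
      module

/-- Combinatorial closed oriented surface made of geometric triangles; `D` is the set of darts. -/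
structure Cx (n : ℕ) where
  D : Type
  ft : Fintype D
  ne : Nonempty D
  σ : D → D
  α : D → D
  p : D → Pt n
  σ3 : ∀ d, σ (σ (σ d)) = d
  α2 : ∀ d, α (α d) = d
  pα : ∀ d, p (α d) = p (σ d)
  ind : ∀ d, Ind (p d) (p (σ d)) (p (σ (σ d)))
  loc : ∀ x d e, x ∈ tri (p d) (p (σ d)) (p (σ (σ d))) → x ∈ tri (p e) (p (σ e)) (p (σ (σ e))) →
    ReflTransGen (fun a b => b = σ a ∨ (b = α a ∧ x ∈ segment ℝ (p a) (p (σ a)))) d e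

namespace Cx

variable (C : Cx n)

instance : Fintype C.D := C.ft
instance : Nonempty C.D := C.ne
noncomputable instance : DecidableEq C.D := Classical.decEq _

attribute [simp] σ3 α2 pα

@[simp] lemma pσα (d : C.D) : C.p (C.σ (C.α d)) = C.p d := by
  rw [← C.pα, C.α2]

/-- the triangle of a dart -/
def T (d : C.D) : Set (Pt n) := tri (C.p d) (C.p (C.σ d)) (C.p (C.σ (C.σ d)))

/-- the edge of a dart -/
def E (d : C.D) : Set (Pt n) := segment ℝ (C.p d) (C.p (C.σ d))

def Step (x : Pt n) (a b : C.D) : Prop := b = C.σ a ∨ (b = C.α a ∧ x ∈ C.E a)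

lemma loc' {x : Pt n} {d e : C.D} (hd : x ∈ C.T d) (he : x ∈ C.T e) :
    ReflTransGen (C.Step x) d e := C.loc x d e hd he

/-- underlying space -/
def S : Set (Pt n) := ⋃ d, C.T d

lemma mem_S {x : Pt n} : x ∈ C.S ↔ ∃ d, x ∈ C.T d := by simp [S]

@[simp] lemma Tσ (d : C.D) : C.T (C.σ d) = C.T d := by
  simp only [T, C.σ3]; exact tri_rot _ _ _

@[simp] lemma Eα (d : C.D) : C.E (C.α d) = C.E d := by
  simp [E, segment_symm]

lemma mem_E {x : Pt n} {d : C.D} : x ∈ C.E d ↔ ∃ a b : ℝ, 0 ≤ a ∧ 0 ≤ b ∧ a + b = 1 ∧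
    x = a • C.p d + b • C.p (C.σ d) := by
  simp only [E, segment, Set.mem_ofPred_eq]
  constructor
  · rintro ⟨a, b, ha, hb, hs, rfl⟩; exact ⟨a, b, ha, hb, hs, rfl⟩
  · rintro ⟨a, b, ha, hb, hs, rfl⟩; exact ⟨a, b, ha, hb, hs, rfl⟩

lemma E_sub_T (d : C.D) : C.E d ⊆ C.T d := by
  intro x hx
  obtain ⟨a, b, ha, hb, hs, rfl⟩ := C.mem_E.1 hx
  exact ⟨a, b, 0, ha, hb, le_rfl, by linarith, by simp⟩

lemma p_mem_E (d : C.D) : C.p d ∈ C.E d := left_mem_segment _ _ _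
lemma p_mem_E' (d : C.D) : C.p (C.σ d) ∈ C.E d := right_mem_segment _ _ _
lemma p_mem_T (d : C.D) : C.p d ∈ C.T d := C.E_sub_T _ (C.p_mem_E d)

lemma T_eq (d : C.D) : C.T d = convexHull ℝ {C.p d, C.p (C.σ d), C.p (C.σ (C.σ d))} := tri_eq _ _ _

lemma T_convex (d : C.D) : Convex ℝ (C.T d) := by rw [T_eq]; exact convex_convexHull _ _
lemma T_compact (d : C.D) : IsCompact (C.T d) := by
  rw [T_eq]; exact (Set.toFinite _).isCompact_convexHull ℝ
lemma S_compact : IsCompact C.S := isCompact_iUnion C.T_compact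

lemma pσ_ne (d : C.D) : C.p (C.σ d) ≠ C.p d := by
  intro h
  have := C.ind d 1 (-1) 0 (by norm_num) (by rw [h]; simp)
  simp at this

lemma pσσ_ne (d : C.D) : C.p (C.σ (C.σ d)) ≠ C.p d := by
  intro h
  have := C.ind d 1 0 (-1) (by norm_num) (by rw [h]; simp)
  simp at this

lemma α_ne (d : C.D) : C.α d ≠ d := fun h => C.pσ_ne d (by rw [← C.pα, h])
lemma σ_ne (d : C.D) : C.σ d ≠ d := fun h => C.pσ_ne d (by rw [h])

/-- `e0` is a dart of the face of `e` -/
def InFace (e0 e : C.D) : Prop := e0 = e ∨ e0 = C.σ e ∨ e0 = C.σ (C.σ e)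

variable {C} in
lemma InFace.σ {e0 e : C.D} (h : C.InFace e0 e) : C.InFace e0 (C.σ e) := by
  unfold InFace at *; simp only [C.σ3]; tauto

variable {C} in
lemma InFace.T {e0 e : C.D} (h : C.InFace e0 e) : C.T e0 = C.T e := by
  rcases h with rfl | rfl | rfl <;> simp

variable {C} in
lemma InFace.eq {e0 e : C.D} (h : C.InFace e0 e) (hp : C.p e0 = C.p e) : e0 = e := by
  rcases h with rfl | rfl | rfl
  · rfl
  · exact absurd hp (C.pσ_ne _)
  · exact absurd hp (C.pσσ_ne _)

/-- rotation about the source vertex -/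
def ρ : Equiv.Perm C.D where
  toFun d := C.α (C.σ (C.σ d))
  invFun d := C.σ (C.α d)
  left_inv d := by simp
  right_inv d := by simp

lemma ρ_def (d : C.D) : C.ρ d = C.α (C.σ (C.σ d)) := rfl
@[simp] lemma pρ (d : C.D) : C.p (C.ρ d) = C.p d := by simp [ρ_def]

/-- σ as a permutation -/
def σe : Equiv.Perm C.D where
  toFun := C.σ
  invFun d := C.σ (C.σ d)
  left_inv d := by simp
  right_inv d := by simp

/-- α as a permutation -/
def αe : Equiv.Perm C.D where
  toFun := C.α
  invFun := C.α
  left_inv d := by simp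
  right_inv d := by simp

lemma sum_σ {M : Type*} [AddCommMonoid M] (f : C.D → M) : ∑ d, f (C.σ d) = ∑ d, f d :=
  Equiv.sum_comp C.σe f
lemma sum_α {M : Type*} [AddCommMonoid M] (f : C.D → M) : ∑ d, f (C.α d) = ∑ d, f d :=
  Equiv.sum_comp C.αe f

/-- coordinates of an edge point -/
lemma E_coord {d : C.D} {u v w : ℝ} (hs : u + v + w = 1)
    (h : u • C.p d + v • C.p (C.σ d) + w • C.p (C.σ (C.σ d)) ∈ C.E d) : w = 0 := by
  obtain ⟨a, b, ha, hb, hab, h⟩ := C.mem_E.1 h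
  exact ((C.ind d).uniq (u' := a) (v' := b) (w' := 0) hs (by linarith) (by rw [h]; simp)).2.2

lemma chainV {d e : C.D} (h : ReflTransGen (C.Step (C.p d)) d e) :
    ∃ e0, C.InFace e0 e ∧ C.p e0 = C.p d ∧ C.ρ.SameCycle d e0 := by
  induction h with
  | refl => exact ⟨d, Or.inl rfl, rfl, Equiv.Perm.SameCycle.refl _ _⟩
  | @tail b c _ hs ih =>
    obtain ⟨e0, h1, h2, h3⟩ := ih
    rcases hs with rfl | ⟨rfl, hx⟩
    · exact ⟨e0, h1.σ, h2, h3⟩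
    · rcases h1 with rfl | rfl | rfl
      · refine ⟨C.σ (C.α e0), Or.inr (Or.inl rfl), by simp [h2], ?_⟩
        exact h3.trans ⟨-1, by simp [ρ, Equiv.Perm.inv_def]⟩
      · refine ⟨C.α b, Or.inl rfl, by simp [h2], ?_⟩
        exact h3.trans ⟨1, by simp [ρ_def]⟩
      · rw [← h2] at hx
        have := C.E_coord (d := b) (u := 0) (v := 0) (w := 1) (by simp) (by simpa using hx)
        norm_num at this

lemma sameCycle_of_p {d e : C.D} (h : C.p d = C.p e) : C.ρ.SameCycle d e := by
  obtain ⟨e0, h1, h2, h3⟩ := C.chainV (C.loc' (C.p_mem_T d) (h ▸ C.p_mem_T e))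
  rwa [h1.eq (h2.trans h)] at h3

lemma chainE {d e : C.D} {a b : ℝ} (ha : 0 < a) (hb : 0 < b) (hab : a + b = 1)
    (h : ReflTransGen (C.Step (a • C.p d + b • C.p (C.σ d))) d e) :
    C.InFace d e ∨ C.InFace (C.α d) e := by
  induction h with
  | refl => exact Or.inl (Or.inl rfl)
  | @tail f c _ hs ih =>
    rcases hs with rfl | ⟨rfl, hx⟩
    · exact ih.imp InFace.σ InFace.σ
    · rcases ih with (rfl | rfl | rfl) | (h | h | h)
      · exact Or.inr (Or.inl rfl)
      · have := C.E_coord (d := f) (u := 0) (v := a) (w := b) (by linarith) (by simpa using hx)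
        linarith
      · have := C.E_coord (d := f) (u := b) (v := 0) (w := a) (by linarith) (by
          simp only [C.σ3] at hx; rw [add_comm] at hx; simpa using hx)
        linarith
      · left; left; rw [← h]; simp
      · have h1 : C.p (C.σ f) = C.p (C.σ d) := by rw [← h, C.pα]
        have h2 : C.p (C.σ (C.σ f)) = C.p d := by rw [← h, C.pσα]
        have := C.E_coord (d := f) (u := 0) (v := b) (w := a) (by linarith) (by
          rw [h1, h2, add_comm]; rw [add_comm] at hx; simpa [add_comm] using hx)
        linarith
      · have h1 : C.p (C.σ (C.σ f)) = C.p (C.σ d) := by rw [← h, C.pα]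
        have h2 : C.p f = C.p d := by rw [← C.σ3 f, ← h, C.pσα]
        have := C.E_coord (d := f) (u := a) (v := 0) (w := b) (by linarith) (by
          rw [h1, h2]; simpa using hx)
        linarith

lemma chainF {d e : C.D} {u v w : ℝ} (hu : 0 < u) (hv : 0 < v) (hw : 0 < w) (hs : u + v + w = 1)
    (h : ReflTransGen (C.Step (u • C.p d + v • C.p (C.σ d) + w • C.p (C.σ (C.σ d)))) d e) :
    C.InFace d e := by
  induction h with
  | refl => exact (Or.inl rfl)
  | @tail f c _ hs' ih =>
    rcases hs' with rfl | ⟨rfl, hx⟩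
    · exact ih.σ
    · exfalso
      rcases ih with rfl | rfl | rfl
      · have := C.E_coord hs hx
        linarith
      · have := C.E_coord (d := f) (u := w) (v := u) (w := v) (by linarith) (by
          simp only [C.σ3] at hx; convert hx using 1; abel)
        linarith
      · have := C.E_coord (d := f) (u := v) (v := w) (w := u) (by linarith) (by
          simp only [C.σ3] at hx; convert hx using 1; abel)
        linarith

/-- an open edge point lies on no other edge -/
lemma edge_unique {d e : C.D} {a b : ℝ} (ha : 0 < a) (hb : 0 < b) (hab : a + b = 1)
    (he : a • C.p d + b • C.p (C.σ d) ∈ C.E e) : e = d ∨ e = C.α d := by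
  have hd : a • C.p d + b • C.p (C.σ d) ∈ C.E d := C.mem_E.2 ⟨a, b, ha.le, hb.le, hab, rfl⟩
  have h := C.chainE ha hb hab ((C.loc' (C.E_sub_T _ hd) (C.E_sub_T _ he)).tail
    (Or.inr ⟨rfl, he⟩))
  have h' := C.chainE ha hb hab (C.loc' (C.E_sub_T _ hd) (C.E_sub_T _ he))
  have key : ∀ f : C.D, C.E f = C.E d → C.p f ≠ C.p (C.σ f) → (∃ a b : ℝ, 0 < a ∧ 0 < b ∧ a + b = 1 ∧
      a • C.p f + b • C.p (C.σ f) ∈ C.E e) → C.InFace f e → e = f := by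
    rintro f hf hne ⟨a, b, ha, hb, hab, hx⟩ (rfl | rfl | rfl)
    · rfl
    · have := C.E_coord (d := e) (u := 0) (v := a) (w := b) (by linarith) (by simpa using hx)
      linarith
    · have := C.E_coord (d := e) (u := b) (v := 0) (w := a) (by linarith) (by
          simp only [C.σ3] at hx; rw [add_comm] at hx; simpa using hx)
      linarith
  rcases h' with h' | h'
  · exact Or.inl (key d rfl (C.pσ_ne _).symm ⟨a, b, ha, hb, hab, he⟩ h')
  · exact Or.inr (key _ (C.Eα d) (C.pσ_ne _).symm ⟨b, a, hb, ha, by linarith, by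
      simpa [add_comm] using he⟩ h')

lemma edge_unique_mid {d e : C.D} (he : (1/2 : ℝ) • C.p d + (1/2 : ℝ) • C.p (C.σ d) ∈ C.E e) :
    e = d ∨ e = C.α d := C.edge_unique (by norm_num) (by norm_num) (by norm_num) he

lemma dart_unique {d e : C.D} (h1 : C.p d = C.p e) (h2 : C.p (C.σ d) = C.p (C.σ e)) : e = d := by
  rcases C.edge_unique_mid (d := d) (e := e)
    (C.mem_E.2 ⟨1/2, 1/2, by norm_num, by norm_num, by norm_num, by rw [h1, h2]⟩) with h | h
  · exact h
  · rw [h, C.pα] at h1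
    exact absurd h1.symm (C.pσ_ne d)

lemma dart_unique' {d e : C.D} (h1 : C.p d = C.p (C.σ e)) (h2 : C.p (C.σ d) = C.p e) :
    e = C.α d := C.dart_unique (d := C.α d) (by simp [h2]) (by simp [h1])

/-- an open edge point is not a vertex -/
lemma edge_not_vertex {d e : C.D} {a b : ℝ} (ha : 0 < a) (hb : 0 < b) (hab : a + b = 1)
    (he : a • C.p d + b • C.p (C.σ d) = C.p e) : False := by
  have h1 := C.edge_unique ha hb hab (e := e) (he ▸ C.p_mem_E e)
  have key : C.p d = C.p e ∨ C.p (C.σ d) = C.p e := by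
    rcases h1 with rfl | rfl
    · left; rfl
    · right; simp
  rcases key with h | h
  · have := C.ind d (a - 1) b 0 (by linarith) (by
      rw [sub_smul, one_smul]; nth_rw 2 [h]; rw [← he]; module)
    linarith [this.2.1]
  · have := C.ind d a (b - 1) 0 (by linarith) (by
      rw [sub_smul, one_smul]; nth_rw 2 [h]; rw [← he]; module)
    linarith [this.1]

/-- open triangle points lie on no edge -/
lemma tri_not_edge {d e : C.D} {u v w : ℝ} (hu : 0 < u) (hv : 0 < v) (hw : 0 < w)
    (hs : u + v + w = 1)
    (he : u • C.p d + v • C.p (C.σ d) + w • C.p (C.σ (C.σ d)) ∈ C.E e) : False := by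
  have hd : u • C.p d + v • C.p (C.σ d) + w • C.p (C.σ (C.σ d)) ∈ C.T d :=
    ⟨u, v, w, hu.le, hv.le, hw.le, hs, rfl⟩
  have h := C.chainF hu hv hw hs (C.loc' hd (C.E_sub_T _ he))
  rcases h with rfl | rfl | rfl
  · have := C.E_coord hs he
    linarith
  · have := C.E_coord (d := e) (u := w) (v := u) (w := v) (by linarith) (by
      simp only [C.σ3] at he; convert he using 1; abel)
    linarith
  · have := C.E_coord (d := e) (u := v) (v := w) (w := u) (by linarith) (by
      simp only [C.σ3] at he; convert he using 1; abel)
    linarith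

/-- number of vertices -/
noncomputable def nV : ℕ := (Set.range C.p).ncard

/-- `6 (2 - χ)` -/
noncomputable def N : ℤ := 12 - 6 * (C.nV : ℤ) + Fintype.card C.D

end Cx

open Relation

namespace Cx
variable (C : Cx n)

/-- midpoint of an edge -/
noncomputable def M (d : C.D) : Pt n := (1/2 : ℝ) • C.p d + (1/2 : ℝ) • C.p (C.σ d)

@[simp] lemma Mα (d : C.D) : C.M (C.α d) = C.M d := by simp [M, add_comm]

def sσ : C.D × Fin 4 → C.D × Fin 4
  | (d, 0) => (d, 1)
  | (d, 1) => (d, 2)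
  | (d, 2) => (d, 0)
  | (d, 3) => (C.σ d, 3)

def sα : C.D × Fin 4 → C.D × Fin 4
  | (d, 0) => (C.σ (C.α d), 2)
  | (d, 1) => (d, 3)
  | (d, 2) => (C.α (C.σ (C.σ d)), 0)
  | (d, 3) => (d, 1)

noncomputable def sp : C.D × Fin 4 → Pt n
  | (d, 0) => C.p d
  | (d, 1) => C.M d
  | (d, 2) => C.M (C.σ (C.σ d))
  | (d, 3) => C.M (C.σ (C.σ d))

@[simp] lemma sσ0 (d : C.D) : C.sσ (d, 0) = (d, 1) := rfl
@[simp] lemma sσ1 (d : C.D) : C.sσ (d, 1) = (d, 2) := rfl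
@[simp] lemma sσ2 (d : C.D) : C.sσ (d, 2) = (d, 0) := rfl
@[simp] lemma sσ3 (d : C.D) : C.sσ (d, 3) = (C.σ d, 3) := rfl
@[simp] lemma sα0 (d : C.D) : C.sα (d, 0) = (C.σ (C.α d), 2) := rfl
@[simp] lemma sα1 (d : C.D) : C.sα (d, 1) = (d, 3) := rfl
@[simp] lemma sα2 (d : C.D) : C.sα (d, 2) = (C.α (C.σ (C.σ d)), 0) := rfl
@[simp] lemma sα3 (d : C.D) : C.sα (d, 3) = (d, 1) := rfl
@[simp] lemma sp0 (d : C.D) : C.sp (d, 0) = C.p d := rfl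
@[simp] lemma sp1 (d : C.D) : C.sp (d, 1) = C.M d := rfl
@[simp] lemma sp2 (d : C.D) : C.sp (d, 2) = C.M (C.σ (C.σ d)) := rfl
@[simp] lemma sp3 (d : C.D) : C.sp (d, 3) = C.M (C.σ (C.σ d)) := rfl

lemma ssσ3 (e : C.D × Fin 4) : C.sσ (C.sσ (C.sσ e)) = e := by
  obtain ⟨d, i⟩ := e; fin_cases i <;> simp
lemma ssα2 (e : C.D × Fin 4) : C.sα (C.sα e) = e := by
  obtain ⟨d, i⟩ := e; fin_cases i <;> simp
lemma spα (e : C.D × Fin 4) : C.sp (C.sα e) = C.sp (C.sσ e) := by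
  obtain ⟨d, i⟩ := e; fin_cases i <;> simp

lemma ind_corner {a b c : Pt n} (h : Ind a b c) :
    Ind a ((1/2 : ℝ) • a + (1/2 : ℝ) • b) ((1/2 : ℝ) • c + (1/2 : ℝ) • a) := by
  intro u v w hs he
  have := h (u + v/2 + w/2) (v/2) (w/2) (by linarith) (by rw [← he]; module)
  refine ⟨?_, ?_, ?_⟩ <;> linarith [this.1, this.2.1, this.2.2]

lemma ind_center {a b c : Pt n} (h : Ind a b c) :
    Ind ((1/2 : ℝ) • c + (1/2 : ℝ) • a) ((1/2 : ℝ) • a + (1/2 : ℝ) • b)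
      ((1/2 : ℝ) • b + (1/2 : ℝ) • c) := by
  intro u v w hs he
  have := h (u/2 + v/2) (v/2 + w/2) (u/2 + w/2) (by linarith) (by rw [← he]; module)
  refine ⟨?_, ?_, ?_⟩ <;> linarith [this.1, this.2.1, this.2.2]

lemma sind (e : C.D × Fin 4) : Ind (C.sp e) (C.sp (C.sσ e)) (C.sp (C.sσ (C.sσ e))) := by
  obtain ⟨d, i⟩ := e
  have h1 := ind_corner (C.ind d)
  have h2 := ind_center (C.ind d)
  fin_cases i
  · simpa [M] using h1
  · simpa [M] using h1.rot
  · simpa [M] using h1.rot.rot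
  · simpa [M] using h2

def corner (d : C.D) : Set (Pt n) := {x | ∃ u v w : ℝ, 1/2 ≤ u ∧ 0 ≤ v ∧ 0 ≤ w ∧ u + v + w = 1 ∧
  x = u • C.p d + v • C.p (C.σ d) + w • C.p (C.σ (C.σ d))}

def center (d : C.D) : Set (Pt n) := {x | ∃ u v w : ℝ, u ≤ 1/2 ∧ v ≤ 1/2 ∧ w ≤ 1/2 ∧ u + v + w = 1 ∧
  x = u • C.p d + v • C.p (C.σ d) + w • C.p (C.σ (C.σ d))}

def ST (e : C.D × Fin 4) : Set (Pt n) := tri (C.sp e) (C.sp (C.sσ e)) (C.sp (C.sσ (C.sσ e)))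

lemma STσ (e : C.D × Fin 4) : C.ST (C.sσ e) = C.ST e := by
  simp only [ST, C.ssσ3]; exact tri_rot _ _ _

lemma ST0 (d : C.D) : C.ST (d, 0) = C.corner d := by
  ext x
  simp only [ST, tri, corner, sσ0, sσ1, sp0, sp1, sp2, M, C.σ3]
  constructor
  · rintro ⟨u, v, w, hu, hv, hw, hs, rfl⟩
    exact ⟨u + v/2 + w/2, v/2, w/2, by linarith, by linarith, by linarith, by linarith, by module⟩
  · rintro ⟨u, v, w, hu, hv, hw, hs, rfl⟩
    refine ⟨u - v - w, 2*v, 2*w, by linarith, by linarith, by linarith, by linarith, by module⟩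

lemma ST1 (d : C.D) : C.ST (d, 1) = C.corner d := by rw [← ST0, ← C.STσ (d, 0)]; rfl
lemma ST2 (d : C.D) : C.ST (d, 2) = C.corner d := by rw [← ST1, ← C.STσ (d, 1)]; rfl
lemma ST3 (d : C.D) : C.ST (d, 3) = C.center d := by
  ext x
  simp only [ST, tri, center, sσ3, sp3, M, C.σ3]
  constructor
  · rintro ⟨u, v, w, hu, hv, hw, hs, rfl⟩
    exact ⟨u/2 + v/2, v/2 + w/2, u/2+w/2, by linarith, by linarith, by linarith, by linarith,
      by module⟩
  · rintro ⟨u, v, w, hu, hv, hw, hs, rfl⟩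
    refine ⟨1-2*v, 1-2*w, 1-2*u, by linarith, by linarith, by linarith, by linarith, ?_⟩
    have : v = 1 - u - w := by linarith
    subst this; module

lemma centerσ (d : C.D) : C.center (C.σ d) = C.center d := by
  rw [← ST3, ← ST3, ← C.STσ (d, 3)]; rfl

lemma center_face {d e : C.D} (h : C.InFace d e) : C.center d = C.center e := by
  rcases h with rfl | rfl | rfl <;> simp [centerσ]

def SStep (x : Pt n) (a b : C.D × Fin 4) : Prop :=
  b = C.sσ a ∨ (b = C.sα a ∧ x ∈ segment ℝ (C.sp a) (C.sp (C.sσ a)))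

variable {C} in
lemma SStep.symm' {x : Pt n} {a b : C.D × Fin 4} (h : C.SStep x a b) :
    ReflTransGen (C.SStep x) b a := by
  rcases h with rfl | ⟨rfl, hx⟩
  · refine ReflTransGen.head (b := C.sσ (C.sσ a)) (Or.inl rfl) (ReflTransGen.single (Or.inl ?_))
    rw [C.ssσ3]
  · refine ReflTransGen.single (Or.inr ⟨(C.ssα2 a).symm, ?_⟩)
    rw [← C.spα (C.sα a), C.ssα2, C.spα a, segment_symm]; exact hx

lemma sR_symm {x : Pt n} {a b : C.D × Fin 4} (h : ReflTransGen (C.SStep x) a b) :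
    ReflTransGen (C.SStep x) b a := by
  induction h with
  | refl => exact ReflTransGen.refl
  | tail _ h ih => exact h.symm'.trans ih

lemma sR_corner (x : Pt n) (d : C.D) (i : Fin 4) (hi : i ≠ 3) :
    ReflTransGen (C.SStep x) (d, 1) (d, i) := by
  fin_cases i
  · exact ReflTransGen.head (b := (d, 2)) (Or.inl rfl) (ReflTransGen.single (Or.inl rfl))
  · exact ReflTransGen.refl
  · exact ReflTransGen.single (Or.inl rfl)
  · exact absurd rfl hi

lemma sR_center (x : Pt n) {d e : C.D} (h : C.InFace e d) :
    ReflTransGen (C.SStep x) (d, 3) (e, 3) := by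
  rcases h with rfl | rfl | rfl
  · exact ReflTransGen.refl
  · exact ReflTransGen.single (Or.inl rfl)
  · exact ReflTransGen.head (b := (C.σ d, 3)) (Or.inl rfl) (ReflTransGen.single (Or.inl rfl))

lemma sR_cc {x : Pt n} {d : C.D} (h1 : x ∈ C.corner d) (h2 : x ∈ C.center d) :
    ReflTransGen (C.SStep x) (d, 1) (d, 3) := by
  refine ReflTransGen.single (Or.inr ⟨rfl, ?_⟩)
  obtain ⟨u, v, w, hu, hv, hw, hs, rfl⟩ := h1
  obtain ⟨u', v', w', hu', hv', hw', hs', he⟩ := h2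
  obtain ⟨rfl, rfl, rfl⟩ := (C.ind d).uniq hs hs' he
  have hu0 : u = 1/2 := le_antisymm hu' hu
  subst hu0
  refine ⟨2*v, 2*w, by linarith, by linarith, by linarith, ?_⟩
  simp only [sσ1, sp1, sp2, M, C.σ3]
  have : v = 1/2 - w := by linarith
  subst this; module

lemma corner_corner {x : Pt n} {d : C.D} (h1 : x ∈ C.corner d) (h2 : x ∈ C.corner (C.σ d)) :
    x ∈ C.center d := by
  obtain ⟨u, v, w, hu, hv, hw, hs, rfl⟩ := h1
  obtain ⟨u', v', w', hu', hv', hw', hs', he⟩ := h2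
  obtain ⟨rfl, rfl, rfl⟩ := (C.ind d).uniq (u' := w') (v' := u') (w' := v') hs (by linarith)
    (by rw [he, C.σ3]; abel)
  exact ⟨u, v, w, by linarith, by linarith, by linarith, hs, rfl⟩

lemma corner_corner' {x : Pt n} {d e f : C.D} (hd : C.InFace d f) (he : C.InFace e f) (hne : d ≠ e)
    (h1 : x ∈ C.corner d) (h2 : x ∈ C.corner e) : x ∈ C.center f := by
  have key : e = C.σ d ∨ d = C.σ e := by
    rcases hd with rfl | rfl | rfl <;> rcases he with rfl | rfl | rfl <;> simp_all
  rw [← C.center_face hd]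
  rcases key with rfl | rfl
  · exact C.corner_corner h1 h2
  · rw [centerσ]; exact C.corner_corner h2 h1

lemma ST_cases (d : C.D) (i : Fin 4) : (i = 3 ∧ C.ST (d, i) = C.center d) ∨
    (i ≠ 3 ∧ C.ST (d, i) = C.corner d) := by
  fin_cases i
  · right; exact ⟨by decide, C.ST0 d⟩
  · right; exact ⟨by decide, C.ST1 d⟩
  · right; exact ⟨by decide, C.ST2 d⟩
  · left; exact ⟨rfl, C.ST3 d⟩

lemma sR_inner {x : Pt n} {d1 d2 f : C.D} {i j : Fin 4} (h1 : C.InFace d1 f) (h2 : C.InFace d2 f)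
    (hx1 : x ∈ C.ST (d1, i)) (hx2 : x ∈ C.ST (d2, j)) :
    ReflTransGen (C.SStep x) (d1, i) (d2, j) := by
  have hub : ∀ {d1 : C.D} {i : Fin 4}, C.InFace d1 f → x ∈ C.ST (d1, i) → x ∈ C.center f →
      ReflTransGen (C.SStep x) (f, 3) (d1, i) := by
    intro d1 i h1 hx1 hc
    rcases C.ST_cases d1 i with ⟨rfl, h⟩ | ⟨hi, h⟩
    · exact C.sR_center x h1
    · rw [h] at hx1
      exact (C.sR_center x h1).trans ((C.sR_symm (C.sR_cc hx1 (by rwa [C.center_face h1]))).trans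
        (C.sR_corner x d1 i hi))
  by_cases hc : x ∈ C.center f
  · exact (C.sR_symm (hub h1 hx1 hc)).trans (hub h2 hx2 hc)
  · rcases C.ST_cases d1 i with ⟨rfl, h⟩ | ⟨hi, h⟩
    · exact absurd (by rwa [h, C.center_face h1] at hx1) hc
    rcases C.ST_cases d2 j with ⟨rfl, h'⟩ | ⟨hj, h'⟩
    · exact absurd (by rwa [h', C.center_face h2] at hx2) hc
    by_cases hne : d1 = d2
    · subst hne
      exact (C.sR_symm (C.sR_corner x d1 i hi)).trans (C.sR_corner x d1 j hj)
    · exact absurd (C.corner_corner' h1 h2 hne (h ▸ hx1) (h' ▸ hx2)) hc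

lemma ST_sub (d : C.D) (i : Fin 4) : C.ST (d, i) ⊆ C.T d := by
  intro x hx
  rcases C.ST_cases d i with ⟨rfl, h⟩ | ⟨hi, h⟩ <;> rw [h] at hx
  · obtain ⟨u, v, w, hu, hv, hw, hs, rfl⟩ := hx
    exact ⟨u, v, w, by linarith, by linarith, by linarith, hs, rfl⟩
  · obtain ⟨u, v, w, hu, hv, hw, hs, rfl⟩ := hx
    exact ⟨u, v, w, by linarith, by linarith, by linarith, hs, rfl⟩

lemma sR_main {x : Pt n} {d e : C.D} (h : ReflTransGen (C.Step x) d e) (i : Fin 4)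
    (hx : x ∈ C.ST (d, i)) : ∀ (e1 : C.D) (j : Fin 4), C.InFace e1 e → x ∈ C.ST (e1, j) →
      ReflTransGen (C.SStep x) (d, i) (e1, j) := by
  induction h with
  | refl => intro e1 j h1 h2; exact C.sR_inner (Or.inl rfl) h1 hx h2
  | @tail f c _ hs ih =>
    intro e1 j h1 h2
    rcases hs with rfl | ⟨rfl, hE⟩
    · refine ih e1 j ?_ h2
      have := h1.σ.σ
      rwa [C.σ3] at this
    · obtain ⟨a, b, ha, hb, hab, rfl⟩ := C.mem_E.1 hE
      rcases le_total b a with hle | hle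
      · have hst : a • C.p f + b • C.p (C.σ f) ∈ C.ST (f, 0) := by
          rw [ST0]; exact ⟨a, b, 0, by linarith, hb, le_rfl, by linarith, by simp⟩
        have hst' : a • C.p f + b • C.p (C.σ f) ∈ C.ST (C.σ (C.α f), 2) := by
          rw [ST2]; exact ⟨a, 0, b, by linarith, le_rfl, hb, by linarith, by simp⟩
        refine (ih f 0 (Or.inl rfl) hst).trans (ReflTransGen.head (Or.inr ⟨rfl, ?_⟩)
          (C.sR_inner (f := C.α f) (Or.inr (Or.inl rfl)) h1 hst' h2))
        refine ⟨a - b, 2 * b, by linarith, by linarith, by linarith, ?_⟩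
        simp only [sp0, sσ0, sp1, M]; module
      · have hst : a • C.p f + b • C.p (C.σ f) ∈ C.ST (C.σ f, 2) := by
          rw [ST2]; exact ⟨b, 0, a, by linarith, le_rfl, ha, by linarith, by simp [add_comm]⟩
        have hst' : a • C.p f + b • C.p (C.σ f) ∈ C.ST (C.α f, 0) := by
          rw [ST0]; exact ⟨b, a, 0, by linarith, ha, le_rfl, by linarith, by simp [add_comm]⟩
        refine (ih _ 2 (Or.inr (Or.inl rfl)) hst).trans (ReflTransGen.head (b := (C.α f, 0))
          (Or.inr ⟨by simp, ?_⟩) (C.sR_inner (f := C.α f) (Or.inl rfl) h1 hst' h2))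
        refine ⟨2 * a, b - a, by linarith, by linarith, by linarith, ?_⟩
        simp only [sp0, sσ2, sp2, M, C.σ3]; module

/-- midpoint subdivision -/
noncomputable def sub : Cx n where
  D := C.D × Fin 4
  ft := inferInstance
  ne := inferInstance
  σ := C.sσ
  α := C.sα
  p := C.sp
  σ3 := C.ssσ3
  α2 := C.ssα2
  pα := C.spα
  ind := C.sind
  loc := by
    rintro x ⟨d, i⟩ ⟨e, j⟩ hd he
    exact C.sR_main (C.loc' (C.ST_sub d i hd) (C.ST_sub e j he)) i hd e j (Or.inl rfl) he

lemma sub_S : C.sub.S = C.S := by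
  ext x
  rw [mem_S, mem_S]
  constructor
  · rintro ⟨⟨d, i⟩, h⟩; exact ⟨d, C.ST_sub d i h⟩
  · rintro ⟨d, u, v, w, hu, hv, hw, hs, rfl⟩
    by_cases h1 : 1/2 ≤ u
    · refine ⟨(d, 0), ?_⟩
      change _ ∈ C.ST (d, 0); rw [ST0]
      exact ⟨u, v, w, h1, hv, hw, hs, rfl⟩
    by_cases h2 : 1/2 ≤ v
    · refine ⟨(C.σ d, 0), ?_⟩
      change _ ∈ C.ST (C.σ d, 0); rw [ST0]
      exact ⟨v, w, u, h2, hw, hu, by linarith, by rw [C.σ3]; abel⟩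
    by_cases h3 : 1/2 ≤ w
    · refine ⟨(C.σ (C.σ d), 0), ?_⟩
      change _ ∈ C.ST (C.σ (C.σ d), 0); rw [ST0]
      exact ⟨w, u, v, h3, hu, hv, by linarith, by rw [C.σ3]; abel⟩
    · refine ⟨(d, 3), ?_⟩
      change _ ∈ C.ST (d, 3); rw [ST3]
      exact ⟨u, v, w, by linarith, by linarith, by linarith, hs, rfl⟩

lemma M_eq {d e : C.D} : C.M d = C.M e ↔ e = d ∨ e = C.α d := by
  constructor
  · intro h
    refine C.edge_unique_mid ?_
    change C.M d ∈ _
    rw [h]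
    exact C.mem_E.2 ⟨1/2, 1/2, by norm_num, by norm_num, by norm_num, rfl⟩
  · rintro (rfl | rfl) <;> simp

lemma M_ne_p (d e : C.D) : C.M d ≠ C.p e := fun h =>
  C.edge_not_vertex (by norm_num) (by norm_num) (by norm_num) h

lemma card_M : Fintype.card C.D = 2 * (Set.range C.M).ncard := by
  classical
  have h := Finset.card_eq_sum_card_image C.M (Finset.univ : Finset C.D)
  rw [Finset.sum_const_nat (m := 2)] at h
  · rw [Finset.card_univ] at h
    rw [h, ← Set.ncard_coe_finset, mul_comm]
    simp
  · intro y hy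
    obtain ⟨d, -, rfl⟩ := Finset.mem_image.1 hy
    have : (Finset.univ.filter fun e => C.M e = C.M d) = {d, C.α d} := by
      ext e; simp only [Finset.mem_filter, Finset.mem_univ, true_and, Finset.mem_insert, Finset.mem_singleton]; rw [eq_comm, C.M_eq]
    rw [this, Finset.card_pair (C.α_ne d).symm]

lemma range_sp : Set.range C.sp = Set.range C.p ∪ Set.range C.M := by
  ext x
  constructor
  · rintro ⟨⟨d, i⟩, rfl⟩
    fin_cases i
    · left; exact ⟨d, rfl⟩
    all_goals right; exact ⟨_, rfl⟩
  · rintro (⟨d, rfl⟩ | ⟨d, rfl⟩)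
    · exact ⟨(d, 0), rfl⟩
    · exact ⟨(d, 1), rfl⟩

lemma sub_N : C.sub.N = C.N := by
  have h1 : C.sub.nV = C.nV + (Set.range C.M).ncard := by
    change (Set.range C.sp).ncard = _
    rw [range_sp, Set.ncard_union_eq _ (Set.toFinite _) (Set.toFinite _)]; rfl
    rw [Set.disjoint_left]
    rintro _ ⟨d, rfl⟩ ⟨e, h⟩
    exact C.M_ne_p _ _ h
  have h2 : Fintype.card C.sub.D = Fintype.card C.D * 4 := by
    change Fintype.card (C.D × Fin 4) = _
    simp
  have h3 := C.card_M
  unfold N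
  rw [h1, h2]; push_cast; omega

def Mesh (ε : ℝ) : Prop := ∀ d, dist (C.p d) (C.p (C.σ d)) ≤ ε

lemma sub_mesh {ε : ℝ} (h : C.Mesh ε) : C.sub.Mesh (ε / 2) := by
  have key : ∀ a b c : Pt n, dist ((1/2 : ℝ) • a + (1/2 : ℝ) • b) ((1/2 : ℝ) • c + (1/2 : ℝ) • a) =
      dist b c / 2 := by
    intro a b c
    rw [dist_eq_norm, dist_eq_norm, show (1/2 : ℝ) • a + (1/2 : ℝ) • b - ((1/2 : ℝ) • c + (1/2 : ℝ) • a)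
      = (1/2 : ℝ) • (b - c) by module, norm_smul]
    norm_num; ring
  have key' : ∀ a b : Pt n, (a = (1/2 : ℝ) • a + (1/2 : ℝ) • a) := by intro a b; module
  rintro ⟨d, i⟩
  fin_cases i
  · change dist (C.p d) (C.M d) ≤ _
    have := key (C.p d) (C.p d) (C.p (C.σ d))
    rw [← key' _ (C.p d), add_comm] at this
    rw [M, this]; linarith [h d]
  · change dist (C.M d) (C.M (C.σ (C.σ d))) ≤ _
    have := key (C.p d) (C.p (C.σ d)) (C.p (C.σ (C.σ d)))
    rw [M, M, C.σ3, this]; linarith [h (C.σ d)]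
  · change dist (C.M (C.σ (C.σ d))) (C.p d) ≤ _
    have := key (C.p d) (C.p d) (C.p (C.σ (C.σ d)))
    rw [← key' _ (C.p d), dist_comm] at this
    rw [M, C.σ3, this]; have := h (C.σ (C.σ d)); rw [C.σ3, dist_comm] at this; linarith
  · change dist (C.M (C.σ (C.σ d))) (C.M (C.σ (C.σ (C.σ d)))) ≤ _
    have := key (C.p d) (C.p (C.σ d)) (C.p (C.σ (C.σ d)))
    rw [C.σ3, M, M, C.σ3, dist_comm, this]; linarith [h (C.σ d)]

lemma exists_mesh {ε : ℝ} (hε : 0 < ε) : ∃ C' : Cx n, C'.S = C.S ∧ C'.N = C.N ∧ C'.Mesh ε := by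
  obtain ⟨B, hB⟩ : ∃ B, C.Mesh B := by
    obtain ⟨B, hB⟩ := (Set.finite_range fun d => dist (C.p d) (C.p (C.σ d))).bddAbove
    exact ⟨B, fun d => hB ⟨d, rfl⟩⟩
  have key : ∀ k : ℕ, ∃ C' : Cx n, C'.S = C.S ∧ C'.N = C.N ∧ C'.Mesh (B / 2 ^ k) := by
    intro k
    induction k with
    | zero => exact ⟨C, rfl, rfl, by simpa using hB⟩
    | succ k ih =>
      obtain ⟨C', h1, h2, h3⟩ := ih
      refine ⟨C'.sub, by rw [sub_S, h1], by rw [sub_N, h2], ?_⟩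
      have := C'.sub_mesh h3
      rwa [pow_succ, ← div_div]
  obtain ⟨k, hk⟩ := exists_nat_gt (B / ε)
  obtain ⟨C', h1, h2, h3⟩ := key k
  refine ⟨C', h1, h2, fun d => (h3 d).trans ?_⟩
  rw [div_le_iff₀ (by positivity)]
  rw [div_lt_iff₀ hε] at hk
  have : (k : ℝ) < 2 ^ k := by exact_mod_cast Nat.lt_two_pow_self
  nlinarith

lemma mesh_T {ε : ℝ} (h : C.Mesh ε) {d : C.D} {x y : Pt n} (hx : x ∈ C.T d) (hy : y ∈ C.T d) :
    dist x y ≤ ε := by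
  rw [T_eq] at hx hy
  have hb : Bornology.IsBounded ({C.p d, C.p (C.σ d), C.p (C.σ (C.σ d))} : Set (Pt n)) :=
    (Set.toFinite _).isBounded
  have h1 := Metric.dist_le_diam_of_mem (isBounded_convexHull.2 hb) hx hy
  rw [convexHull_diam] at h1
  refine h1.trans (Metric.diam_le_of_forall_dist_le (dist_nonneg.trans (h d)) ?_)
  have h1 := h d
  have h2 := h (C.σ d)
  have h3 := h (C.σ (C.σ d))
  rw [C.σ3] at h3
  have h0 : 0 ≤ ε := dist_nonneg.trans h1
  rintro x (rfl | rfl | rfl) y (rfl | rfl | rfl) <;>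
    first | (rw [dist_self]; exact h0) | assumption | (rw [dist_comm]; assumption)

end Cx

open Relation

namespace Cx
variable (C : Cx n)

lemma Step.T {C : Cx n} {x : Pt n} {a b : C.D} (h : C.Step x a b) (ha : x ∈ C.T a) : x ∈ C.T b := by
  rcases h with rfl | ⟨rfl, hx⟩
  · simpa
  · rw [← C.Eα] at hx; exact C.E_sub_T _ hx

/-- steps between darts with faces touching `L` -/
def LStep (L : Set (Pt n)) (a b : C.D) : Prop := ∃ x ∈ L, x ∈ C.T a ∧ C.Step x a b

lemma LStep_of_loc {L : Set (Pt n)} {x : Pt n} (hx : x ∈ L) {d e : C.D} (hd : x ∈ C.T d)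
    (he : x ∈ C.T e) : ReflTransGen (C.LStep L) d e := by
  have key : ∀ f, ReflTransGen (C.Step x) d f → x ∈ C.T f ∧ ReflTransGen (C.LStep L) d f := by
    intro f h
    induction h with
    | refl => exact ⟨hd, .refl⟩
    | @tail b c _ hs ih => exact ⟨hs.T ih.1, ih.2.tail ⟨x, hx, ih.1, hs⟩⟩
  exact (key e (C.loc' hd he)).2

lemma chain {L : Set (Pt n)} (hL : IsPreconnected L) (hS : L ⊆ C.S) {d e : C.D}
    (hd : (L ∩ C.T d).Nonempty) (he : (L ∩ C.T e).Nonempty) :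
    ReflTransGen (C.LStep L) d e := by
  by_contra hne
  have h := isPreconnected_closed_iff.1 hL (⋃ a : {a // ReflTransGen (C.LStep L) d a}, C.T a.1)
    (⋃ a : {a // ¬ ReflTransGen (C.LStep L) d a}, C.T a.1)
    (isCompact_iUnion fun a => C.T_compact _).isClosed
    (isCompact_iUnion fun a => C.T_compact _).isClosed
    (by
      intro x hx
      obtain ⟨a, ha⟩ := C.mem_S.1 (hS hx)
      by_cases h : ReflTransGen (C.LStep L) d a
      · left; exact Set.mem_iUnion.2 ⟨⟨a, h⟩, ha⟩
      · right; exact Set.mem_iUnion.2 ⟨⟨a, h⟩, ha⟩)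
    (by obtain ⟨x, hx, hx'⟩ := hd; exact ⟨x, hx, Set.mem_iUnion.2 ⟨⟨d, .refl⟩, hx'⟩⟩)
    (by obtain ⟨x, hx, hx'⟩ := he; exact ⟨x, hx, Set.mem_iUnion.2 ⟨⟨e, hne⟩, hx'⟩⟩)
  obtain ⟨x, hx, hA, hB⟩ := h
  obtain ⟨⟨a, ha⟩, hxa⟩ := Set.mem_iUnion.1 hA
  obtain ⟨⟨b, hb⟩, hxb⟩ := Set.mem_iUnion.1 hB
  exact hb (ha.trans (C.LStep_of_loc hx hxa hxb))

/-- combinatorial connectedness -/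
def Conn : Prop := ∀ d e : C.D, ReflTransGen (fun a b => b = C.σ a ∨ b = C.α a) d e

lemma conn_of (h : IsPreconnected C.S) : C.Conn := by
  intro d e
  have h0 := C.chain h subset_rfl (d := d) (e := e)
    ⟨C.p d, C.mem_S.2 ⟨d, C.p_mem_T d⟩, C.p_mem_T d⟩ ⟨C.p e, C.mem_S.2 ⟨e, C.p_mem_T e⟩, C.p_mem_T e⟩
  refine ReflTransGen.mono ?_ _ _ h0
  rintro a b ⟨x, -, -, h | h⟩
  · exact Or.inl h
  · exact Or.inr h.1

/-- antisymmetric functions on darts -/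
def AA : Submodule ℝ (C.D → ℝ) where
  carrier := {φ | ∀ d, φ (C.α d) = - φ d}
  add_mem' := by intro a b ha hb d; simp [ha d, hb d]; ring
  zero_mem' := by intro d; simp
  smul_mem' := by intro c a ha d; simp [ha d]

/-- functions with zero sum on faces -/
def FF : Submodule ℝ (C.D → ℝ) where
  carrier := {φ | ∀ d, φ d + φ (C.σ d) + φ (C.σ (C.σ d)) = 0}
  add_mem' := by intro a b ha hb d; simp only [Pi.add_apply]; linarith [ha d, hb d]
  zero_mem' := by intro d; simp
  smul_mem' := by intro c a ha d; simp only [Pi.smul_apply, smul_eq_mul]; linear_combination c * ha d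

/-- cocycles -/
def Z : Submodule ℝ (C.D → ℝ) := C.AA ⊓ C.FF

/-- coboundary map -/
def δ : (Pt n → ℝ) →ₗ[ℝ] (C.D → ℝ) where
  toFun h d := h (C.p (C.σ d)) - h (C.p d)
  map_add' := by intro a b; ext d; simp; ring
  map_smul' := by intro a b; ext d; simp; ring

lemma δ_apply (h : Pt n → ℝ) (d : C.D) : C.δ h d = h (C.p (C.σ d)) - h (C.p d) := rfl

/-- coboundaries -/
def B : Submodule ℝ (C.D → ℝ) := LinearMap.range C.δ

lemma mem_Z {φ : C.D → ℝ} : φ ∈ C.Z ↔ (∀ d, φ (C.α d) = - φ d) ∧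
    ∀ d, φ d + φ (C.σ d) + φ (C.σ (C.σ d)) = 0 := Iff.rfl

lemma B_le_Z : C.B ≤ C.Z := by
  rintro _ ⟨h, rfl⟩
  refine C.mem_Z.2 ⟨fun d => ?_, fun d => ?_⟩
  · simp [δ_apply]
  · simp [δ_apply]

lemma finrank_proj (p : Submodule ℝ (C.D → ℝ)) (f : (C.D → ℝ) →ₗ[ℝ] (C.D → ℝ))
    (hf : LinearMap.IsProj p f) : (Module.finrank ℝ p : ℝ) = ∑ d, f (Pi.single d 1) d := by
  rw [← hf.trace, LinearMap.trace_eq_matrix_trace ℝ (Pi.basisFun ℝ C.D)]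
  simp [Matrix.trace]

lemma finrank_AA : 2 * Module.finrank ℝ C.AA = Fintype.card C.D := by
  have h := C.finrank_proj C.AA
    { toFun := fun φ d => (φ d - φ (C.α d)) / 2
      map_add' := by intro a b; ext d; simp; ring
      map_smul' := by intro a b; ext d; simp; ring } ⟨by intro φ d; simp; ring, by
        intro φ h; ext d; have := h d; simp [this]⟩
  have h2 : ∀ d, C.α d ≠ d := C.α_ne
  simp [h2] at h
  have : (2 : ℝ) * Module.finrank ℝ C.AA = Fintype.card C.D := by rw [h]; ring
  exact_mod_cast this

lemma σσ_ne (d : C.D) : C.σ (C.σ d) ≠ d := fun h => C.pσσ_ne d (by rw [h])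

lemma finrank_FF : 3 * Module.finrank ℝ C.FF = 2 * Fintype.card C.D := by
  have h := C.finrank_proj C.FF
    { toFun := fun φ d => φ d - (φ d + φ (C.σ d) + φ (C.σ (C.σ d))) / 3
      map_add' := by intro a b; ext d; simp; ring
      map_smul' := by intro a b; ext d; simp; ring } ⟨by intro φ d; simp; ring, by
        intro φ h; ext d; have := h d; simp [this]⟩
  simp [C.σ_ne, C.σσ_ne] at h
  have : (3 : ℝ) * Module.finrank ℝ C.FF = 2 * Fintype.card C.D := by rw [h]; ring
  exact_mod_cast this

lemma single_sub_mem (hc : C.Conn) (d e : C.D) :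
    (Pi.single d 1 - Pi.single e 1 : C.D → ℝ) ∈ C.AA ⊔ C.FF := by
  have := hc d e
  induction this with
  | refl => simp
  | @tail b c _ hs ih =>
    have : (Pi.single b 1 - Pi.single c 1 : C.D → ℝ) ∈ C.AA ⊔ C.FF := by
      rcases hs with rfl | rfl
      · refine Submodule.mem_sup_right (fun d => ?_)
        have h1 : ∀ d : C.D, ∀ f : C.D → ℝ, f d + f (C.σ d) + f (C.σ (C.σ d)) =
          f (C.σ d) + f (C.σ (C.σ d)) + f (C.σ (C.σ (C.σ d))) := by intro d f; simp; ring
        have h2 : ∀ d : C.D, (Pi.single (C.σ b) (1 : ℝ) : C.D → ℝ) (C.σ d) =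
            (Pi.single b (1 : ℝ) : C.D → ℝ) d := by
          intro d
          have : C.σ d = C.σ b ↔ d = b := C.σe.injective.eq_iff
          simp [Pi.single_apply, this]
        have h3 := h1 d (Pi.single (C.σ b) (1 : ℝ))
        simp only [h2] at h3
        simp only [Pi.sub_apply, h2]
        linarith
      · refine Submodule.mem_sup_left (fun d => ?_)
        have h2 : C.α d = C.α b ↔ d = b := C.αe.injective.eq_iff
        have h3 : C.α d = b ↔ d = C.α b := ⟨fun h => by rw [← h, C.α2], fun h => by rw [h, C.α2]⟩
        simp [Pi.single_apply, h2, h3]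
    simpa using Submodule.add_mem _ ih this

lemma finrank_Z (hc : C.Conn) : 6 * Module.finrank ℝ C.Z = Fintype.card C.D + 6 := by
  classical
  let s : (C.D → ℝ) →ₗ[ℝ] ℝ := ∑ d, LinearMap.proj d
  have hs : ∀ φ, s φ = ∑ d, φ d := by intro φ; simp [s]
  have h1 : C.AA ⊔ C.FF = LinearMap.ker s := by
    apply le_antisymm
    · apply sup_le
      · intro φ hφ
        rw [LinearMap.mem_ker, hs]
        have := C.sum_α φ
        simp only [hφ _] at this
        rw [Finset.sum_neg_distrib] at this; linarith
      · intro φ hφ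
        rw [LinearMap.mem_ker, hs]
        have h1 := C.sum_σ φ
        have h2 := C.sum_σ (fun d => φ (C.σ d))
        have h3 : ∑ d, (φ d + φ (C.σ d) + φ (C.σ (C.σ d))) = 0 := Finset.sum_eq_zero fun d _ => hφ d
        rw [Finset.sum_add_distrib, Finset.sum_add_distrib] at h3
        linarith
    · intro φ hφ
      rw [LinearMap.mem_ker, hs] at hφ
      obtain ⟨d0⟩ := C.ne
      have : φ = ∑ d, φ d • (Pi.single d 1 - Pi.single d0 1 : C.D → ℝ) := by
        simp only [smul_sub, Finset.sum_sub_distrib, ← Finset.sum_smul, hφ]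
        ext e
        simp [Finset.sum_apply, Pi.single_apply]
      rw [this]
      exact Submodule.sum_mem _ fun d _ => Submodule.smul_mem _ _ (C.single_sub_mem hc d d0)
  have h2 := Submodule.finrank_sup_add_finrank_inf_eq C.AA C.FF
  rw [h1] at h2
  have h3 := LinearMap.finrank_range_add_finrank_ker s
  have h4 : LinearMap.range s = ⊤ := by
    rw [LinearMap.range_eq_top]
    obtain ⟨d0⟩ := C.ne
    intro r
    exact ⟨Pi.single d0 r, by rw [hs]; simp⟩
  rw [h4] at h3
  simp at h3
  have h5 := C.finrank_AA
  have h6 := C.finrank_FF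
  change _ + Module.finrank ℝ C.Z = _ at h2
  omega

lemma finrank_B (hc : C.Conn) : Module.finrank ℝ C.B + 1 = C.nV := by
  classical
  let ι := Set.range C.p
  have : Fintype ι := Fintype.ofFinite _
  let g : (ι → ℝ) →ₗ[ℝ] (C.D → ℝ) :=
    { toFun := fun h d => h ⟨C.p (C.σ d), _, rfl⟩ - h ⟨C.p d, _, rfl⟩
      map_add' := by intro a b; ext d; simp; ring
      map_smul' := by intro a b; ext d; simp; ring }
  have hg : LinearMap.range g = C.B := by
    apply le_antisymm
    · rintro _ ⟨h, rfl⟩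
      refine ⟨fun x => if hx : x ∈ Set.range C.p then h ⟨x, hx⟩ else 0, ?_⟩
      ext d
      simp [δ_apply, g]
    · rintro _ ⟨h, rfl⟩
      exact ⟨fun x => h x.1, rfl⟩
  have hk : LinearMap.ker g = Submodule.span ℝ {fun _ => (1 : ℝ)} := by
    ext h
    rw [LinearMap.mem_ker, Submodule.mem_span_singleton]
    constructor
    · intro hh
      have h0 : ∀ d : C.D, h ⟨C.p (C.σ d), _, rfl⟩ = h ⟨C.p d, _, rfl⟩ := fun d => by
        have := congrFun hh d
        exact sub_eq_zero.1 this
      obtain ⟨d0⟩ := C.ne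
      refine ⟨h ⟨C.p d0, _, rfl⟩, ?_⟩
      ext ⟨_, e, rfl⟩
      simp only [Pi.smul_apply, smul_eq_mul, mul_one]
      have := hc d0 e
      induction this with
      | refl => rfl
      | @tail b c _ hs ih =>
        rw [ih]
        rcases hs with rfl | rfl
        · exact (h0 b).symm
        · simp only [C.pα]; exact (h0 b).symm
    · rintro ⟨a, rfl⟩
      ext d; simp [g]
  have h1 := LinearMap.finrank_range_add_finrank_ker g
  have hι : Nonempty ι := by obtain ⟨d0⟩ := C.ne; exact ⟨⟨_, d0, rfl⟩⟩
  rw [hg, hk, finrank_span_singleton (by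
    intro h; obtain ⟨i⟩ := hι; have := congrFun h i; simp at this)] at h1
  rw [h1, Module.finrank_fintype_fun_eq_card, nV, ← Nat.card_coe_set_eq, Nat.card_eq_fintype_card]

lemma finrank_N (hc : C.Conn) :
    6 * (Module.finrank ℝ C.Z : ℤ) - 6 * (Module.finrank ℝ C.B : ℤ) = C.N := by
  have h1 := C.finrank_Z hc
  have h2 := C.finrank_B hc
  unfold N
  omega

end Cx

open Relation

namespace Cx
variable (C : Cx n)

lemma const_on_vertex {f : C.D → ℝ} (hf : ∀ d, f (C.ρ d) = f d) :
    ∃ h : Pt n → ℝ, ∀ d, h (C.p d) = f d := by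
  have key : ∀ d e, C.ρ.SameCycle d e → f d = f e := by
    rintro d e ⟨i, rfl⟩
    induction i with
    | zero => simp
    | succ i ih => rw [ih, add_comm, zpow_add, Equiv.Perm.mul_apply, zpow_one, hf]
    | pred i ih =>
      rw [ih, sub_eq_add_neg, add_comm, zpow_add, Equiv.Perm.mul_apply, zpow_neg_one,
        ← hf (C.ρ⁻¹ _)]
      exact congrArg f (Equiv.apply_symm_apply C.ρ _).symm
  have hF : Function.FactorsThrough f C.p := fun d e h => key d e (C.sameCycle_of_p h)
  exact ⟨Function.extend C.p f 0, fun d => hF.extend_apply 0 d⟩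

/-- intersection form (three times) -/
def om : (C.D → ℝ) →ₗ[ℝ] (C.D → ℝ) →ₗ[ℝ] ℝ :=
  LinearMap.mk₂ ℝ (fun φ ψ => ∑ d, ψ d * (φ (C.σ (C.σ d)) - φ (C.σ d)))
    (by intro a b c; rw [← Finset.sum_add_distrib]; congr 1; ext d; simp; ring)
    (by intro a b c; rw [smul_eq_mul, Finset.mul_sum]; congr 1; ext d; simp; ring)
    (by intro a b c; rw [← Finset.sum_add_distrib]; congr 1; ext d; simp; ring)
    (by intro a b c; rw [smul_eq_mul, Finset.mul_sum]; congr 1; ext d; simp; ring)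

lemma om_apply (φ ψ : C.D → ℝ) :
    C.om φ ψ = ∑ d, ψ d * (φ (C.σ (C.σ d)) - φ (C.σ d)) := rfl

lemma om_skew (φ ψ : C.D → ℝ) : C.om φ ψ = - C.om ψ φ := by
  rw [om_apply, om_apply]
  have h1 := C.sum_σ (fun d => ψ d * φ (C.σ (C.σ d)))
  have h2 := C.sum_σ (fun d => φ d * ψ (C.σ (C.σ d)))
  simp only [C.σ3] at h1 h2
  simp only [mul_sub, Finset.sum_sub_distrib]
  rw [← h1, ← h2]
  have h3 : ∀ f g : C.D → ℝ, ∑ d, f (C.σ d) * g d = ∑ d, g d * f (C.σ d) := by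
    intro f g; simp only [mul_comm]
  rw [h3, h3]; ring

lemma om_self (φ : C.D → ℝ) : C.om φ φ = 0 := by linarith [C.om_skew φ φ]

/-- `(s, q)` is a flow from `a` to `b` along faces touching `L`. -/
structure Flow (L : Set (Pt n)) (a b : C.D) (s q : C.D → ℝ) : Prop where
  cons : ∀ d, s (C.σ (C.σ d)) - s d - (q d - q (C.α d)) =
    (Pi.single b 1 : C.D → ℝ) d - (Pi.single a 1 : C.D → ℝ) d
  s_L : ∀ d, s d ≠ 0 → (L ∩ C.T d).Nonempty
  q_L : ∀ d, q d ≠ 0 → (L ∩ C.T d).Nonempty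

lemma single_σ (b d : C.D) : (Pi.single b (1 : ℝ) : C.D → ℝ) (C.σ (C.σ d)) =
    (Pi.single (C.σ b) (1 : ℝ) : C.D → ℝ) d := by
  have : C.σ (C.σ d) = b ↔ d = C.σ b := ⟨fun h => by rw [← h, C.σ3], fun h => by rw [h, C.σ3]⟩
  simp [Pi.single_apply, this]

lemma single_α (b d : C.D) : (Pi.single b (1 : ℝ) : C.D → ℝ) (C.α d) =
    (Pi.single (C.α b) (1 : ℝ) : C.D → ℝ) d := by
  have : C.α d = b ↔ d = C.α b := ⟨fun h => by rw [← h, C.α2], fun h => by rw [h, C.α2]⟩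
  simp [Pi.single_apply, this]

lemma single_ne {b d : C.D} (h : (Pi.single b (1 : ℝ) : C.D → ℝ) d ≠ 0) : d = b := by
  by_contra h'; exact h (Pi.single_eq_of_ne h' _)

lemma exists_flow {L : Set (Pt n)} {a b : C.D} (h : ReflTransGen (C.LStep L) a b) :
    ∃ s q, C.Flow L a b s q := by
  induction h with
  | refl => exact ⟨0, 0, ⟨by intro d; simp, by intro d h; simp at h, by intro d h; simp at h⟩⟩
  | @tail b c _ hs ih =>
    obtain ⟨s, q, h⟩ := ih
    obtain ⟨x, hx, hxT, hst⟩ := hs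
    rcases hst with rfl | ⟨rfl, hE⟩
    · refine ⟨s + Pi.single b 1, q, ⟨fun d => ?_, fun d hd => ?_, h.q_L⟩⟩
      · simp only [Pi.add_apply, single_σ]
        linarith [h.cons d]
      · by_cases hs : s d = 0
        · have : d = b := C.single_ne (by simpa [hs] using hd)
          subst this; exact ⟨x, hx, hxT⟩
        · exact h.s_L d hs
    · refine ⟨s, q + Pi.single b 1, ⟨fun d => ?_, h.s_L, fun d hd => ?_⟩⟩
      · simp only [Pi.add_apply, single_α]
        linarith [h.cons d]
      · by_cases hs : q d = 0
        · have : d = b := C.single_ne (by simpa [hs] using hd)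
          subst this; exact ⟨x, hx, hxT⟩
        · exact h.q_L d hs

/-- Values of a flow against a locally defined potential. -/
lemma Flow.value {C : Cx n} {L : Set (Pt n)} {a b : C.D} {s q : C.D → ℝ} (h : C.Flow L a b s q)
    (H : C.D → ℝ) (hα : ∀ d, (L ∩ C.T d).Nonempty → H (C.α d) = H d) :
    ∑ d, s d * (H (C.σ d) - H d) = H b - H a := by
  have h1 := C.sum_σ (fun d => s (C.σ (C.σ d)) * H d)
  simp only [C.σ3] at h1
  have h2 := C.sum_α (fun d => q (C.α d) * H d)
  simp only [C.α2] at h2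
  have h3 : ∑ d, q d * H (C.α d) = ∑ d, q d * H d := by
    apply Finset.sum_congr rfl
    intro d _
    by_cases hq : q d = 0
    · simp [hq]
    · rw [hα d (h.q_L d hq)]
  have h4 : ∑ d, (s (C.σ (C.σ d)) - s d - (q d - q (C.α d))) * H d = H b - H a := by
    simp only [h.cons, sub_mul, Finset.sum_sub_distrib, Pi.single_apply]
    simp
  simp only [sub_mul, Finset.sum_sub_distrib] at h4
  simp only [mul_sub, Finset.sum_sub_distrib]
  linarith

/-- the cocycle of a closed flow -/
def psi (s : C.D → ℝ) (d : C.D) : ℝ := s (C.σ (C.σ d)) - s d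

lemma psi_mem {s q : C.D → ℝ} (h : ∀ d, s (C.σ (C.σ d)) - s d - (q d - q (C.α d)) = 0) :
    C.psi s ∈ C.Z := by
  refine C.mem_Z.2 ⟨fun d => ?_, fun d => ?_⟩
  · have h1 := h d
    have h2 := h (C.α d)
    simp only [psi]
    rw [C.α2] at h2
    linarith
  · simp only [psi, C.σ3]; ring

lemma om_psi (θ s : C.D → ℝ)
    (hθ : ∀ d, s d ≠ 0 → θ d + θ (C.σ d) + θ (C.σ (C.σ d)) = 0) :
    C.om θ (C.psi s) = 3 * ∑ d, s d * (θ d + θ (C.σ d)) := by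
  rw [om_apply]
  have h1 := C.sum_σ (fun d => s (C.σ (C.σ d)) * (θ (C.σ (C.σ d)) - θ (C.σ d)))
  simp only [C.σ3] at h1
  simp only [psi, sub_mul, Finset.sum_sub_distrib]
  rw [← h1, Finset.mul_sum, ← Finset.sum_sub_distrib]
  apply Finset.sum_congr rfl
  intro d _
  by_cases hs : s d = 0
  · simp [hs]
  · linear_combination (-2 * s d) * hθ d hs

lemma radical (hc : C.Conn) {φ : C.D → ℝ} (hφ : φ ∈ C.Z) (h0 : ∀ ψ ∈ C.Z, C.om φ ψ = 0) :
    φ ∈ C.B := by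
  obtain ⟨d0⟩ := C.ne
  obtain ⟨hA, hF⟩ := C.mem_Z.1 hφ
  have hcl : ∀ s q : C.D → ℝ, (∀ d, s (C.σ (C.σ d)) - s d - (q d - q (C.α d)) = 0) →
      ∑ d, s d * (φ d + φ (C.σ d)) = 0 := by
    intro s q h
    have := h0 _ (C.psi_mem h)
    rw [C.om_psi φ s (fun d _ => hF d)] at this
    linarith
  have hex : ∀ d, ∃ s q, C.Flow Set.univ d0 d s q := by
    intro d
    refine C.exists_flow (ReflTransGen.mono ?_ _ _ (hc d0 d))
    rintro a b (rfl | rfl)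
    · exact ⟨C.p a, trivial, C.p_mem_T a, Or.inl rfl⟩
    · exact ⟨C.p a, trivial, C.p_mem_T a, Or.inr ⟨rfl, C.p_mem_E a⟩⟩
  choose s q hf using hex
  let H : C.D → ℝ := fun d => (∑ e, s d e * (φ e + φ (C.σ e))) / 2
  have Hσ : ∀ d, H (C.σ d) = H d + (φ d + φ (C.σ d)) / 2 := by
    intro d
    have := hcl (s d + Pi.single d 1 - s (C.σ d)) (q d - q (C.σ d)) (by
      intro e
      simp only [Pi.add_apply, Pi.sub_apply, single_σ]
      linarith [(hf d).cons e, (hf (C.σ d)).cons e])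
    simp only [Pi.add_apply, Pi.sub_apply, add_mul, sub_mul, Finset.sum_add_distrib,
      Finset.sum_sub_distrib, Pi.single_apply, ite_mul, one_mul, zero_mul, Finset.sum_ite_eq',
      Finset.mem_univ, if_true] at this
    simp only [H, mul_add, Finset.sum_add_distrib] at this ⊢
    linarith
  have Hα : ∀ d, H (C.α d) = H d := by
    intro d
    have := hcl (s d - s (C.α d)) (q d + Pi.single d 1 - q (C.α d)) (by
      intro e
      simp only [Pi.add_apply, Pi.sub_apply, single_α]
      linarith [(hf d).cons e, (hf (C.α d)).cons e])
    simp only [Pi.sub_apply, sub_mul, Finset.sum_sub_distrib] at this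
    simp only [H]
    linarith
  obtain ⟨h, hh⟩ := C.const_on_vertex (f := fun d => H d - φ d / 2) (by
    intro d
    have h1 := Hσ (C.σ (C.σ d))
    rw [C.σ3] at h1
    simp only [ρ_def, Hα, hA]
    linarith)
  refine ⟨h, ?_⟩
  ext d
  rw [δ_apply, ← C.pα, hh, hh, Hα, hA]; ring

lemma om_B_loc {φ : C.D → ℝ} {h : Pt n → ℝ}
    (hA : ∀ d, h (C.p d) ≠ 0 → φ (C.α (C.σ (C.σ d))) = - φ (C.σ (C.σ d)))
    (hF : ∀ d, h (C.p d) ≠ 0 → φ d + φ (C.σ d) + φ (C.σ (C.σ d)) = 0) : C.om φ (C.δ h) = 0 := by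
  have e1 : C.om φ (C.δ h) = ∑ d, h (C.p d) * (2 * φ (C.σ d) - φ d - φ (C.σ (C.σ d))) := by
    rw [om_apply]
    have h1 := C.sum_σ (fun d => h (C.p d) * (φ (C.σ d) - φ d))
    simp only [δ_apply, sub_mul, Finset.sum_sub_distrib]
    rw [h1, ← Finset.sum_sub_distrib]
    congr 1; ext d; ring
  have e2 : ∑ d, h (C.p d) * φ (C.σ (C.σ d)) = - ∑ d, h (C.p d) * φ d := by
    have h1 := Equiv.sum_comp C.ρ (fun d => h (C.p d) * φ d)
    simp only [ρ_def, C.pα, C.σ3] at h1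
    rw [← h1, ← Finset.sum_neg_distrib]
    congr 1; ext d
    by_cases h0 : h (C.p d) = 0
    · simp [h0]
    · rw [hA d h0]; ring
  rw [e1]
  have e3 : ∑ d, h (C.p d) * (2 * φ (C.σ d) - φ d - φ (C.σ (C.σ d))) =
      -3 * (∑ d, h (C.p d) * φ d + ∑ d, h (C.p d) * φ (C.σ (C.σ d))) := by
    rw [← Finset.sum_add_distrib, Finset.mul_sum]
    congr 1; ext d
    by_cases h0 : h (C.p d) = 0
    · simp [h0]
    · linear_combination (2 * h (C.p d)) * hF d h0
  rw [e3, e2]; ring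

lemma om_B {φ ψ : C.D → ℝ} (hφ : φ ∈ C.Z) (hψ : ψ ∈ C.B) : C.om φ ψ = 0 := by
  obtain ⟨h, rfl⟩ := hψ
  exact C.om_B_loc (fun d _ => (C.mem_Z.1 hφ).1 _) (fun d _ => (C.mem_Z.1 hφ).2 d)

theorem upper_alg (hc : C.Conn) {m : ℕ} (ψ : Fin m → C.D → ℝ) (hZ : ∀ i, ψ i ∈ C.Z)
    (h0 : ∀ i j, C.om (ψ i) (ψ j) = 0)
    (hB : ∀ c : Fin m → ℝ, ∑ i, c i • ψ i ∈ C.B → c = 0) : 12 * (m : ℤ) ≤ C.N := by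
  classical
  let L : C.Z →ₗ[ℝ] (Fin m → ℝ) := LinearMap.pi fun i => (C.om (ψ i)).comp C.Z.subtype
  have hL : ∀ φ i, L φ i = C.om (ψ i) φ.1 := fun φ i => rfl
  have hsurj : Function.Surjective L := by
    rw [← LinearMap.dualMap_injective_iff, injective_iff_map_eq_zero]
    intro f hf
    have hfe : ∀ v, f v = ∑ i, v i * f (Pi.single i 1) := by
      intro v
      have hv : v = ∑ i, v i • (Pi.single i 1 : Fin m → ℝ) := by
        ext j; simp [Finset.sum_apply, Pi.single_apply]
      conv_lhs => rw [hv]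
      simp
    have h1 : (fun i => f (Pi.single i 1)) = 0 := by
      apply hB
      apply C.radical hc (Submodule.sum_mem _ fun i _ => Submodule.smul_mem _ _ (hZ i))
      intro φ hφ
      have := LinearMap.congr_fun hf ⟨φ, hφ⟩
      rw [LinearMap.dualMap_apply, hfe] at this
      simp only [hL, LinearMap.zero_apply] at this
      rw [map_sum, LinearMap.sum_apply, ← this]
      congr 1; ext i; simp [mul_comm]
    ext i
    simpa using congrFun h1 i
  have h1 := LinearMap.finrank_range_add_finrank_ker L
  rw [LinearMap.range_eq_top.2 hsurj] at h1
  simp only [finrank_top, Module.finrank_fintype_fun_eq_card, Fintype.card_fin] at h1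
  let j0 : (Fin m → ℝ) × C.B →ₗ[ℝ] (C.D → ℝ) :=
    (Fintype.linearCombination ℝ ψ).coprod C.B.subtype
  have hj0 : ∀ x, j0 x = ∑ i, x.1 i • ψ i + x.2.1 := fun x => by
    simp [j0, Fintype.linearCombination_apply]
  have hjZ : ∀ x, j0 x ∈ C.Z := by
    intro x; rw [hj0]
    exact Submodule.add_mem _ (Submodule.sum_mem _ fun i _ => Submodule.smul_mem _ _ (hZ i))
      (C.B_le_Z x.2.2)
  let j : (Fin m → ℝ) × C.B →ₗ[ℝ] LinearMap.ker L :=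
    LinearMap.codRestrict _ (LinearMap.codRestrict _ j0 hjZ) (by
      intro x
      rw [LinearMap.mem_ker]
      ext i
      rw [hL]
      simp only [LinearMap.codRestrict_apply, hj0, map_add, map_sum, map_smul, h0,
        C.om_B (hZ i) x.2.2]
      simp)
  have hjinj : Function.Injective j := by
    rw [injective_iff_map_eq_zero]
    rintro ⟨c, b⟩ hx
    have hx' : j0 (c, b) = 0 := by
      have := congrArg (fun z => z.1.1) hx
      simpa [j] using this
    rw [hj0] at hx'
    have hc0 : c = 0 := by
      apply hB
      rw [eq_neg_of_add_eq_zero_left hx']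
      exact Submodule.neg_mem _ b.2
    subst hc0
    simpa using hx'
  have h2 := LinearMap.finrank_le_finrank_of_injective hjinj
  rw [Module.finrank_prod, Module.finrank_fintype_fun_eq_card, Fintype.card_fin] at h2
  have h3 := C.finrank_N hc
  omega

end Cx

open Relation

lemma re_pos_of_near {w ζ : ℂ} (h : ‖w - ζ‖ < ‖ζ‖) : 0 < (w / ζ).re := by
  have hζ : ζ ≠ 0 := by
    rintro rfl
    simp at h
    exact absurd h (not_lt.2 (norm_nonneg _))
  have h1 : ‖(w - ζ) / ζ‖ < 1 := by
    rw [norm_div, div_lt_one (norm_pos_iff.2 hζ)]; exact h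
  have h2 : w / ζ = 1 + (w - ζ) / ζ := by field_simp; ring
  rw [h2, Complex.add_re, Complex.one_re]
  have := (abs_le.1 (Complex.abs_re_le_norm ((w - ζ) / ζ))).1
  linarith

lemma arg_div_of_re_pos {z w : ℂ} (hz : 0 < z.re) (hw : 0 < w.re) :
    (z / w).arg = z.arg - w.arg := by
  have h1 := abs_lt.1 (Complex.abs_arg_lt_pi_div_two_iff.2 (Or.inl hz))
  have h2 := abs_lt.1 (Complex.abs_arg_lt_pi_div_two_iff.2 (Or.inl hw))
  have hz0 : z ≠ 0 := by rintro rfl; simp at hz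
  have hw0 : w ≠ 0 := by rintro rfl; simp at hw
  have hi : (w⁻¹).arg = - w.arg := by
    rw [Complex.arg_inv, if_neg]; linarith [Real.pi_pos]
  rw [div_eq_mul_inv, Complex.arg_mul hz0 (inv_ne_zero hw0) (by
    rw [hi]; constructor <;> linarith), hi]; ring

lemma arg_diff {a b ζ : ℂ} (ha : ‖a - ζ‖ < ‖ζ‖) (hb : ‖b - ζ‖ < ‖ζ‖) :
    (b / a).arg = (b / ζ).arg - (a / ζ).arg := by
  have hζ : ζ ≠ 0 := by
    rintro rfl
    simp at ha
    exact absurd ha (not_lt.2 (norm_nonneg _))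
  rw [← arg_div_of_re_pos (re_pos_of_near hb) (re_pos_of_near ha), div_div_div_cancel_right₀ hζ]

lemma exp_near {a b : ℝ} : ‖Complex.exp (2 * Real.pi * a * Complex.I) -
    Complex.exp (2 * Real.pi * b * Complex.I)‖ ≤ 2 * Real.pi * |a - b| := by
  have h : Complex.exp (2 * Real.pi * a * Complex.I) - Complex.exp (2 * Real.pi * b * Complex.I) =
      Complex.exp (2 * Real.pi * b * Complex.I) *
        (Complex.exp (Complex.I * ((2 * Real.pi * (a - b) : ℝ) : ℂ)) - 1) := by
    rw [mul_sub, ← Complex.exp_add]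
    congr 1
    · congr 1; push_cast; ring
    · ring
  have h1 : ‖Complex.exp (2 * Real.pi * b * Complex.I)‖ = 1 := by
    have := Complex.norm_exp_ofReal_mul_I (2 * Real.pi * b)
    push_cast at this; exact this
  rw [h, norm_mul, h1, one_mul]
  refine (Real.norm_exp_I_mul_ofReal_sub_one_le).trans ?_
  rw [Real.norm_eq_abs, abs_mul, abs_of_pos Real.two_pi_pos]

namespace Cx
variable (C : Cx n)

/-- angle cochain -/
noncomputable def ang (F : Pt n → ℂ) (d : C.D) : ℝ := (F (C.p (C.σ d)) / F (C.p d)).arg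

lemma ang_diff {F : Pt n → ℂ} {d : C.D} {ζ : ℂ} (h : ∀ x ∈ C.T d, ‖F x - ζ‖ < ‖ζ‖) :
    C.ang F d = (F (C.p (C.σ d)) / ζ).arg - (F (C.p d) / ζ).arg :=
  arg_diff (h _ (C.p_mem_T d)) (h _ (by rw [← C.Tσ]; exact C.p_mem_T _))

lemma ang_face {F : Pt n → ℂ} {d : C.D} {ζ : ℂ} (h : ∀ x ∈ C.T d, ‖F x - ζ‖ < ‖ζ‖) :
    C.ang F d + C.ang F (C.σ d) + C.ang F (C.σ (C.σ d)) = 0 := by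
  rw [C.ang_diff h, C.ang_diff (d := C.σ d) (by simpa), C.ang_diff (d := C.σ (C.σ d)) (by simpa),
    C.σ3]
  ring

lemma ang_anti {F : Pt n → ℂ} {d : C.D} {ζ : ℂ} (h : ∀ x ∈ C.T d, ‖F x - ζ‖ < ‖ζ‖) :
    C.ang F (C.α d) = - C.ang F d := by
  have h1 := h _ (C.p_mem_T d)
  have h2 := h _ (show C.p (C.σ d) ∈ C.T d by rw [← C.Tσ]; exact C.p_mem_T _)
  rw [C.ang_diff h, ang, C.pα, C.pσα, arg_diff h2 h1]; ring

lemma loop_cocycle {u : ℝ → Pt n} {F : Pt n → ℂ} {ε : ℝ} (hm : C.Mesh ε) (hu : Continuous u)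
    (huS : ∀ t, u t ∈ C.S) (hper : u 1 = u 0)
    (hF : ∀ t : ℝ, F (u t) = Complex.exp (2 * Real.pi * t * Complex.I))
    (hδ : ∀ x ∈ C.S, ∀ y ∈ C.S, dist x y ≤ ε → ‖F x - F y‖ < 1 / 8) :
    ∃ ψ ∈ C.Z, (∀ d, ψ d ≠ 0 → (Set.range u ∩ C.T d).Nonempty) ∧
      C.om (C.ang F) ψ = 12 * Real.pi := by
  have hT : ∀ d, C.T d ⊆ C.S := fun d x hx => C.mem_S.2 ⟨d, hx⟩
  let ζ : ℕ → ℂ := fun j => Complex.exp (2 * Real.pi * ((j / 100 : ℝ) : ℂ) * Complex.I)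
  have hζn : ∀ j, ‖ζ j‖ = 1 := by
    intro j
    have := Complex.norm_exp_ofReal_mul_I (2 * Real.pi * (j / 100))
    push_cast at this; simpa [ζ] using this
  have hζ0 : ∀ j, ζ j ≠ 0 := fun j => Complex.exp_ne_zero _
  have hζN : ζ 100 = ζ 0 := by
    simp only [ζ]
    norm_num
  choose pick hpick using fun x : C.S => C.mem_S.1 x.2
  let a : ℕ → C.D := fun j => pick ⟨u (j / 100), huS _⟩
  have ha : ∀ j : ℕ, u (j / 100) ∈ C.T (a j) := fun j => hpick ⟨u (j / 100), huS _⟩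
  have haN : a 100 = a 0 := by
    simp only [a]; congr 2; norm_num [hper]
  let L : ℕ → Set (Pt n) := fun j => u '' Set.Icc (j / 100 : ℝ) ((j + 1) / 100)
  have hflow : ∀ j, ∃ s q, C.Flow (L j) (a j) (a (j+1)) s q := by
    intro j
    apply C.exists_flow
    apply C.chain
    · exact (isPreconnected_Icc).image _ hu.continuousOn
    · rintro _ ⟨t, -, rfl⟩; exact huS t
    · exact ⟨_, ⟨_, ⟨le_rfl, by linarith⟩, rfl⟩, ha j⟩
    · refine ⟨_, ⟨_, ⟨?_, ?_⟩, rfl⟩, ha (j+1)⟩ <;> push_cast <;> linarith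
  choose s q hf using hflow
  have hnear : ∀ j d, (L j ∩ C.T d).Nonempty → ∀ x ∈ C.T d, ‖F x - ζ j‖ < 1 / 2 := by
    rintro j d ⟨_, ⟨t, ht, rfl⟩, hyT⟩ x hx
    have h1 := hδ x (hT d hx) _ (huS t) (C.mesh_T hm hx hyT)
    have h2 := exp_near (a := t) (b := j / 100)
    rw [← hF t] at h2
    have h3 : |t - j / 100| ≤ 1 / 100 := by
      rw [abs_le]; constructor <;> linarith [ht.1, ht.2]
    have h4 : 2 * Real.pi * |t - j / 100| ≤ 8 / 100 := by
      nlinarith [Real.pi_lt_four, Real.pi_pos, abs_nonneg (t - j / 100)]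
    calc ‖F x - ζ j‖ = ‖(F x - F (u t)) + (F (u t) - ζ j)‖ := by congr 1; ring
      _ ≤ ‖F x - F (u t)‖ + ‖F (u t) - ζ j‖ := norm_add_le _ _
      _ < 1 / 2 := by
        have : ‖F (u t) - ζ j‖ ≤ 8 / 100 := h2.trans h4
        linarith
  have hnear1 : ∀ j d, (L j ∩ C.T d).Nonempty → ∀ x ∈ C.T d, ‖F x - ζ j‖ < ‖ζ j‖ := by
    intro j d h x hx; rw [hζn]; linarith [hnear j d h x hx]
  let A : ℕ → Pt n → ℝ := fun j x => (F x / ζ j).arg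
  let H : ℕ → C.D → ℝ := fun j d => (A j (C.p d) + A j (C.p (C.σ d))) / 2
  have hstep : ∀ j, ∑ d, s j d * (C.ang F d + C.ang F (C.σ d)) =
      2 * (H j (a (j+1)) - H j (a j)) := by
    intro j
    rw [← (hf j).value (H j) (by intro d _; simp [H, add_comm]), Finset.mul_sum]
    apply Finset.sum_congr rfl
    intro d _
    by_cases hs : s j d = 0
    · simp [hs]
    · have h1 := hnear1 j d ((hf j).s_L d hs)
      rw [C.ang_diff h1, C.ang_diff (d := C.σ d) (by simpa)]
      simp only [H, A]; ring
  have hjump : ∀ j, H j (a (j+1)) - H (j+1) (a (j+1)) = 2 * Real.pi / 100 := by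
    intro j
    have hA : ∀ x ∈ C.T (a (j+1)), A j x - A (j+1) x = 2 * Real.pi / 100 := by
      intro x hx
      have h1 := hnear1 j (a (j+1)) (by
        refine ⟨_, ⟨_, ⟨?_, ?_⟩, rfl⟩, ha (j+1)⟩ <;> push_cast <;> linarith) x hx
      have h2 := hnear1 (j+1) (a (j+1)) (by
        refine ⟨_, ⟨_, ⟨?_, ?_⟩, rfl⟩, ha (j+1)⟩ <;> push_cast <;> linarith) x hx
      have hFx : F x ≠ 0 := by
        intro h; rw [h, zero_sub, norm_neg] at h1; exact lt_irrefl _ h1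
      have h3 := arg_div_of_re_pos (re_pos_of_near h1) (re_pos_of_near h2)
      simp only [A]
      rw [← h3, div_div_div_cancel_left' _ _ hFx]
      have h4 : ζ (j+1) / ζ j = Complex.exp (((2 * Real.pi / 100 : ℝ) : ℂ) * Complex.I) := by
        simp only [ζ]
        rw [← Complex.exp_sub]; congr 1; push_cast; ring
      rw [h4, Complex.arg_exp_mul_I, toIocMod_eq_self]
      constructor <;> linarith [Real.pi_pos]
    have h1 := hA _ (C.p_mem_T _)
    have h2 := hA (C.p (C.σ (a (j+1)))) (by rw [← C.Tσ]; exact C.p_mem_T _)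
    simp only [H]; linarith
  let st : C.D → ℝ := ∑ j ∈ Finset.range 100, s j
  let qt : C.D → ℝ := ∑ j ∈ Finset.range 100, q j
  have hst : ∀ d, st d ≠ 0 → ∃ j, (L j ∩ C.T d).Nonempty := by
    intro d hd
    simp only [st, Finset.sum_apply] at hd
    obtain ⟨j, -, hj⟩ := Finset.exists_ne_zero_of_sum_ne_zero hd
    exact ⟨j, (hf j).s_L d hj⟩
  have hcons : ∀ d, st (C.σ (C.σ d)) - st d - (qt d - qt (C.α d)) = 0 := by
    intro d
    simp only [st, qt, Finset.sum_apply, ← Finset.sum_sub_distrib, (hf _).cons]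
    rw [Finset.sum_range_sub (fun j => (Pi.single (a j) 1 : C.D → ℝ) d), haN, sub_self]
  have hLr : ∀ j, L j ⊆ Set.range u := fun j => Set.image_subset_range _ _
  refine ⟨C.psi st, C.psi_mem hcons, ?_, ?_⟩
  · intro d hd
    have : st (C.σ (C.σ d)) ≠ 0 ∨ st d ≠ 0 := by
      by_contra! h; exact hd (by simp [psi, h.1, h.2])
    rcases this with h | h
    · obtain ⟨j, hj⟩ := hst _ h
      rw [C.Tσ, C.Tσ] at hj
      exact hj.mono (Set.inter_subset_inter_left _ (hLr j))
    · obtain ⟨j, hj⟩ := hst _ h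
      exact hj.mono (Set.inter_subset_inter_left _ (hLr j))
  · rw [C.om_psi (C.ang F) st]
    · have h1 : ∑ d, st d * (C.ang F d + C.ang F (C.σ d)) =
          ∑ j ∈ Finset.range 100, ∑ d, s j d * (C.ang F d + C.ang F (C.σ d)) := by
        rw [Finset.sum_comm]
        simp only [st, Finset.sum_apply, Finset.sum_mul]
      rw [h1]
      simp only [hstep]
      have h2 : ∀ j, 2 * (H j (a (j+1)) - H j (a j)) =
          2 * (H (j+1) (a (j+1)) - H j (a j)) + 2 * (2 * Real.pi / 100) := by
        intro j; linarith [hjump j]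
      simp only [h2]
      rw [Finset.sum_add_distrib, ← Finset.mul_sum, Finset.sum_range_sub (fun j => H j (a j))]
      have h3 : H 100 (a 100) = H 0 (a 0) := by rw [haN]; simp only [H, A, hζN]
      rw [h3]; simp; ring
    · intro d hd
      obtain ⟨j, hj⟩ := hst d hd
      exact C.ang_face (hnear1 j d hj)

end Cx

open Relation

namespace Cx
variable (C : Cx n)

lemma locPath : LocallyPathConnectedSpace C.S := by
  have h1 : ∀ d, LocallyPathConnectedSpace (C.T d) := fun d => (C.T_convex d).locallyPathConnectedSpace
  have h2 : ∀ d, CompactSpace (C.T d) := fun d => isCompact_iff_compactSpace.1 (C.T_compact d)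
  let f : (Σ d, C.T d) → C.S := fun x => ⟨x.2.1, C.mem_S.2 ⟨x.1, x.2.2⟩⟩
  have hf : Continuous f := by
    apply continuous_sigma
    intro d
    exact Continuous.subtype_mk continuous_subtype_val _
  have hs : Function.Surjective f := by
    rintro ⟨x, hx⟩
    obtain ⟨d, hd⟩ := C.mem_S.1 hx
    exact ⟨⟨d, x, hd⟩, rfl⟩
  exact (hf.isClosedMap.isQuotientMap hf hs).locallyPathConnectedSpace

lemma pathConn {K : Set (Pt n)} (hK : IsClosed K) (hc : IsConnected (C.S \ K)) :
    IsPathConnected (C.S \ K) := by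
  have := C.locPath
  let U : Set C.S := Subtype.val ⁻¹' Kᶜ
  have hU : IsOpen U := hK.isOpen_compl.preimage continuous_subtype_val
  have hi : Subtype.val '' U = C.S \ K := by
    rw [Subtype.image_preimage_coe]; rfl
  rw [← hi] at hc ⊢
  have h1 : IsConnected U := by
    refine ⟨?_, (Topology.IsInducing.subtypeVal.isPreconnected_image).1 hc.2⟩
    obtain ⟨_, x, hx, rfl⟩ := hc.1
    exact ⟨x, hx⟩
  exact (hU.isConnected_iff_isPathConnected.1 h1).image continuous_subtype_val

lemma exists_L {K : Set (Pt n)} (hK : IsClosed K) (hc : IsConnected (C.S \ K)) {r : ℝ} (hr : 0 < r) :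
    ∃ L, IsCompact L ∧ IsPreconnected L ∧ L ⊆ C.S \ K ∧
      ∀ x ∈ C.S, (∀ k ∈ K, r ≤ dist x k) → x ∈ L := by
  have hp := C.pathConn hK hc
  obtain ⟨x0, hx0⟩ := hc.1
  obtain ⟨C', hS, -, hm⟩ := C.exists_mesh (half_pos hr)
  rw [← hS] at hp hx0 ⊢
  have hT : ∀ d, C'.T d ⊆ C'.S := fun d x hx => C'.mem_S.2 ⟨d, hx⟩
  let ι := {d : C'.D // Disjoint (C'.T d) K}
  have hin : ∀ d : ι, C'.p d.1 ∈ C'.S \ K := fun d =>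
    ⟨hT _ (C'.p_mem_T _), fun h => Set.disjoint_left.1 d.2 (C'.p_mem_T _) h⟩
  let γ : ι → Set (Pt n) := fun d => Set.range (hp.joinedIn x0 hx0 _ (hin d)).somePath
  refine ⟨⋃ d : ι, (γ d ∪ C'.T d.1), ?_, ?_, ?_, ?_⟩
  · have : Finite ι := inferInstance
    exact isCompact_iUnion fun d => (isCompact_range (Path.continuous _)).union (C'.T_compact _)
  · refine isPreconnected_iUnion ?_ ?_
    · refine ⟨x0, Set.mem_iInter.2 fun d => Or.inl ⟨0, by simp⟩⟩
    · intro d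
      refine IsPreconnected.union (C'.p d.1) ⟨1, by simp⟩ (C'.p_mem_T _)
        (isPreconnected_range (Path.continuous _)) (C'.T_convex _).isPreconnected
  · refine Set.iUnion_subset fun d => Set.union_subset ?_ ?_
    · rintro _ ⟨t, rfl⟩
      exact JoinedIn.somePath_mem _ t
    · exact fun x hx => ⟨hT _ hx, fun h => Set.disjoint_left.1 d.2 hx h⟩
  · intro x hx hd
    obtain ⟨d, hxd⟩ := C'.mem_S.1 hx
    refine Set.mem_iUnion.2 ⟨⟨d, Set.disjoint_left.2 fun y hy hyK => ?_⟩, Or.inr hxd⟩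
    have := hd y hyK
    have := C'.mesh_T hm hxd hy
    linarith

/-- Loop data extracted from a topological circle. -/
lemma loop_data {K : Set (Pt n)}
    (h : Nonempty (↥K ≃ₜ ↥(Metric.sphere (0 : EuclideanSpace ℝ (Fin 2)) 1))) :
    IsCompact K ∧ ∃ (u : ℝ → Pt n) (F : Pt n → ℂ), Continuous u ∧ Continuous F ∧ Set.range u = K ∧
      u 1 = u 0 ∧ ∀ t : ℝ, F (u t) = Complex.exp (2 * Real.pi * t * Complex.I) := by
  obtain ⟨φ⟩ := h
  have hcomp : CompactSpace ↥K := φ.symm.compactSpace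
  have hK : IsCompact K := isCompact_iff_compactSpace.2 hcomp
  refine ⟨hK, ?_⟩
  let c : ℝ → Metric.sphere (0 : EuclideanSpace ℝ (Fin 2)) 1 := fun t =>
    ⟨!₂[Real.cos (2 * Real.pi * t), Real.sin (2 * Real.pi * t)], by
      simp [EuclideanSpace.norm_eq]⟩
  have hc : Continuous c := by
    apply Continuous.subtype_mk
    apply (PiLp.continuous_toLp 2 _).comp
    apply continuous_pi
    intro i; fin_cases i <;> simp <;> fun_prop
  let e : C(K, ℂ) := ⟨fun x => ((φ x).1 0 : ℂ) + ((φ x).1 1 : ℂ) * Complex.I, by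
    have h1 : ∀ i : Fin 2, Continuous fun x : K => (φ x).1 i := fun i => by fun_prop
    have h2 := h1 0
    have h3 := h1 1
    fun_prop⟩
  obtain ⟨F, hF⟩ := ContinuousMap.exists_restrict_eq hK.isClosed e
  refine ⟨fun t => (φ.symm (c t)).1, F, ?_, F.continuous, ?_, ?_, ?_⟩
  · exact continuous_subtype_val.comp (φ.symm.continuous.comp hc)
  · apply Set.Subset.antisymm
    · rintro _ ⟨t, rfl⟩; exact (φ.symm (c t)).2
    · intro x hx
      have h1 : ‖(φ ⟨x, hx⟩).1‖ = 1 := by simp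
      let z : ℂ := ⟨(φ ⟨x, hx⟩).1 0, (φ ⟨x, hx⟩).1 1⟩
      have hz : ‖z‖ = 1 := by
        rw [EuclideanSpace.norm_eq, Fin.sum_univ_two] at h1
        rw [Complex.norm_eq_sqrt_sq_add_sq, ← h1]; simp [z]
      refine ⟨z.arg / (2 * Real.pi), ?_⟩
      have h2 : c (z.arg / (2 * Real.pi)) = φ ⟨x, hx⟩ := by
        have hpi := Real.pi_ne_zero
        have h3 : 2 * Real.pi * (z.arg / (2 * Real.pi)) = z.arg := by field_simp
        have hz0 : z ≠ 0 := by rintro h; rw [h] at hz; simp at hz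
        apply Subtype.ext
        ext i
        fin_cases i
        · simp [c, h3, Complex.cos_arg hz0, hz, z]
        · simp [c, h3, Complex.sin_arg, hz, z]
      simp only [h2, Homeomorph.symm_apply_apply]
  · simp [c]
  · intro t
    have := congrArg (fun g => g (φ.symm (c t))) hF
    simp only [ContinuousMap.restrict_apply] at this
    rw [this]
    have h2 : (2 * Real.pi * t * Complex.I : ℂ) = ((2 * Real.pi * t : ℝ) : ℂ) * Complex.I := by
      push_cast; ring
    rw [h2, Complex.exp_mul_I]
    simp [e, c]


lemma fin_pos {ι : Type*} [Finite ι] {P : ι → ℝ → Prop}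
    (mono : ∀ i r r', 0 < r' → r' ≤ r → P i r → P i r') (h : ∀ i, ∃ r > 0, P i r) :
    ∃ r > 0, ∀ i, P i r := by
  have h1 : ∀ᶠ r in nhdsWithin (0 : ℝ) (Set.Ioi 0), ∀ i, P i r := by
    rw [Filter.eventually_all]
    intro i
    obtain ⟨r, hr, hP⟩ := h i
    filter_upwards [Ioo_mem_nhdsGT hr] with r' hr'
    exact mono i r r' hr'.1 hr'.2.le hP
  obtain ⟨r, hr, hr0⟩ := (h1.and self_mem_nhdsWithin).exists
  exact ⟨r, hr0, hr⟩

lemma gap_pos {A B : Set (Pt n)} (hA : IsCompact A) (hB : IsClosed B) (hd : Disjoint A B) :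
    ∃ r > 0, ∀ x ∈ A, ∀ y ∈ B, r < dist x y := by
  obtain ⟨r, hr, h⟩ := Metric.exists_pos_forall_lt_edist hA hB hd
  refine ⟨r, hr, fun x hx y hy => ?_⟩
  have := h x hx y hy
  rw [edist_dist, ENNReal.lt_ofReal_iff_toReal_lt ENNReal.coe_ne_top] at this
  simpa using this

theorem upper (hS : IsPreconnected C.S) {m : ℕ} (K : Fin m → Set (Pt n)) (hKS : ∀ i, K i ⊆ C.S)
    (hdisj : ∀ i j, i ≠ j → Disjoint (K i) (K j))
    (hcirc : ∀ i, Nonempty (↥(K i) ≃ₜ ↥(Metric.sphere (0 : EuclideanSpace ℝ (Fin 2)) 1)))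
    (hconn : IsConnected (C.S \ ⋃ i, K i)) : 12 * (m : ℤ) ≤ C.N := by
  choose hKc u F hu hF hr hper hFu using fun i => loop_data (hcirc i)
  have hF1 : ∀ i, ∀ k ∈ K i, ‖F i k‖ = 1 := by
    intro i k hk
    rw [← hr i] at hk
    obtain ⟨t, rfl⟩ := hk
    rw [hFu]
    have := Complex.norm_exp_ofReal_mul_I (2 * Real.pi * t)
    push_cast at this; exact this
  have huc : ∀ i, ∀ η > 0, ∃ δ > 0, ∀ x ∈ C.S, ∀ y ∈ C.S, dist x y < δ → ‖F i x - F i y‖ < η := by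
    intro i η hη
    have := Metric.uniformContinuousOn_iff.1
      (C.S_compact.uniformContinuousOn_of_continuous (hF i).continuousOn) η hη
    simpa only [dist_eq_norm (F i _)] using this
  obtain ⟨r1, hr1, hgap⟩ : ∃ r > 0, ∀ ij : Fin m × Fin m, ij.1 ≠ ij.2 →
      ∀ x ∈ K ij.1, ∀ y ∈ K ij.2, 10 * r ≤ dist x y := by
    apply fin_pos
    · intro ij r r' _ h1 h2 hne x hx y hy; linarith [h2 hne x hx y hy]
    · rintro ⟨i, j⟩
      by_cases hne : i = j
      · exact ⟨1, one_pos, fun h => absurd hne h⟩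
      · obtain ⟨r, hr, h⟩ := gap_pos (hKc i) (hKc j).isClosed (hdisj i j hne)
        exact ⟨r / 10, by positivity, fun _ x hx y hy => by linarith [h x hx y hy]⟩
  obtain ⟨r2, hr2, hhalf⟩ : ∃ r > 0, ∀ i, ∀ x ∈ C.S, ∀ k ∈ K i, dist x k ≤ 4 * r →
      ‖F i x - F i k‖ < 1 / 2 := by
    apply fin_pos
    · intro i r r' _ h1 h2 x hx k hk hd; exact h2 x hx k hk (by linarith)
    · intro i
      obtain ⟨δ, hδ, h⟩ := huc i (1/2) (by norm_num)
      exact ⟨δ / 8, by positivity, fun x hx k hk hd => h x hx k (hKS i hk) (by linarith)⟩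
  obtain ⟨r, hr0, hrr1, hrr2⟩ : ∃ r > 0, r ≤ r1 ∧ r ≤ r2 :=
    ⟨min r1 r2, lt_min hr1 hr2, min_le_left _ _, min_le_right _ _⟩
  have hKcl : IsClosed (⋃ i, K i) := (isCompact_iUnion hKc).isClosed
  obtain ⟨L, hLc, hLp, hLs, hLr⟩ := C.exists_L hKcl hconn hr0
  obtain ⟨ε1, hε1, hLK⟩ := gap_pos hLc hKcl (Set.disjoint_left.2 fun x hx h => (hLs hx).2 h)
  obtain ⟨ε2, hε2, hmod⟩ : ∃ r > 0, ∀ i, ∀ x ∈ C.S, ∀ y ∈ C.S, dist x y ≤ r →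
      ‖F i x - F i y‖ < 1 / 8 := by
    apply fin_pos
    · intro i r r' _ h1 h2 x hx k hk hd; exact h2 x hx k hk (by linarith)
    · intro i
      obtain ⟨δ, hδ, h⟩ := huc i (1/8) (by norm_num)
      exact ⟨δ / 2, by positivity, fun x hx k hk hd => h x hx k hk (by linarith)⟩
  obtain ⟨ε, hε, hεr, hεε1, hεε2⟩ : ∃ ε > 0, ε ≤ r ∧ ε ≤ ε1 ∧ ε ≤ ε2 :=
    ⟨min r (min ε1 ε2), lt_min hr0 (lt_min hε1 hε2), min_le_left _ _,
      (min_le_right _ _).trans (min_le_left _ _), (min_le_right _ _).trans (min_le_right _ _)⟩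
  obtain ⟨C', hS', hN, hm⟩ := C.exists_mesh hε
  rw [← hN]
  rw [← hS'] at hS hKS hmod hhalf hLr hLs
  clear huc hconn
  have hT : ∀ d, C'.T d ⊆ C'.S := fun d x hx => C'.mem_S.2 ⟨d, hx⟩
  have hpσ : ∀ d, C'.p (C'.σ d) ∈ C'.T d := fun d => by rw [← C'.Tσ]; exact C'.p_mem_T _
  have hloop := fun i => C'.loop_cocycle hm (hu i) (fun t => hKS i (hr i ▸ ⟨t, rfl⟩)) (hper i) (hFu i)
    (fun x hx y hy hd => hmod i x hx y hy (hd.trans hεε2))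
  choose ψ hψZ hψT hψom using hloop
  simp only [hr] at hψT
  have hfar : ∀ i j, i ≠ j → ∀ x ∈ K i, ∀ y ∈ K j, 10 * r ≤ dist x y := fun i j hne x hx y hy => by
    linarith [hgap (i, j) hne x hx y hy]
  refine C'.upper_alg (C'.conn_of hS) ψ hψZ ?_ ?_
  · intro i j
    by_cases hne : i = j
    · subst hne; exact C'.om_self _
    · rw [om_apply]
      refine Finset.sum_eq_zero fun d _ => ?_
      by_contra h
      obtain ⟨h1, h2⟩ := mul_ne_zero_iff.1 h
      obtain ⟨y, hy, hyT⟩ := hψT j d h1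
      have h3 : ψ i (C'.σ (C'.σ d)) ≠ 0 ∨ ψ i (C'.σ d) ≠ 0 := by
        by_contra! h3; exact h2 (by rw [h3.1, h3.2, sub_zero])
      obtain ⟨x, hx, hxT⟩ : (K i ∩ C'.T d).Nonempty := by
        rcases h3 with h3 | h3
        · simpa using hψT i _ h3
        · simpa using hψT i _ h3
      have := C'.mesh_T hm hxT hyT
      linarith [hfar i j hne x hx y hy]
  · rintro c ⟨h, hh⟩
    have hL0 : ∀ d, (L ∩ C'.T d).Nonempty → ∀ i, ψ i d = 0 := by
      rintro d ⟨x, hx, hxT⟩ i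
      by_contra h0
      obtain ⟨y, hy, hyT⟩ := hψT i d h0
      have := hLK x hx y (Set.mem_iUnion.2 ⟨i, hy⟩)
      linarith [C'.mesh_T hm hxT hyT]
    have hδ : ∀ d, h (C'.p (C'.σ d)) - h (C'.p d) = ∑ i, c i * ψ i d := by
      intro d
      have := congrFun hh d
      rw [δ_apply] at this
      rw [this]; simp [Finset.sum_apply]
    obtain ⟨c0, hc0⟩ : ∃ c0, ∀ d, (L ∩ C'.T d).Nonempty → h (C'.p d) = c0 := by
      by_cases hex : ∃ d, (L ∩ C'.T d).Nonempty
      · obtain ⟨d1, hd1⟩ := hex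
        refine ⟨h (C'.p d1), fun d hd => ?_⟩
        have hch := C'.chain hLp (fun x hx => (hLs hx).1) hd1 hd
        clear hd
        induction hch with
        | refl => rfl
        | @tail b e _ hs ih =>
          rw [← ih]
          obtain ⟨x, hx, hxT, hst⟩ := hs
          have h1 := hδ b
          simp only [hL0 b ⟨x, hx, hxT⟩, mul_zero, Finset.sum_const_zero] at h1
          rcases hst with rfl | ⟨rfl, -⟩
          · linarith
          · rw [C'.pα]; linarith
      · exact ⟨0, fun d hd => absurd ⟨d, hd⟩ hex⟩
    ext i
    classical
    let g : Pt n → ℝ := fun x => if ∃ k ∈ K i, dist x k ≤ 3 * r then h x - c0 else 0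
    have hψfar : ∀ j, j ≠ i → ∀ d, ∀ k ∈ K i, dist (C'.p d) k ≤ 3 * r → ψ j d = 0 := by
      intro j hne d k hk hd
      by_contra h0
      obtain ⟨y, hy, hyT⟩ := hψT j d h0
      have h1 := hfar j i hne y hy k hk
      have h2 := C'.mesh_T hm hyT (C'.p_mem_T d)
      linarith [dist_triangle y (C'.p d) k]
    have hg : c i • ψ i = C'.δ g := by
      ext d
      rw [δ_apply, Pi.smul_apply, smul_eq_mul]
      by_cases hd : (L ∩ C'.T d).Nonempty
      · rw [hL0 d hd]
        have h1 := hc0 d hd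
        have h2 := hc0 (C'.σ d) (by simpa using hd)
        simp only [g, h1, h2]
        simp
      · have h1 : C'.p d ∉ L := fun hL => hd ⟨_, hL, C'.p_mem_T d⟩
        have h2 : ∃ k ∈ ⋃ i, K i, dist (C'.p d) k < r := by
          by_contra! h3
          exact h1 (hLr _ (hT _ (C'.p_mem_T d)) h3)
        obtain ⟨k, hk, hkd⟩ := h2
        obtain ⟨j, hkj⟩ := Set.mem_iUnion.1 hk
        have h4 : dist (C'.p (C'.σ d)) k ≤ 2 * r := by
          have := C'.mesh_T hm (hpσ d) (C'.p_mem_T d)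
          linarith [dist_triangle (C'.p (C'.σ d)) (C'.p d) k]
        by_cases hji : j = i
        · subst hji
          have e1 : g (C'.p d) = h (C'.p d) - c0 := if_pos ⟨k, hkj, by linarith⟩
          have e2 : g (C'.p (C'.σ d)) = h (C'.p (C'.σ d)) - c0 := if_pos ⟨k, hkj, by linarith⟩
          rw [e1, e2, sub_sub_sub_cancel_right, hδ, Finset.sum_eq_single j]
          · intro b _ hb; rw [hψfar b hb d k hkj (by linarith), mul_zero]
          · simp
        · have e1 : g (C'.p d) = 0 := if_neg (by
            rintro ⟨k', hk', hd'⟩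
            have := hfar j i hji k hkj k' hk'
            have := dist_triangle k (C'.p d) k'
            rw [dist_comm k (C'.p d)] at this
            linarith)
          have e2 : g (C'.p (C'.σ d)) = 0 := if_neg (by
            rintro ⟨k', hk', hd'⟩
            have := hfar j i hji k hkj k' hk'
            have := dist_triangle k (C'.p (C'.σ d)) k'
            rw [dist_comm k (C'.p (C'.σ d))] at this
            linarith)
          rw [e1, e2]
          have : ψ i d = 0 := by
            by_contra h0
            obtain ⟨y, hy, hyT⟩ := hψT i d h0
            have h1 := hfar i j (Ne.symm hji) y hy k hkj
            have h2 := C'.mesh_T hm hyT (C'.p_mem_T d)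
            linarith [dist_triangle y (C'.p d) k]
          rw [this]; simp
    have hloc : ∀ d, g (C'.p d) ≠ 0 → ∃ ζ : ℂ, ∀ x ∈ C'.T d, ‖F i x - ζ‖ < ‖ζ‖ := by
      intro d hd
      have : ∃ k ∈ K i, dist (C'.p d) k ≤ 3 * r := by
        by_contra h0; exact hd (if_neg h0)
      obtain ⟨k, hk, hdk⟩ := this
      refine ⟨F i k, fun x hx => ?_⟩
      rw [hF1 i k hk]
      have h1 := C'.mesh_T hm hx (C'.p_mem_T d)
      have := hhalf i x (hT d hx) k hk (by linarith [dist_triangle x (C'.p d) k])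
      linarith
    have hz : C'.om (C'.ang (F i)) (C'.δ g) = 0 := by
      apply C'.om_B_loc
      · intro d hd
        obtain ⟨ζ, hζ⟩ := hloc d hd
        exact C'.ang_anti (d := C'.σ (C'.σ d)) (by simpa using hζ)
      · intro d hd
        obtain ⟨ζ, hζ⟩ := hloc d hd
        exact C'.ang_face hζ
    rw [← hg, map_smul, hψom] at hz
    simpa [Real.pi_ne_zero] using hz

end Cx

open Relation

namespace Cx
variable (C : Cx n)

/-- a family of disjoint simple dart cycles with connected complement -/
structure Fam (m : ℕ) where
  c : Fin m → ℕ → C.D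
  k : Fin m → ℕ
  k3 : ∀ i, 3 ≤ k i
  per : ∀ i t, c i (t + k i) = c i t
  nxt : ∀ i t, C.p (C.σ (c i t)) = C.p (c i (t + 1))
  inj : ∀ i j s t, C.p (c i s) = C.p (c j t) → i = j ∧ s % k i = t % k i
  fa : ∀ i t, c i (t + 1) ≠ C.σ (c i t)
  fb : ∀ i t, C.σ (C.α (c i (t + 1))) ≠ C.α (c i t)
  dual : ∀ d e, ReflTransGen (fun a b => b = C.σ a ∨ (b = C.α a ∧
    ∀ i t, a ≠ c i t ∧ a ≠ C.α (c i t))) d e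

namespace Fam
variable {C} {m : ℕ} (F : C.Fam m)

def G (d : C.D) : Prop := ∃ i t, d = F.c i t ∨ d = C.α (F.c i t)
def GV (x : Pt n) : Prop := ∃ i t, x = C.p (F.c i t)

lemma G_α {d : C.D} (h : F.G d) : F.G (C.α d) := by
  obtain ⟨i, t, rfl | rfl⟩ := h
  · exact ⟨i, t, Or.inr rfl⟩
  · exact ⟨i, t, Or.inl (C.α2 _)⟩

lemma G_p {d : C.D} (h : F.G d) : F.GV (C.p d) := by
  obtain ⟨i, t, rfl | rfl⟩ := h
  · exact ⟨i, t, rfl⟩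
  · exact ⟨i, t + 1, by rw [C.pα, F.nxt]⟩

lemma c_mod (i : Fin m) (t : ℕ) : F.c i (t % F.k i) = F.c i t :=
  (show Function.Periodic (F.c i) (F.k i) from F.per i).map_mod_nat t

lemma same {i j : Fin m} {s t : ℕ} (h : C.p (F.c i s) = C.p (F.c j t)) : F.c i s = F.c j t := by
  obtain ⟨rfl, h2⟩ := F.inj _ _ _ _ h
  rw [← F.c_mod, h2, F.c_mod]

lemma same_next {i j : Fin m} {s t : ℕ} (h : C.p (F.c i s) = C.p (F.c j t)) (u : ℕ) :
    F.c i (s + u) = F.c j (t + u) := by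
  obtain ⟨rfl, h2⟩ := F.inj _ _ _ _ h
  rw [← F.c_mod, Nat.add_mod, h2, ← Nat.add_mod, F.c_mod]

lemma same_prev {i j : Fin m} {s t : ℕ} (h : C.p (F.c i (s + 1)) = C.p (F.c j (t + 1))) :
    F.c i s = F.c j t := by
  obtain ⟨rfl, h2⟩ := F.inj _ _ _ _ h
  have : s % F.k i = t % F.k i := Nat.ModEq.add_right_cancel' 1 h2
  rw [← F.c_mod, this, F.c_mod]

lemma c_ne_α (i j : Fin m) (s t : ℕ) : F.c j t ≠ C.α (F.c i s) := by
  intro h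
  have h1 : C.p (F.c j t) = C.p (F.c i (s + 1)) := by rw [h, C.pα, F.nxt]
  have h2 : C.p (F.c j (t + 1)) = C.p (F.c i s) := by rw [← F.nxt, h, C.pσα]
  rw [F.same_next h1 1] at h2
  obtain ⟨-, h3⟩ := F.inj _ _ _ _ h2
  have h4 : 2 % F.k i = 0 % F.k i :=
    Nat.ModEq.add_left_cancel' (s) (show s + 2 ≡ s + 0 [MOD F.k i] from h3)
  have := F.k3 i
  rw [Nat.mod_eq_of_lt (by omega), Nat.zero_mod] at h4
  omega

/-- no face contains two cycle darts -/
lemma f2 {d : C.D} (h : F.G d) : ¬ F.G (C.σ d) := by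
  rintro ⟨j, t, h2⟩
  obtain ⟨i, s, h1⟩ := h
  rcases h1 with rfl | rfl <;> rcases h2 with h2 | h2
  · have h3 : C.p (F.c j t) = C.p (F.c i (s + 1)) := by rw [← h2, F.nxt]
    exact F.fa i s (by rw [h2, F.same h3])
  · have h3 : C.p (F.c j (t + 1)) = C.p (F.c i (s + 1)) := by rw [← F.nxt, ← F.nxt, h2, C.pα]
    rw [F.same_prev h3] at h2
    have := C.pσσ_ne (F.c i s)
    rw [h2, C.pσα] at this
    exact this rfl
  · have h3 : C.p (F.c j t) = C.p (F.c i s) := by rw [← h2, C.pσα]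
    rw [F.same h3] at h2
    have := C.pσσ_ne (C.α (F.c i s))
    rw [h2, C.pα] at this
    exact this rfl
  · have h3 : C.p (F.c j (t + 1)) = C.p (F.c i s) := by rw [← F.nxt, ← C.pα, ← h2, C.pσα]
    rw [← F.same h3] at h2
    exact F.fb j t h2

def Full : Prop := ∀ d, F.GV (C.p d) → F.GV (C.p (C.σ d)) → F.G d

/-- subdivided cycles -/
def sc (i : Fin m) (u : ℕ) : C.D × Fin 4 :=
  if u % 2 = 0 then (F.c i (u / 2), 0) else (C.σ (F.c i (u / 2)), 2)

lemma sc0 (i : Fin m) (t : ℕ) : F.sc i (2 * t) = (F.c i t, 0) := by simp [sc]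
lemma sc1 (i : Fin m) (t : ℕ) : F.sc i (2 * t + 1) = (C.σ (F.c i t), 2) := by
  have : (2 * t + 1) % 2 = 1 := by omega
  have h : (2 * t + 1) / 2 = t := by omega
  simp [sc, this, h]
lemma sc2 (i : Fin m) (t : ℕ) : F.sc i (2 * t + 1 + 1) = (F.c i (t + 1), 0) := F.sc0 i (t + 1)

lemma sc_cases {d : C.D} {j : Fin 4} (i : Fin m) (t : ℕ) (h : (d, j) = F.sc i t ∨ (d, j) = C.sα (F.sc i t)) :
    (j = 0 ∧ F.G d) ∨ (j = 2 ∧ F.G (C.σ (C.σ d))) := by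
  obtain ⟨t, rfl | rfl⟩ := Nat.even_or_odd' t
  · rw [sc0] at h
    rcases h with h | h
    · obtain ⟨rfl, rfl⟩ := Prod.mk.inj h
      exact Or.inl ⟨rfl, i, t, Or.inl rfl⟩
    · obtain ⟨rfl, rfl⟩ := Prod.mk.inj h
      exact Or.inr ⟨rfl, i, t, by simp⟩
  · rw [sc1] at h
    rcases h with h | h
    · obtain ⟨rfl, rfl⟩ := Prod.mk.inj h
      exact Or.inr ⟨rfl, i, t, by simp⟩
    · obtain ⟨rfl, rfl⟩ := Prod.mk.inj h
      exact Or.inl ⟨rfl, i, t, by simp⟩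

lemma modtwo {a b k : ℕ} (h : a % k = b % k) : (2 * a) % (2 * k) = (2 * b) % (2 * k) ∧
    (2 * a + 1) % (2 * k) = (2 * b + 1) % (2 * k) := by
  have : (2 * a) % (2 * k) = (2 * b) % (2 * k) := by
    rw [Nat.mul_mod_mul_left, Nat.mul_mod_mul_left, h]
  exact ⟨this, by rw [Nat.add_mod, this, ← Nat.add_mod]⟩

lemma M_inj {i j : Fin m} {s t : ℕ} (h : C.M (F.c i s) = C.M (F.c j t)) : F.c i s = F.c j t := by
  rcases C.M_eq.1 h with h | h
  · exact h.symm
  · exact absurd h (F.c_ne_α _ _ _ _)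

noncomputable def sub : C.sub.Fam m where
  c := F.sc
  k i := 2 * F.k i
  k3 i := by have := F.k3 i; omega
  per i t := by
    obtain ⟨t, rfl | rfl⟩ := Nat.even_or_odd' t
    · rw [← mul_add, sc0, sc0, F.per]
    · rw [show 2 * t + 1 + 2 * F.k i = 2 * (t + F.k i) + 1 by ring, sc1, sc1, F.per]
  nxt i t := by
    change C.sp (C.sσ _) = C.sp _
    obtain ⟨t, rfl | rfl⟩ := Nat.even_or_odd' t
    · rw [sc0, sc1]; simp
    · rw [sc1, sc2]; simp [F.nxt]
  inj i j s t h := by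
    change C.sp _ = C.sp _ at h
    obtain ⟨s, rfl | rfl⟩ := Nat.even_or_odd' s <;> obtain ⟨t, rfl | rfl⟩ := Nat.even_or_odd' t
    · rw [sc0, sc0] at h
      obtain ⟨h1, h2⟩ := F.inj _ _ _ _ h
      exact ⟨h1, (modtwo h2).1⟩
    · rw [sc0, sc1] at h
      exact absurd h.symm (C.M_ne_p _ _)
    · rw [sc0, sc1] at h
      exact absurd h (C.M_ne_p _ _)
    · rw [sc1, sc1] at h
      simp only [sp2, σ3] at h
      obtain ⟨h1, h2⟩ := F.inj _ _ _ _ (congrArg C.p (F.M_inj h))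
      exact ⟨h1, (modtwo h2).2⟩
  fa i t := by
    change _ ≠ C.sσ _
    obtain ⟨t, rfl | rfl⟩ := Nat.even_or_odd' t
    · rw [sc0, sc1]; simp
    · rw [sc1, sc2]; simp [F.fa]
  fb i t := by
    change C.sσ (C.sα _) ≠ C.sα _
    obtain ⟨t, rfl | rfl⟩ := Nat.even_or_odd' t
    · rw [sc0, sc1]; simp
    · rw [sc1, sc2]; simp [F.fb]
  dual := by
    let R : C.D × Fin 4 → C.D × Fin 4 → Prop := fun a b => b = C.sσ a ∨ (b = C.sα a ∧
      ∀ i t, a ≠ F.sc i t ∧ a ≠ C.sα (F.sc i t))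
    change ∀ d e : C.D × Fin 4, ReflTransGen R d e
    have s0 : ∀ a, ReflTransGen R a (C.sσ a) := fun a => .single (Or.inl rfl)
    have g13 : ∀ d, ReflTransGen R (d, 1) (d, 3) := fun d => .single (Or.inr ⟨rfl, fun i t => by
      refine ⟨fun h => ?_, fun h => ?_⟩
      · rcases F.sc_cases i t (Or.inl h) with h | h <;> simp at h
      · rcases F.sc_cases i t (Or.inr h) with h | h <;> simp at h⟩)
    have g31 : ∀ d, ReflTransGen R (d, 3) (d, 1) := fun d => .single (Or.inr ⟨rfl, fun i t => by
      refine ⟨fun h => ?_, fun h => ?_⟩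
      · rcases F.sc_cases i t (Or.inl h) with h | h <;> simp at h
      · rcases F.sc_cases i t (Or.inr h) with h | h <;> simp at h⟩)
    have h12 : ∀ d, ReflTransGen R (d, 1) (d, 2) := fun d => s0 (d, 1)
    have h20 : ∀ d, ReflTransGen R (d, 2) (d, 0) := fun d => s0 (d, 2)
    have h01 : ∀ d, ReflTransGen R (d, 0) (d, 1) := fun d => s0 (d, 0)
    have to3 : ∀ d j, ReflTransGen R (d, j) (d, 3) := by
      intro d j
      fin_cases j
      · exact (h01 d).trans (g13 d)
      · exact g13 d
      · exact ((h20 d).trans (h01 d)).trans (g13 d)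
      · exact .refl
    have from3 : ∀ d j, ReflTransGen R (d, 3) (d, j) := by
      intro d j
      fin_cases j
      · exact ((g31 d).trans (h12 d)).trans (h20 d)
      · exact g31 d
      · exact (g31 d).trans (h12 d)
      · exact .refl
    have main : ∀ d e, ReflTransGen R (d, 3) (e, 3) := by
      intro d e
      induction F.dual d e with
      | refl => exact .refl
      | @tail b c _ hs ih =>
        refine ih.trans ?_
        rcases hs with rfl | ⟨rfl, hs⟩
        · exact s0 (b, 3)
        · have h1 : ReflTransGen R (b, 0) (C.σ (C.α b), 2) := .single (Or.inr ⟨rfl, fun i t => by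
            refine ⟨fun h => ?_, fun h => ?_⟩
            · rcases F.sc_cases i t (Or.inl h) with ⟨-, i, t, h | h⟩ | h
              · exact (hs i t).1 h
              · exact (hs i t).2 h
              · simp at h
            · rcases F.sc_cases i t (Or.inr h) with ⟨-, i, t, h | h⟩ | h
              · exact (hs i t).1 h
              · exact (hs i t).2 h
              · simp at h⟩)
          have h2 : ReflTransGen R (C.σ (C.α b), 3) (C.α b, 3) := by
            have := (s0 (C.σ (C.α b), 3)).trans (s0 (C.σ (C.σ (C.α b)), 3))
            simpa using this
          exact (((from3 b 0).trans h1).trans (to3 _ _)).trans h2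
    rintro ⟨d, i⟩ ⟨e, j⟩
    exact ((to3 d i).trans (main d e)).trans (from3 e j)

lemma sub_full : F.sub.Full := by
  have hM : ∀ d, F.sub.GV (C.M d) → F.G d := by
    rintro d ⟨i, t, h⟩
    change C.M d = C.sp (F.sc i t) at h
    obtain ⟨t, rfl | rfl⟩ := Nat.even_or_odd' t
    · rw [sc0] at h; exact absurd h (C.M_ne_p _ _)
    · rw [sc1] at h
      simp only [sp2, σ3] at h
      rcases C.M_eq.1 h with h | h
      · exact ⟨i, t, Or.inl h.symm⟩
      · exact ⟨i, t, Or.inr (by rw [h, C.α2])⟩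
  have hG0 : ∀ d, F.G d → F.sub.G (d, 0) := by
    rintro d ⟨i, t, rfl | rfl⟩
    · exact ⟨i, 2 * t, Or.inl (F.sc0 i t).symm⟩
    · refine ⟨i, 2 * t + 1, Or.inr ?_⟩
      change _ = C.sα (F.sc i _)
      rw [sc1]; simp
  have hG2 : ∀ d, F.G (C.σ (C.σ d)) → F.sub.G (d, 2) := by
    rintro d h
    have := F.sub.G_α (hG0 _ (F.G_α h))
    have e : C.sub.α ((C.α (C.σ (C.σ d)), 0) : C.D × Fin 4) = ((d, 2) : C.D × Fin 4) := by
      have : C.sα (C.α (C.σ (C.σ d)), 0) = (d, 2) := by simp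
      exact this
    rwa [e] at this
  have h13 : ∀ d, F.sub.GV (C.M d) → F.sub.GV (C.M (C.σ (C.σ d))) → False := by
    intro d h1 h2
    have := F.f2 (hM _ h2)
    rw [C.σ3] at this
    exact this (hM _ h1)
  rintro ⟨d, j⟩ h1 h2
  change F.sub.GV (C.sp _) at h1
  change F.sub.GV (C.sp (C.sσ _)) at h2
  fin_cases j
  · exact hG0 _ (hM _ h2)
  · exact (h13 d h1 h2).elim
  · exact hG2 _ (hM _ h1)
  · refine (h13 d ?_ h1).elim
    simpa using h2

end Fam
end Cx

open Relation

namespace Cx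
variable (C : Cx n)

/-- walks with darts in `A`, recording the `ψ`-sum and the length -/
inductive Wk (A : C.D → Prop) (ψ : C.D → ℝ) : Pt n → Pt n → ℝ → ℕ → Prop
  | nil (x : Pt n) : Wk A ψ x x 0 0
  | cons (d : C.D) {y : Pt n} {s : ℝ} {k : ℕ} : A d → Wk A ψ (C.p (C.σ d)) y s k →
      Wk A ψ (C.p d) y (ψ d + s) (k + 1)

variable {C} {A : C.D → Prop} {ψ : C.D → ℝ}

lemma Wk.trans {x y z : Pt n} {s t : ℝ} {k l : ℕ} (h : C.Wk A ψ x y s k) (h' : C.Wk A ψ y z t l) :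
    C.Wk A ψ x z (s + t) (k + l) := by
  induction h with
  | nil x => simpa using h'
  | cons d hd _ ih =>
    have := Wk.cons d hd (ih h')
    rwa [← add_assoc, Nat.add_right_comm] at this

lemma Wk.symm (hA : ∀ d, A d → A (C.α d)) (hψ : ∀ d, ψ (C.α d) = - ψ d) {x y : Pt n} {s : ℝ} {k : ℕ}
    (h : C.Wk A ψ x y s k) : C.Wk A ψ y x (-s) k := by
  induction h with
  | nil x => simpa using Wk.nil x
  | cons d hd _ ih =>
    have h1 := Wk.cons (ψ := ψ) (C.α d) (hA d hd) (Wk.nil _)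
    rw [C.pα, C.pσα, hψ] at h1
    have := ih.trans h1
    rwa [add_zero, ← neg_add_rev] at this

/-- exactness -/
lemma exact_of_closed (hA : ∀ d, A d → A (C.α d)) (hψ : ∀ d, ψ (C.α d) = - ψ d)
    (h0 : ∀ x s k, C.Wk A ψ x x s k → s = 0) :
    ∃ h : Pt n → ℝ, ∀ d, A d → h (C.p (C.σ d)) - h (C.p d) = ψ d := by
  classical
  let S : Setoid (Pt n) :=
    ⟨fun x y => ∃ s k, C.Wk A ψ x y s k, fun x => ⟨0, 0, Wk.nil x⟩,
      fun ⟨s, k, h⟩ => ⟨-s, k, h.symm hA hψ⟩, fun ⟨s, k, h⟩ ⟨t, l, h'⟩ => ⟨s + t, k + l, h.trans h'⟩⟩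
  let r : Pt n → Pt n := fun x => (Quotient.mk S x).out
  have hr : ∀ x, ∃ s k, C.Wk A ψ (r x) x s k := fun x => Quotient.mk_out (s := S) x
  choose h k hk using hr
  refine ⟨h, fun d hd => ?_⟩
  have w1 := Wk.cons (ψ := ψ) d hd (Wk.nil _)
  have e : r (C.p d) = r (C.p (C.σ d)) :=
    congrArg Quotient.out (Quotient.sound (s := S) ⟨_, _, w1⟩)
  have w2 := ((hk (C.p d)).trans w1).trans ((hk (C.p (C.σ d))).symm hA hψ)
  rw [e] at w2
  have := h0 _ _ _ w2
  linarith

lemma Wk.fn {x y : Pt n} {s : ℝ} {k : ℕ} (h : C.Wk A ψ x y s k) :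
    ∃ (c : ℕ → C.D) (v : ℕ → Pt n), v 0 = x ∧ v k = y ∧ s = ∑ t ∈ Finset.range k, ψ (c t) ∧
      ∀ t < k, A (c t) ∧ C.p (c t) = v t ∧ C.p (C.σ (c t)) = v (t + 1) := by
  induction h with
  | nil x => exact ⟨fun _ => C.ne.some, fun _ => x, rfl, rfl, by simp, by simp⟩
  | cons d hd _ ih =>
    obtain ⟨c, v, h1, h2, h3, h4⟩ := ih
    refine ⟨fun t => Nat.casesOn t d c, fun t => Nat.casesOn t (C.p d) v, rfl, h2, ?_, ?_⟩
    · rw [Finset.sum_range_succ', h3, add_comm]; rfl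
    · intro t ht
      cases t with
      | zero => exact ⟨hd, rfl, h1.symm⟩
      | succ t => exact h4 t (by omega)

/-- walk of a chain -/
lemma Wk.of_fn {c : ℕ → C.D} (hA : ∀ t, A (c t)) (hn : ∀ t, C.p (C.σ (c t)) = C.p (c (t + 1)))
    (j i : ℕ) : C.Wk A ψ (C.p (c i)) (C.p (c (i + j))) (∑ u ∈ Finset.range j, ψ (c (i + u))) j := by
  induction j with
  | zero => simpa using Wk.nil (C.p (c i))
  | succ j ih =>
    have := ih.trans (Wk.cons (ψ := ψ) (c (i + j)) (hA _) (Wk.nil _))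
    rw [hn, add_zero, zero_add] at this
    rwa [Finset.sum_range_succ]

lemma sum_per {f : ℕ → ℝ} {k : ℕ} (hf : ∀ t, f (t + k) = f t) (i : ℕ) :
    ∑ u ∈ Finset.range k, f (i + u) = ∑ u ∈ Finset.range k, f u := by
  induction i with
  | zero => simp
  | succ i ih =>
    rw [← ih]
    have h1 := Finset.sum_range_succ (fun u => f (i + u)) k
    have h2 := Finset.sum_range_succ' (fun u => f (i + u)) k
    rw [h1] at h2
    simp only [hf, add_zero] at h2
    have h3 : ∀ u, i + 1 + u = i + (u + 1) := fun u => by ring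
    simp only [h3]
    linarith

/-- closed walk with nonzero sum gives a simple cycle with nonzero sum -/
lemma exists_cycle (hα : ∀ d, ψ (C.α d) = - ψ d)
    (hZ : ∀ d, ψ d + ψ (C.σ d) + ψ (C.σ (C.σ d)) = 0) {V : Pt n → Prop}
    (hw : ∃ x s k, C.Wk (fun d => V (C.p d) ∧ V (C.p (C.σ d))) ψ x x s k ∧ s ≠ 0) :
    ∃ (c : ℕ → C.D) (k : ℕ), 3 ≤ k ∧ (∀ t, c (t + k) = c t) ∧
      (∀ t, C.p (C.σ (c t)) = C.p (c (t + 1))) ∧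
      (∀ s t, C.p (c s) = C.p (c t) → s % k = t % k) ∧ (∀ t, c (t + 1) ≠ C.σ (c t)) ∧
      (∀ t, C.σ (C.α (c (t + 1))) ≠ C.α (c t)) ∧ (∀ t, V (C.p (c t))) ∧
      ∑ t ∈ Finset.range k, ψ (c t) ≠ 0 := by
  classical
  set A : C.D → Prop := fun d => V (C.p d) ∧ V (C.p (C.σ d)) with hA
  have hex : ∃ k x s, C.Wk A ψ x x s k ∧ s ≠ 0 := by
    obtain ⟨x, s, k, h⟩ := hw; exact ⟨k, x, s, h⟩
  obtain ⟨x, s, hW, hs⟩ := Nat.find_spec hex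
  have hmin : ∀ l x s, C.Wk A ψ x x s l → l < Nat.find hex → s = 0 := by
    intro l x s h1 h2
    by_contra h3
    exact Nat.find_min hex h2 ⟨x, s, h1, h3⟩
  generalize Nat.find hex = k at hW hmin
  obtain ⟨c0, v, h1, h2, h3, h4⟩ := hW.fn
  have hk0 : 0 < k := by
    rcases Nat.eq_zero_or_pos k with rfl | h
    · simp at h3; exact absurd h3 hs
    · exact h
  let c : ℕ → C.D := fun t => c0 (t % k)
  have hper : ∀ t, c (t + k) = c t := fun t => by simp [c]
  have hn : ∀ t, C.p (C.σ (c t)) = C.p (c (t + 1)) := by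
    intro t
    have hlt := Nat.mod_lt t hk0
    have hlt' := Nat.mod_lt (t + 1) hk0
    simp only [c]
    rw [(h4 _ hlt).2.2, (h4 _ hlt').2.1]
    by_cases he : t % k + 1 = k
    · have : (t + 1) % k = 0 := by rw [← Nat.mod_add_mod, he, Nat.mod_self]
      rw [he, this, h1, h2]
    · have : (t + 1) % k = t % k + 1 := by
        rw [← Nat.mod_eq_of_lt (show t % k + 1 < k by omega)]; simp
      rw [this]
  have hAc : ∀ t, A (c t) := fun t => (h4 _ (Nat.mod_lt t hk0)).1
  have hsum : ∀ i, ∑ u ∈ Finset.range k, ψ (c (i + u)) = s := by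
    intro i
    rw [sum_per (f := fun t => ψ (c t)) (fun t => by simp only [hper]), h3]
    refine Finset.sum_congr rfl fun t ht => ?_
    simp only [c]; rw [Nat.mod_eq_of_lt (Finset.mem_range.1 ht)]
  have hW' := fun j i => Wk.of_fn (ψ := ψ) hAc hn j i
  have hk3 : 3 ≤ k := by
    by_contra hlt
    obtain rfl | rfl : k = 1 ∨ k = 2 := by omega
    · have := hn 0
      rw [hper] at this
      exact C.pσ_ne _ this
    · have e1 := hn 0
      have e2 := hn 1
      rw [hper 0] at e2
      have := C.dart_unique' (d := c 0) (e := c 1) e2.symm e1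
      have h5 := hsum 0
      simp [Finset.sum_range_succ, this, hα] at h5
      exact hs h5.symm
  have hshort : ∀ t e, A e → C.p e = C.p (c t) → C.p (C.σ e) = C.p (c (t + 2)) →
      ψ e = ψ (c t) + ψ (c (t + 1)) → False := by
    intro t e hAe he1 he2 he3
    have hw1 := hW' (k - 2) (t + 2)
    rw [show t + 2 + (k - 2) = t + k by omega, hper, ← he1, ← he2] at hw1
    have hw2 := hmin _ _ _ (Wk.cons e hAe hw1) (by omega)
    have h5 := hsum t
    obtain ⟨l, rfl⟩ : ∃ l, k = l + 2 := ⟨k - 2, by omega⟩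
    rw [Finset.sum_range_succ', Finset.sum_range_succ'] at h5
    have h6 : ∑ u ∈ Finset.range l, ψ (c (t + (u + 1 + 1))) = ∑ u ∈ Finset.range l, ψ (c (t + 2 + u)) :=
      Finset.sum_congr rfl fun u _ => by rw [show t + (u + 1 + 1) = t + 2 + u by ring]
    rw [h6] at h5
    simp only [Nat.add_sub_cancel, zero_add, add_zero] at hw2 h5
    apply hs
    rw [← h5]; linarith
  refine ⟨c, k, hk3, hper, hn, ?_, ?_, ?_, fun t => (hAc t).1, ?_⟩
  · have key : ∀ i j, i < j → j < k → C.p (c i) ≠ C.p (c j) := by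
      intro i j hij hjk he
      have w1 := hW' (j - i) i
      rw [show i + (j - i) = j by omega, ← he] at w1
      have w2 := hW' (k - (j - i)) j
      rw [show j + (k - (j - i)) = i + k by omega, hper, ← he] at w2
      have e1 := hmin _ _ _ w1 (by omega)
      have e2 := hmin _ _ _ w2 (by omega)
      have h5 := hsum i
      obtain ⟨a, rfl⟩ : ∃ a, j = i + a := ⟨j - i, by omega⟩
      obtain ⟨b, rfl⟩ : ∃ b, k = a + b := ⟨k - a, by omega⟩
      rw [Finset.sum_range_add] at h5
      simp only [Nat.add_sub_cancel_left] at e1 e2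
      simp only [← add_assoc, e1, e2] at h5
      apply hs
      rw [← h5]; simp
    have cm : ∀ t, c (t % k) = c t := fun t => by simp [c]
    intro i j h
    rw [← cm i, ← cm j] at h
    rcases lt_trichotomy (i % k) (j % k) with hlt | heq | hlt
    · exact absurd h (key _ _ hlt (Nat.mod_lt _ hk0))
    · exact heq
    · exact absurd h.symm (key _ _ hlt (Nat.mod_lt _ hk0))
  · intro t ht
    have e2 : C.p (C.σ (C.σ (c t))) = C.p (c (t + 2)) := by rw [← ht, hn]
    refine hshort t (C.α (C.σ (C.σ (c t)))) ?_ (by simp) (by rw [C.pσα, e2]) ?_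
    · simp only [hA, C.pα, C.pσα, C.σ3, e2]; exact ⟨(hAc t).1, (hAc _).1⟩
    · rw [hα, ht]; linarith [hZ (c t)]
  · intro t ht
    set f := C.α (c (t + 1)) with hf
    have e1 : C.p (C.σ (C.σ f)) = C.p (c t) := by rw [ht, C.pσα]
    have e2 : C.p f = C.p (c (t + 2)) := by rw [hf, C.pα, hn]
    refine hshort t (C.σ (C.σ f)) ?_ e1 (by rw [C.σ3, e2]) ?_
    · simp only [hA, C.σ3, e1, e2]; exact ⟨(hAc t).1, (hAc _).1⟩
    · have h5 := hZ f
      have h6 : ψ f = - ψ (c (t + 1)) := hα _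
      have h7 : ψ (C.σ f) = - ψ (c t) := by rw [ht, hα]
      linarith
  · have := hsum 0
    simp only [zero_add] at this
    rwa [this]

end Cx

open Relation

namespace Cx
variable {C : Cx n}

lemma arc_const {D : Type*} (ρ : Equiv.Perm D) [Finite D] {o ι : D} (f : D → ℝ) (hs : ρ.SameCycle o ι) (h1 : o ≠ ι)
    (h2 : ρ o ≠ ι) (hf : ∀ e, ρ.SameCycle o e → e ≠ o → e ≠ ι → ρ e ≠ o → ρ e ≠ ι → f (ρ e) = f e)
    {e : D} (he : ρ e = ι) : f e = f (ρ o) := by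
  classical
  have hex : ∃ j : ℕ, (ρ ^ j) o = ι := hs.exists_nat_pow_eq
  have hj := Nat.find_spec hex
  have hmin : ∀ i < Nat.find hex, (ρ ^ i) o ≠ ι := fun i hi => Nat.find_min hex hi
  generalize Nat.find hex = j at hj hmin
  have hne : ∀ i, 1 ≤ i → i < j → (ρ ^ i) o ≠ o := by
    intro i hi hij h
    apply hmin (j - i) (by omega)
    rw [← hj]
    conv_rhs => rw [show j = (j - i) + i by omega, pow_add, Equiv.Perm.mul_apply, h]
  have key : ∀ i, i + 1 < j → f ((ρ ^ (i + 1)) o) = f (ρ o) := by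
    intro i
    induction i with
    | zero => intro _; simp
    | succ i ih =>
      intro hi
      rw [← ih (by omega), pow_succ' ρ (i + 1), Equiv.Perm.mul_apply]
      have e1 : ρ ((ρ ^ (i + 1)) o) = (ρ ^ (i + 1 + 1)) o := by
        rw [pow_succ' ρ (i + 1), Equiv.Perm.mul_apply]
      refine hf _ ⟨i + 1, by exact_mod_cast rfl⟩ (hne _ (by omega) (by omega)) (hmin _ (by omega)) ?_ ?_
      · rw [e1]; exact hne _ (by omega) (by omega)
      · rw [e1]; exact hmin _ (by omega)
  obtain ⟨l, rfl⟩ : ∃ l, j = l + 2 := by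
    rcases j with _ | _ | l
    · exact absurd (by simpa using hj) h1
    · exact absurd (by simpa using hj) h2
    · exact ⟨l, rfl⟩
  have : e = (ρ ^ (l + 1)) o := by
    apply ρ.injective
    rw [he, ← hj, pow_succ' ρ (l + 1), Equiv.Perm.mul_apply]
  rw [this]; exact key l (by omega)

lemma arc_zero {D : Type*} (ρ : Equiv.Perm D) [Finite D] {o ι : D} (f : D → ℝ)
    (ho : f (ρ o) = 0) (hi : f (ρ ι) = 0)
    (hf : ∀ e, ρ.SameCycle o e → e ≠ o → e ≠ ι → ρ e ≠ o → ρ e ≠ ι → f (ρ e) = f e)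
    {e : D} (he : ρ.SameCycle o e) : e = o ∨ e = ι ∨ f e = 0 := by
  obtain ⟨j, rfl⟩ := he.exists_nat_pow_eq
  clear he
  induction j with
  | zero => simp
  | succ j ih =>
    rw [pow_succ' ρ j, Equiv.Perm.mul_apply]
    by_cases h1 : (ρ ^ j) o = o
    · rw [h1]; tauto
    by_cases h2 : (ρ ^ j) o = ι
    · rw [h2]; tauto
    by_cases h3 : ρ ((ρ ^ j) o) = o
    · tauto
    by_cases h4 : ρ ((ρ ^ j) o) = ι
    · tauto
    right; right
    rw [hf _ ⟨j, by simp⟩ h1 h2 h3 h4]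
    tauto

namespace Fam
variable {m : ℕ} (F : C.Fam m)

/-- darts off the cycles -/
def A (d : C.D) : Prop := ¬ F.GV (C.p d) ∧ ¬ F.GV (C.p (C.σ d))

lemma A_α (d : C.D) (h : F.A d) : F.A (C.α d) := by
  simp only [A, C.pα, C.pσα] at *; tauto

lemma G_vert {i : Fin m} {t : ℕ} {e : C.D} (he : C.p e = C.p (F.c i (t + 1))) (hG : F.G e) :
    e = F.c i (t + 1) ∨ e = C.α (F.c i t) := by
  obtain ⟨j, s, rfl | rfl⟩ := hG
  · exact Or.inl (F.same he)
  · rw [C.pα, F.nxt] at he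
    exact Or.inr (by rw [F.same_prev he])

lemma glue (g : Fin m → ℕ → ℝ) (hg : ∀ i s t, s % F.k i = t % F.k i → g i s = g i t) (h2 : Pt n → ℝ) :
    ∃ h : Pt n → ℝ, (∀ i t, h (C.p (F.c i t)) = g i t) ∧ ∀ x, ¬ F.GV x → h x = h2 x := by
  classical
  refine ⟨fun x => if hx : F.GV x then g hx.choose hx.choose_spec.choose else h2 x, ?_, ?_⟩
  · intro i t
    have hx : F.GV (C.p (F.c i t)) := ⟨i, t, rfl⟩
    simp only [hx, dif_pos]
    have h1 := hx.choose_spec.choose_spec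
    generalize hx.choose_spec.choose = s at *
    generalize hx.choose = j at *
    obtain ⟨rfl, h2⟩ := F.inj _ _ _ _ h1
    exact hg _ _ _ h2.symm
  · intro x hx; simp [hx]

/-- normalised cocycles -/
def X0 : Submodule ℝ (C.D → ℝ) where
  carrier := {ψ | ψ ∈ C.Z ∧ (∀ d, F.G d → ψ d = 0) ∧ (∀ d, F.A d → ψ d = 0) ∧
    ∀ i, ψ (C.ρ (C.α (F.c i 0))) = 0}
  add_mem' := by
    rintro a b ⟨h1, h2, h3, h4⟩ ⟨h1', h2', h3', h4'⟩
    exact ⟨add_mem h1 h1', fun d hd => by simp [h2 d hd, h2' d hd], fun d hd => by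
      simp [h3 d hd, h3' d hd], fun i => by simp [h4 i, h4' i]⟩
  zero_mem' := ⟨zero_mem _, by simp, by simp, by simp⟩
  smul_mem' := by
    rintro c b ⟨h1, h2, h3, h4⟩
    exact ⟨C.Z.smul_mem c h1, fun d hd => by simp [h2 d hd], fun d hd => by
      simp [h3 d hd], fun i => by simp [h4 i]⟩

lemma ρ_c_ne (i : Fin m) (t : ℕ) : C.ρ (F.c i (t + 1)) ≠ C.α (F.c i t) := by
  rw [ρ_def]
  intro h
  have := congrArg (fun e => C.σ (C.α e)) h
  simp at this
  exact F.fa i t this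

lemma ρ_α_ne (i : Fin m) (t : ℕ) : C.ρ (C.α (F.c i t)) ≠ F.c i (t + 1) := by
  rw [ρ_def]
  intro h
  have := congrArg (fun e => C.σ (C.α e)) h
  simp at this
  exact F.fb i t this.symm

lemma step_const (hF : F.Full) {ψ : C.D → ℝ} (hψ : ψ ∈ F.X0) (i : Fin m) (t : ℕ) {o ι : C.D}
    (h : (o = F.c i (t + 1) ∧ ι = C.α (F.c i t)) ∨ (ι = F.c i (t + 1) ∧ o = C.α (F.c i t)))
    (e : C.D) (he : C.ρ.SameCycle o e) (h1 : e ≠ o) (h2 : e ≠ ι) (h3 : C.ρ e ≠ o) (h4 : C.ρ e ≠ ι) :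
    ψ (C.ρ e) = ψ e := by
  have hpo : C.p o = C.p (F.c i (t + 1)) := by
    rcases h with ⟨rfl, -⟩ | ⟨-, rfl⟩
    · rfl
    · rw [C.pα, F.nxt]
  have hpe : C.p e = C.p (F.c i (t + 1)) := by
    obtain ⟨j, rfl⟩ := he.exists_nat_pow_eq
    rw [← hpo]
    clear he h1 h2 h3 h4
    induction j with
    | zero => rfl
    | succ j ih => rw [pow_succ', Equiv.Perm.mul_apply, C.pρ, ih]
  have hG : ∀ e, C.p e = C.p (F.c i (t + 1)) → e ≠ o → e ≠ ι → ¬ F.G e := by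
    intro e h1 h2 h3 h4
    have := F.G_vert h1 h4
    rcases h with ⟨rfl, rfl⟩ | ⟨rfl, rfl⟩ <;> tauto
  have hG1 := hG e hpe h1 h2
  have hG2 := hG (C.ρ e) (by rw [C.pρ, hpe]) h3 h4
  have hv : F.GV (C.p e) := ⟨i, t + 1, hpe⟩
  have hA : F.A (C.σ e) := by
    refine ⟨fun h => hG1 (hF _ hv h), fun h => hG2 (hF _ (by rwa [C.pρ]) ?_)⟩
    rw [ρ_def, C.pσα]; exact h
  obtain ⟨hZ, -, hz, -⟩ := hψ
  have e1 := (C.mem_Z.1 hZ).2 e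
  rw [ρ_def, (C.mem_Z.1 hZ).1, ]
  rw [hz _ hA] at e1
  linarith

lemma X0_inj (hF : F.Full) {ψ : C.D → ℝ} (hψ : ψ ∈ F.X0) (h0 : ∀ i, ψ (C.ρ (F.c i 0)) = 0) : ψ = 0 := by
  obtain ⟨hZ, hG, hA, hR⟩ := id hψ
  obtain ⟨hα, hf⟩ := C.mem_Z.1 hZ
  have hsame : ∀ i t, C.ρ.SameCycle (F.c i (t + 1)) (C.α (F.c i t)) := fun i t =>
    C.sameCycle_of_p (by rw [C.pα, F.nxt])
  have hsucc : ∀ d, F.G d → ψ (C.σ d) = ψ (C.ρ d) := by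
    intro d hd
    have := hf d
    rw [hG d hd] at this
    rw [ρ_def, hα]; linarith
  have hL : ∀ i t, ψ (C.ρ (F.c i t)) = 0 := by
    intro i t
    induction t with
    | zero => exact h0 i
    | succ t ih =>
      rw [← ih, ← hsucc _ ⟨i, t, Or.inl rfl⟩]
      refine (arc_const C.ρ ψ (hsame i t) (F.c_ne_α _ _ _ _) (F.ρ_c_ne i t)
        (F.step_const hF hψ i t (Or.inl ⟨rfl, rfl⟩)) ?_).symm
      simp [ρ_def]
  have hR' : ∀ i t, ψ (C.ρ (C.α (F.c i t))) = 0 := by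
    intro i t
    induction t with
    | zero => exact hR i
    | succ t ih =>
      rw [← ih, ← hsucc _ ⟨i, t + 1, Or.inr rfl⟩]
      refine (arc_const C.ρ ψ (hsame i t).symm (F.c_ne_α _ _ _ _).symm (F.ρ_α_ne i t)
        (F.step_const hF hψ i t (Or.inr ⟨rfl, rfl⟩)) ?_)
      simp [ρ_def]
  have hv : ∀ d, F.GV (C.p d) → ψ d = 0 := by
    rintro d ⟨i, t, ht⟩
    obtain ⟨s, hs⟩ : ∃ s, F.c i t = F.c i (s + 1) := by
      refine ⟨t + (F.k i - 1), ?_⟩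
      have := F.k3 i
      rw [show t + (F.k i - 1) + 1 = t + F.k i by omega, F.per]
    rw [hs] at ht
    rcases arc_zero C.ρ ψ (hL i (s + 1)) (hR' i s) (F.step_const hF hψ i s (Or.inl ⟨rfl, rfl⟩))
      (C.sameCycle_of_p ht.symm) with h | h | h
    · exact hG _ ⟨i, s + 1, Or.inl h⟩
    · exact hG _ ⟨i, s, Or.inr h⟩
    · exact h
  ext d
  by_cases h1 : F.GV (C.p d)
  · exact hv d h1
  by_cases h2 : F.GV (C.p (C.σ d))
  · have := hv (C.α d) (by rwa [C.pα])
    rw [hα] at this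
    simpa using this
  · exact hA d ⟨h1, h2⟩

lemma rank (hF : F.Full) (hc : C.Conn)
    (H : ∀ ψ ∈ C.Z, (∀ d, F.G d → ψ d = 0) → ∀ x s k, C.Wk F.A ψ x x s k → s = 0) :
    C.N ≤ 12 * (m : ℤ) := by
  let P : C.Z →ₗ[ℝ] (Fin m → ℝ) :=
    { toFun := fun ψ i => ∑ t ∈ Finset.range (F.k i), ψ.1 (F.c i t)
      map_add' := by intro a b; ext i; simp [Finset.sum_add_distrib]
      map_smul' := by intro a b; ext i; simp [Finset.mul_sum] }
  let L : F.X0 →ₗ[ℝ] (Fin m → ℝ) :=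
    { toFun := fun ψ i => ψ.1 (C.ρ (F.c i 0))
      map_add' := by intro a b; ext i; simp
      map_smul' := by intro a b; ext i; simp }
  have hL : Function.Injective L := by
    rw [← LinearMap.ker_eq_bot, LinearMap.ker_eq_bot']
    intro ψ h
    exact Subtype.ext (F.X0_inj hF ψ.2 fun i => congrFun h i)
  have r1 : Module.finrank ℝ F.X0 ≤ m := by
    simpa using LinearMap.finrank_le_finrank_of_injective hL
  have r2 : Module.finrank ℝ C.Z ≤ m + Module.finrank ℝ (LinearMap.ker P) := by
    rw [← P.finrank_range_add_finrank_ker]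
    have := (LinearMap.range P).finrank_le
    simp only [Module.finrank_fintype_fun_eq_card, Fintype.card_fin] at this
    omega
  have r3 : (LinearMap.ker P).map C.Z.subtype ≤ F.X0 ⊔ C.B := by
    rintro _ ⟨⟨ψ, hψ⟩, hk, rfl⟩
    have hk' : ∀ i, ∑ t ∈ Finset.range (F.k i), ψ (F.c i t) = 0 := fun i => congrFun hk i
    obtain ⟨h0, h01, -⟩ := F.glue (fun i t => ∑ u ∈ Finset.range (t % F.k i), ψ (F.c i u))
      (fun i s t h => by simp only [h]) 0
    have hZ1 : ψ - C.δ h0 ∈ C.Z := sub_mem hψ (C.B_le_Z ⟨h0, rfl⟩)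
    have hG1 : ∀ d, F.G d → (ψ - C.δ h0) d = 0 := by
      have key : ∀ i t, (ψ - C.δ h0) (F.c i t) = 0 := by
        intro i t
        have hk3 := F.k3 i
        have hlt := Nat.mod_lt t (show 0 < F.k i by omega)
        rw [Pi.sub_apply, δ_apply, F.nxt, h01, h01, ← F.c_mod i t]
        by_cases he : t % F.k i + 1 = F.k i
        · have : (t + 1) % F.k i = 0 := by rw [← Nat.mod_add_mod, he, Nat.mod_self]
          have h5 := hk' i
          rw [← he, Finset.sum_range_succ] at h5
          rw [this]; simp only [Finset.range_zero, Finset.sum_empty]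
          linarith
        · have : (t + 1) % F.k i = t % F.k i + 1 := by
            rw [← Nat.mod_eq_of_lt (show t % F.k i + 1 < F.k i by omega)]; simp
          rw [this, Finset.sum_range_succ]; ring
      rintro d ⟨i, t, rfl | rfl⟩
      · exact key i t
      · rw [(C.mem_Z.1 hZ1).1, key, neg_zero]
    generalize hψ1 : ψ - C.δ h0 = ψ1 at hZ1 hG1
    obtain ⟨h2, hh2⟩ := exact_of_closed F.A_α (C.mem_Z.1 hZ1).1 (H ψ1 hZ1 hG1)
    obtain ⟨h3, h31, h32⟩ := F.glue (fun i _ => h2 (C.p (C.σ (C.ρ (C.α (F.c i 0))))) -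
      ψ1 (C.ρ (C.α (F.c i 0)))) (fun i s t h => rfl) h2
    have hX : ψ1 - C.δ h3 ∈ F.X0 := by
      have hZ2 : ψ1 - C.δ h3 ∈ C.Z := sub_mem hZ1 (C.B_le_Z ⟨h3, rfl⟩)
      refine ⟨hZ2, ?_, ?_, ?_⟩
      · have key : ∀ i t, (ψ1 - C.δ h3) (F.c i t) = 0 := by
          intro i t
          rw [Pi.sub_apply, δ_apply, F.nxt, h31, h31, hG1 _ ⟨i, t, Or.inl rfl⟩]; simp
        rintro d ⟨i, t, rfl | rfl⟩
        · exact key i t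
        · rw [(C.mem_Z.1 hZ2).1, key, neg_zero]
      · intro d hd
        rw [Pi.sub_apply, δ_apply, h32 _ hd.1, h32 _ hd.2, hh2 d hd, sub_self]
      · intro i
        have e1 : C.p (C.ρ (C.α (F.c i 0))) = C.p (F.c i 1) := by rw [C.pρ, C.pα, F.nxt]
        have hn : ¬ F.GV (C.p (C.σ (C.ρ (C.α (F.c i 0))))) := by
          intro h
          have h5 := hF _ ⟨i, 1, e1⟩ h
          rcases F.G_vert (t := 0) e1 h5 with h6 | h6
          · exact F.ρ_α_ne i 0 h6
          · rw [ρ_def] at h6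
            have h7 := congrArg (fun e => C.p (C.α e)) h6
            simp only [C.α2] at h7
            rw [← C.pσα (F.c i 0)] at h7
            exact C.pσ_ne (C.σ (C.α (F.c i 0))) h7
        rw [Pi.sub_apply, δ_apply, h32 _ hn, e1, h31]; ring
    refine Submodule.mem_sup.2 ⟨_, hX, C.δ (h0 + h3), ⟨_, rfl⟩, ?_⟩
    rw [map_add, ← hψ1]; simp
  have r4 := Submodule.finrank_mono r3
  have r5 : Module.finrank ℝ ((LinearMap.ker P).map C.Z.subtype) = Module.finrank ℝ (LinearMap.ker P) :=
    Submodule.finrank_map_subtype_eq _ _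
  have r6 := Submodule.finrank_add_le_finrank_add_finrank F.X0 C.B
  have r7 := C.finrank_N hc
  omega

theorem extend (hF : F.Full) (hc : C.Conn) (hN : 12 * (m : ℤ) < C.N) : Nonempty (C.Fam (m + 1)) := by
  classical
  have hex : ∃ ψ ∈ C.Z, (∀ d, F.G d → ψ d = 0) ∧ ∃ x s k, C.Wk F.A ψ x x s k ∧ s ≠ 0 := by
    by_contra hcon
    push Not at hcon
    exact absurd (F.rank hF hc hcon) (not_le.2 hN)
  obtain ⟨ψ, hZ, hG, hw⟩ := hex
  obtain ⟨hα, hf⟩ := C.mem_Z.1 hZ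
  obtain ⟨c, k, hk3, hper, hnxt, hinj, hfa, hfb, hV, hsum⟩ :=
    exists_cycle (V := fun x => ¬ F.GV x) hα hf hw
  refine ⟨⟨Fin.cons c F.c, Fin.cons k F.k, ?_, ?_, ?_, ?_, ?_, ?_, ?_⟩⟩
  · intro i; cases i using Fin.cases with
    | zero => exact hk3
    | succ i => exact F.k3 i
  · intro i; cases i using Fin.cases with
    | zero => exact hper
    | succ i => exact F.per i
  · intro i; cases i using Fin.cases with
    | zero => exact hnxt
    | succ i => exact F.nxt i
  · intro i j s t
    cases i using Fin.cases with
    | zero =>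
      cases j using Fin.cases with
      | zero => exact fun h => ⟨rfl, hinj s t h⟩
      | succ j => exact fun h => absurd ⟨j, t, h⟩ (hV s)
    | succ i =>
      cases j using Fin.cases with
      | zero => exact fun h => absurd ⟨i, s, h.symm⟩ (hV t)
      | succ j =>
        intro h
        obtain ⟨h1, h2⟩ := F.inj i j s t h
        exact ⟨congrArg _ h1, h2⟩
  · intro i; cases i using Fin.cases with
    | zero => exact hfa
    | succ i => exact F.fa i
  · intro i; cases i using Fin.cases with
    | zero => exact hfb
    | succ i => exact F.fb i
  · set R : C.D → C.D → Prop := fun a b => b = C.σ a ∨ (b = C.α a ∧ ∀ (i : Fin (m + 1)) (t : ℕ),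
      a ≠ (Fin.cons c F.c : Fin (m + 1) → ℕ → C.D) i t ∧
      a ≠ C.α ((Fin.cons c F.c : Fin (m + 1) → ℕ → C.D) i t)) with hR
    have hR' : ∀ a, ¬ F.G a → (∀ t, a ≠ c t ∧ a ≠ C.α (c t)) → R a (C.α a) := by
      intro a h1 h2
      refine Or.inr ⟨rfl, fun i t => ?_⟩
      cases i using Fin.cases with
      | zero => exact h2 t
      | succ i => exact ⟨fun h => h1 ⟨i, t, Or.inl h⟩, fun h => h1 ⟨i, t, Or.inr h⟩⟩
    intro a
    let τ : C.D → ℝ := fun e => if ReflTransGen R a e then 1 else 0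
    have hσ' : ∀ e, ReflTransGen R a e → ReflTransGen R a (C.σ e) := fun e h => h.tail (Or.inl rfl)
    have hτσ : ∀ e, τ (C.σ e) = τ e := by
      intro e
      have : ReflTransGen R a (C.σ e) ↔ ReflTransGen R a e :=
        ⟨fun h => by have := hσ' _ (hσ' _ h); rwa [C.σ3] at this, hσ' e⟩
      simp only [τ, this]
    have hτα : ∀ e, ¬ F.G e → (∀ t, e ≠ c t ∧ e ≠ C.α (c t)) → τ (C.α e) = τ e := by
      intro e h1 h2
      have : ReflTransGen R a (C.α e) ↔ ReflTransGen R a e := by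
        refine ⟨fun h => ?_, fun h => h.tail (hR' e h1 h2)⟩
        have := h.tail (hR' (C.α e) (fun h => h1 (by have := F.G_α h; rwa [C.α2] at this)) fun t => ?_)
        · rwa [C.α2] at this
        · refine ⟨fun h => (h2 t).2 ?_, fun h => (h2 t).1 ?_⟩
          · rw [← h, C.α2]
          · rw [← C.α2 e, h, C.α2]
      simp only [τ, this]
    let z : C.D → ℝ := fun e => τ e - τ (C.α e)
    have hzα : ∀ e, z (C.α e) = - z e := fun e => by simp [z]
    have hz0 : ∀ e, ¬ F.G e → (∀ t, e ≠ c t ∧ e ≠ C.α (c t)) → z e = 0 := fun e h1 h2 => by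
      simp only [z, hτα e h1 h2, sub_self]
    -- orthogonality
    have horth : ∑ d, ψ d * z d = 0 := by
      have e1 : ∑ d, ψ d * τ (C.α d) = - ∑ d, ψ d * τ d := by
        rw [← C.sum_α, ← Finset.sum_neg_distrib]
        exact Finset.sum_congr rfl fun d _ => by rw [C.α2, hα]; ring
      have e2 : ∑ d, ψ (C.σ d) * τ d = ∑ d, ψ d * τ d := by
        rw [← C.sum_σ (fun d => ψ d * τ d)]
        exact Finset.sum_congr rfl fun d _ => by rw [hτσ]
      have e3 : ∑ d, ψ (C.σ (C.σ d)) * τ d = ∑ d, ψ d * τ d := by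
        rw [← e2, ← C.sum_σ (fun d => ψ (C.σ d) * τ d)]
        exact Finset.sum_congr rfl fun d _ => by rw [hτσ]
      have e4 : ∑ d, ψ d * τ d + ∑ d, ψ (C.σ d) * τ d + ∑ d, ψ (C.σ (C.σ d)) * τ d = 0 := by
        rw [← Finset.sum_add_distrib, ← Finset.sum_add_distrib]
        exact Finset.sum_eq_zero fun d _ => by rw [← add_mul, ← add_mul, hf, zero_mul]
      simp only [z, mul_sub, Finset.sum_sub_distrib, e1]
      linarith
    -- vertex sums
    have hvert : ∀ x, ∑ e with C.p e = x, z e = 0 := by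
      intro x
      simp only [z, Finset.sum_sub_distrib]
      rw [sub_eq_zero]
      refine Finset.sum_bij' (fun e _ => C.ρ e) (fun e _ => C.ρ.symm e) ?_ ?_ ?_ ?_ ?_
      · intro e he; simpa using he
      · intro e he
        have := C.pρ (C.ρ.symm e)
        rw [Equiv.apply_symm_apply] at this
        simp only [Finset.mem_filter, Finset.mem_univ, true_and] at he ⊢
        rw [← this, he]
      · intro e _; simp
      · intro e _; simp
      · intro e _; rw [ρ_def, C.α2, hτσ, hτσ]
    have hcα : ∀ s t, c s ≠ C.α (c t) := by
      intro s t h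
      have h1 : C.p (c s) = C.p (c (t + 1)) := by rw [h, C.pα, hnxt]
      have h2 : C.p (c (s + 1)) = C.p (c t) := by rw [← hnxt, h, C.pσα]
      have h3 : (s + 1) % k = (t + 2) % k := Nat.ModEq.add_right 1 (hinj _ _ h1)
      rw [hinj _ _ h2] at h3
      have h4 : 0 % k = 2 % k :=
        Nat.ModEq.add_left_cancel' t (show t + 0 ≡ t + 2 [MOD k] from h3)
      rw [Nat.mod_eq_of_lt (show 2 < k by omega), Nat.zero_mod] at h4
      omega
    have hcmod : ∀ t, c (t % k) = c t := fun t =>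
      (show Function.Periodic c k from hper).map_mod_nat t
    have hceq : ∀ s t, s % k = t % k → c s = c t := fun s t h => by rw [← hcmod, h, hcmod]
    have hzc : ∀ t, z (c (t + 1)) = z (c t) := by
      intro t
      have h1 := hvert (C.p (c (t + 1)))
      rw [← Finset.sum_subset (s₁ := {c (t + 1), C.α (c t)}), Finset.sum_pair (hcα _ _), hzα] at h1
      · linarith
      · intro e he
        simp only [Finset.mem_insert, Finset.mem_singleton] at he
        rcases he with rfl | rfl <;> simp [hnxt]
      · intro e he hne
        simp only [Finset.mem_filter, Finset.mem_univ, true_and, Finset.mem_insert,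
          Finset.mem_singleton, not_or] at he hne
        refine hz0 e (fun h => hV (t + 1) (he ▸ F.G_p h)) fun s => ⟨?_, ?_⟩
        · rintro rfl
          exact hne.1 (hceq _ _ (hinj _ _ he))
        · rintro rfl
          rw [C.pα, hnxt] at he
          exact hne.2 (by rw [hceq s t (Nat.ModEq.add_right_cancel' 1 (hinj _ _ he))])
    have hzc0 : ∀ t, z (c t) = z (c 0) := by
      intro t
      induction t with
      | zero => rfl
      | succ t ih => rw [hzc, ih]
    have hζ : z (c 0) = 0 := by
      let J := (Finset.range k).image c
      have hinjc : Set.InjOn c (Finset.range k : Set ℕ) := by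
        intro s hs t ht h
        simp only [Finset.coe_range, Set.mem_Iio] at hs ht
        have := hinj _ _ (congrArg C.p h)
        rwa [Nat.mod_eq_of_lt hs, Nat.mod_eq_of_lt ht] at this
      have hmemJ : ∀ t, c t ∈ J := fun t => Finset.mem_image.2
        ⟨t % k, Finset.mem_range.2 (Nat.mod_lt _ (by omega)), hcmod t⟩
      have hdis : Disjoint J (J.image C.α) := by
        rw [Finset.disjoint_left]
        intro e h1 h2
        simp only [J, Finset.mem_image] at h1 h2
        obtain ⟨s, -, rfl⟩ := h1
        obtain ⟨_, ⟨t, -, rfl⟩, h⟩ := h2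
        exact hcα s t h.symm
      have e1 : ∑ d ∈ J ∪ J.image C.α, ψ d * z d = ∑ d, ψ d * z d := by
        refine Finset.sum_subset (Finset.subset_univ _) fun e _ he => ?_
        by_cases hGe : F.G e
        · rw [hG e hGe, zero_mul]
        · rw [hz0 e hGe, mul_zero]
          intro t
          refine ⟨?_, ?_⟩
          · rintro rfl; exact he (Finset.mem_union_left _ (hmemJ t))
          · rintro rfl; exact he (Finset.mem_union_right _ (Finset.mem_image_of_mem _ (hmemJ t)))
      rw [Finset.sum_union hdis, Finset.sum_image (g := C.α) (fun x _ y _ h => C.αe.injective h), horth,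
        Finset.sum_image hinjc, Finset.sum_image hinjc] at e1
      simp only [hα, hzα, neg_mul_neg, hzc0, ← Finset.sum_mul] at e1
      have : (∑ t ∈ Finset.range k, ψ (c t)) * z (c 0) = 0 := by linarith
      exact (mul_eq_zero.1 this).resolve_left hsum
    have hτα' : ∀ e, ¬ F.G e → τ (C.α e) = τ e := by
      intro e he
      by_cases h : ∀ t, e ≠ c t ∧ e ≠ C.α (c t)
      · exact hτα e he h
      · push Not at h
        obtain ⟨t, ht⟩ := h
        have h0 : τ (c t) - τ (C.α (c t)) = 0 := (hzc0 t).trans hζ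
        by_cases h1 : e = c t
        · rw [h1]; linarith
        · rw [ht h1, C.α2]; linarith
    have hall : ∀ e, τ e = τ a := by
      intro e
      induction F.dual a e with
      | refl => rfl
      | @tail b d _ hs ih =>
        rw [← ih]
        rcases hs with rfl | ⟨rfl, hs⟩
        · exact hτσ b
        · exact hτα' b (by rintro ⟨i, t, h | h⟩; exacts [(hs i t).1 h, (hs i t).2 h])
    intro e
    have h1 := hall e
    have h2 : τ a = 1 := if_pos .refl
    by_contra hne
    have h3 : τ e = 0 := if_neg hne
    rw [h2, h3] at h1
    norm_num at h1

end Fam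

/-- combinatorial lower bound -/
theorem exists_fam (C : Cx n) (hS : IsPreconnected C.S) : ∃ (C' : Cx n) (m : ℕ), C'.S = C.S ∧
    C'.N = C.N ∧ C.N ≤ 12 * (m : ℤ) ∧ Nonempty (C'.Fam m) := by
  by_contra hcon
  push Not at hcon
  have key : ∀ m : ℕ, ∃ C' : Cx n, C'.S = C.S ∧ C'.N = C.N ∧ Nonempty (C'.Fam m) := by
    intro m
    induction m with
    | zero =>
      refine ⟨C, rfl, rfl, ⟨⟨fun i => i.elim0, fun i => i.elim0, fun i => i.elim0, fun i => i.elim0,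
        fun i => i.elim0, fun i => i.elim0, fun i => i.elim0, fun i => i.elim0, fun d e => ?_⟩⟩⟩
      refine ReflTransGen.mono ?_ _ _ (C.conn_of hS d e)
      rintro a b (h | h)
      · exact Or.inl h
      · exact Or.inr ⟨h, fun i => i.elim0⟩
    | succ m ih =>
      obtain ⟨C', h1, h2, ⟨F⟩⟩ := ih
      have h3 : 12 * (m : ℤ) < C.N := by
        by_contra h
        exact (hcon C' m h1 h2 (not_lt.1 h)).elim' F
      refine ⟨C'.sub, by rw [sub_S, h1], by rw [sub_N, h2], F.sub.extend F.sub_full (conn_of _ ?_) ?_⟩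
      · rw [sub_S, h1]; exact hS
      · rwa [sub_N, h2]
  obtain ⟨C', h1, h2, ⟨F⟩⟩ := key C.N.toNat
  refine (hcon C' C.N.toNat h1 h2 ?_).elim' F
  omega

end Cx

open Relation

namespace Cx
variable {C : Cx n}
namespace Fam
variable {m : ℕ} (F : C.Fam m)

/-- point on a cycle -/
noncomputable def pt (i : Fin m) (t : ℕ) (a : ℝ) : Pt n :=
  (1 - a) • C.p (F.c i t) + a • C.p (F.c i (t + 1))

lemma pt_key {i j : Fin m} {s t : ℕ} {a b : ℝ} (ha : 0 ≤ a) (ha1 : a < 1) (hb : 0 ≤ b) (hb1 : b < 1)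
    (h : F.pt i s a = F.pt j t b) : i = j ∧ s % F.k i = t % F.k i ∧ a = b := by
  rcases ha.eq_or_lt with rfl | ha
  · rcases hb.eq_or_lt with rfl | hb
    · simp only [pt, sub_zero, one_smul, zero_smul, add_zero] at h
      obtain ⟨h1, h2⟩ := F.inj _ _ _ _ h
      exact ⟨h1, h2, rfl⟩
    · exfalso
      simp only [pt, sub_zero, one_smul, zero_smul, add_zero] at h
      rw [← F.nxt] at h
      exact C.edge_not_vertex (by linarith) hb (by ring) h.symm
  · rcases hb.eq_or_lt with rfl | hb
    · exfalso
      simp only [pt, sub_zero, one_smul, zero_smul, add_zero] at h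
      rw [← F.nxt] at h
      exact C.edge_not_vertex (by linarith) ha (by ring) h
    · have h0 : (1 - a) • C.p (F.c i s) + a • C.p (C.σ (F.c i s)) ∈ C.E (F.c j t) := by
        rw [F.nxt]
        refine C.mem_E.2 ⟨1 - b, b, by linarith, hb.le, by ring, ?_⟩
        rw [F.nxt]; exact h
      rcases C.edge_unique (by linarith) ha (by ring) h0 with h1 | h1
      · obtain ⟨h2, h3⟩ := F.inj i j s t (by rw [h1])
        refine ⟨h2, h3, ?_⟩
        simp only [pt, ← F.nxt, h1] at h
        have := (C.ind (F.c i s)).uniq (u := 1 - a) (v := a) (w := 0) (u' := 1 - b) (v' := b)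
          (w' := 0) (by ring) (by ring) (by simpa using h)
        exact this.2.1
      · exact absurd h1 (F.c_ne_α i j s t)

/-- the realized cycle -/
def K (i : Fin m) : Set (Pt n) := ⋃ t, C.E (F.c i t)

lemma mem_K {i : Fin m} {x : Pt n} : x ∈ F.K i ↔ ∃ t a, 0 ≤ a ∧ a < 1 ∧ x = F.pt i t a := by
  simp only [K, Set.mem_iUnion]
  constructor
  · rintro ⟨t, ht⟩
    obtain ⟨a, b, ha, hb, hab, rfl⟩ := C.mem_E.1 ht
    obtain rfl : a = 1 - b := by linarith
    rcases (show b ≤ 1 by linarith).eq_or_lt with rfl | hb1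
    · exact ⟨t + 1, 0, le_rfl, by norm_num, by simp [pt, F.nxt]⟩
    · exact ⟨t, b, hb, hb1, by rw [pt, F.nxt]⟩
  · rintro ⟨t, a, ha, ha1, rfl⟩
    refine ⟨t, C.mem_E.2 ⟨1 - a, a, by linarith, ha, by ring, ?_⟩⟩
    rw [F.nxt]; rfl

lemma K_sub (i : Fin m) : F.K i ⊆ C.S := by
  rintro x hx
  obtain ⟨t, ht⟩ := Set.mem_iUnion.1 hx
  exact C.mem_S.2 ⟨_, C.E_sub_T _ ht⟩

lemma K_disj {i j : Fin m} (hij : i ≠ j) : Disjoint (F.K i) (F.K j) := by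
  rw [Set.disjoint_left]
  intro x hx hy
  obtain ⟨t, a, ha, ha1, rfl⟩ := F.mem_K.1 hx
  obtain ⟨s, b, hb, hb1, h⟩ := F.mem_K.1 hy
  exact hij (F.pt_key ha ha1 hb hb1 h).1

/-- parametrization -/
noncomputable def g (i : Fin m) (s : ℝ) : Pt n :=
  ∑ t ∈ Finset.range (F.k i + 1), max 0 (1 - |s - t|) • C.p (F.c i t)

lemma g_cont (i : Fin m) : Continuous (F.g i) := by
  unfold g; fun_prop

lemma g_eq (i : Fin m) {t : ℕ} (ht : t < F.k i) {a : ℝ} (ha : 0 ≤ a) (ha1 : a ≤ 1) :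
    F.g i (t + a) = F.pt i t a := by
  unfold g pt
  rw [← Finset.sum_subset (s₁ := {t, t + 1})]
  · rw [Finset.sum_pair (by omega)]
    congr 2
    · rw [show (t : ℝ) + a - t = a by ring, abs_of_nonneg ha, max_eq_right (by linarith)]
    · rw [show (t : ℝ) + a - ((t + 1 : ℕ) : ℝ) = a - 1 by push_cast; ring,
        abs_of_nonpos (by linarith), max_eq_right (by linarith)]
      ring
  · intro x hx
    simp only [Finset.mem_insert, Finset.mem_singleton] at hx
    simp only [Finset.mem_range]; omega
  · intro u _ hu
    simp only [Finset.mem_insert, Finset.mem_singleton, not_or] at hu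
    rw [max_eq_left, zero_smul]
    rcases lt_or_ge u t with h | h
    · have : (u : ℝ) + 1 ≤ t := by exact_mod_cast h
      have := le_abs_self ((t : ℝ) + a - u)
      linarith
    · have : (t : ℝ) + 2 ≤ u := by
        have : t + 2 ≤ u := by omega
        exact_mod_cast this
      have := neg_le_abs ((t : ℝ) + a - u)
      linarith

lemma K_homeo (i : Fin m) :
    Nonempty (↥(F.K i) ≃ₜ ↥(Metric.sphere (0 : EuclideanSpace ℝ (Fin 2)) 1)) := by
  have hk : 3 ≤ F.k i := F.k3 i
  have hk0 : (0 : ℝ) < (F.k i : ℝ) := by exact_mod_cast (by omega : 0 < F.k i)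
  have : Fact ((0 : ℝ) < (F.k i : ℝ)) := ⟨hk0⟩
  let φ : AddCircle (F.k i : ℝ) → Pt n := AddCircle.liftIco (F.k i : ℝ) 0 (F.g i)
  have hper : F.g i 0 = F.g i (0 + F.k i) := by
    have h1 := F.g_eq i (t := 0) (by omega) (a := 0) le_rfl zero_le_one
    have h2 := F.g_eq i (t := F.k i - 1) (by omega) (a := 1) zero_le_one le_rfl
    have e : ((F.k i - 1 : ℕ) : ℝ) + 1 = 0 + F.k i := by
      rw [Nat.cast_sub (by omega)]; push_cast; ring
    rw [e] at h2
    simp only [Nat.cast_zero, add_zero] at h1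
    rw [h1, h2]
    have h3 := F.per i 0
    simp only [pt, sub_zero, one_smul, zero_smul, add_zero, sub_self, zero_add]
    rw [show F.k i - 1 + 1 = 0 + F.k i by omega, h3]
  have hc : Continuous φ := AddCircle.liftIco_continuous hper (F.g_cont i).continuousOn
  have hrep : ∀ x : AddCircle (F.k i : ℝ), ∃ t : ℕ, ∃ a : ℝ, t < F.k i ∧ 0 ≤ a ∧ a < 1 ∧
      x = (((t : ℝ) + a : ℝ) : AddCircle (F.k i : ℝ)) := by
    intro x
    obtain ⟨s, hs, rfl⟩ : x ∈ ((↑) : ℝ → AddCircle (F.k i : ℝ)) '' Set.Ico 0 (0 + F.k i) := by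
      rw [AddCircle.coe_image_Ico_eq]; trivial
    have h1 := Nat.floor_le hs.1
    have h2 := Nat.lt_floor_add_one s
    refine ⟨⌊s⌋₊, s - ⌊s⌋₊, ?_, by linarith, by linarith, by congr 1; ring⟩
    have : (⌊s⌋₊ : ℝ) < F.k i := by linarith [hs.2]
    exact_mod_cast this
  have hφ : ∀ (t : ℕ) (a : ℝ), t < F.k i → 0 ≤ a → a < 1 →
      φ (((t : ℝ) + a : ℝ) : AddCircle (F.k i : ℝ)) = F.pt i t a := by
    intro t a ht ha ha1
    rw [← F.g_eq i ht ha ha1.le]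
    apply AddCircle.liftIco_coe_apply
    have : (t : ℝ) + 1 ≤ F.k i := by exact_mod_cast ht
    exact ⟨by positivity, by linarith⟩
  have hinj : Function.Injective φ := by
    intro x y hxy
    obtain ⟨t, a, ht, ha, ha1, rfl⟩ := hrep x
    obtain ⟨s, b, hs, hb, hb1, rfl⟩ := hrep y
    rw [hφ _ _ ht ha ha1, hφ _ _ hs hb hb1] at hxy
    obtain ⟨-, h2, rfl⟩ := F.pt_key ha ha1 hb hb1 hxy
    rw [Nat.mod_eq_of_lt ht, Nat.mod_eq_of_lt hs] at h2
    rw [h2]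
  have hrange : Set.range φ = F.K i := by
    ext x
    constructor
    · rintro ⟨y, rfl⟩
      obtain ⟨t, a, ht, ha, ha1, rfl⟩ := hrep y
      exact F.mem_K.2 ⟨t, a, ha, ha1, hφ _ _ ht ha ha1⟩
    · intro hx
      obtain ⟨t, a, ha, ha1, rfl⟩ := F.mem_K.1 hx
      refine ⟨(((t % F.k i : ℕ) : ℝ) + a : ℝ), ?_⟩
      rw [hφ _ _ (Nat.mod_lt _ (by omega)) ha ha1]
      unfold pt
      rw [F.c_mod, F.same_next (s := t % F.k i) (t := t) (i := i) (j := i) (by rw [F.c_mod]) 1]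
  have hemb : Topology.IsClosedEmbedding φ := hc.isClosedEmbedding hinj
  have h1 : AddCircle (F.k i : ℝ) ≃ₜ ↥(F.K i) :=
    hemb.isEmbedding.toHomeomorph.trans (Homeomorph.setCongr hrange)
  have h2 : AddCircle (F.k i : ℝ) ≃ₜ Circle := AddCircle.homeomorphCircle hk0.ne'
  let r := Complex.orthonormalBasisOneI.repr
  have h3 : Circle ≃ₜ ↥(Metric.sphere (0 : EuclideanSpace ℝ (Fin 2)) 1) := by
    refine r.toHomeomorph.subtype ?_
    intro z
    simp [Submonoid.unitSphere]
  exact ⟨h1.symm.trans (h2.trans h3)⟩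

lemma P_conn : IsConnected (C.S \ ⋃ i, F.K i) := by
  let U : Set (Pt n) := ⋃ i, F.K i
  let O : C.D → Set (Pt n) := fun d => {x | ∃ u v w : ℝ, 0 < u ∧ 0 < v ∧ 0 < w ∧ u + v + w = 1 ∧
    x = u • C.p d + v • C.p (C.σ d) + w • C.p (C.σ (C.σ d))}
  have hOU : ∀ d, O d ⊆ C.T d \ U := by
    rintro d x ⟨u, v, w, hu, hv, hw, hs, rfl⟩
    refine ⟨⟨u, v, w, hu.le, hv.le, hw.le, hs, rfl⟩, ?_⟩
    intro h
    obtain ⟨i, hi⟩ := Set.mem_iUnion.1 h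
    obtain ⟨t, ht⟩ := Set.mem_iUnion.1 hi
    exact C.tri_not_edge hu hv hw hs ht
  have hOc : ∀ d, Convex ℝ (O d) := by
    rintro d x ⟨u, v, w, hu, hv, hw, hs, rfl⟩ y ⟨u', v', w', hu', hv', hw', hs', rfl⟩ s t h0 h1 hst
    have key : ∀ a b : ℝ, 0 < a → 0 < b → 0 < s * a + t * b := by
      intro a b ha hb
      rcases h0.eq_or_lt with rfl | h0
      · have : t = 1 := by linarith
        subst this; linarith
      · nlinarith [mul_pos h0 ha, mul_nonneg h1 hb.le]
    exact ⟨s * u + t * u', s * v + t * v', s * w + t * w', key _ _ hu hu', key _ _ hv hv',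
        key _ _ hw hw', by linear_combination s * hs + t * hs' + hst, by module⟩
  have hcl : ∀ d, C.T d ⊆ closure (O d) := by
    rintro d x ⟨u, v, w, hu, hv, hw, hs, rfl⟩
    have hx : u • C.p d + v • C.p (C.σ d) + w • C.p (C.σ (C.σ d)) ∈ closure (openSegment ℝ
      (u • C.p d + v • C.p (C.σ d) + w • C.p (C.σ (C.σ d)))
      ((1/3 : ℝ) • C.p d + (1/3 : ℝ) • C.p (C.σ d) + (1/3 : ℝ) • C.p (C.σ (C.σ d)))) :=
      segment_subset_closure_openSegment (left_mem_segment _ _ _)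
    refine closure_mono ?_ hx
    rintro y ⟨a, b, ha, hb, hab, rfl⟩
    exact ⟨a * u + b * (1/3), a * v + b * (1/3), a * w + b * (1/3), by positivity, by positivity,
      by positivity, by linear_combination a * hs + hab, by module⟩
  have hpc : ∀ d, IsPreconnected (C.T d \ U) := fun d =>
    (hOc d).isPreconnected.subset_closure (hOU d) (Set.sdiff_subset.trans (hcl d))
  have hne : ∀ d, (C.T d \ U).Nonempty := fun d =>
    ⟨_, hOU d ⟨1/3, 1/3, 1/3, by norm_num, by norm_num, by norm_num, by norm_num, rfl⟩⟩
  have heq : C.S \ U = ⋃ d, (C.T d \ U) := by rw [S, Set.iUnion_sdiff]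
  refine ⟨?_, ?_⟩
  · change (C.S \ U).Nonempty
    rw [heq]
    obtain ⟨d⟩ := C.ne
    obtain ⟨x, hx⟩ := hne d
    exact ⟨x, Set.mem_iUnion.2 ⟨d, hx⟩⟩
  · change IsPreconnected (C.S \ U)
    rw [heq]
    refine IsPreconnected.iUnion_of_reflTransGen hpc ?_
    intro d e
    refine ReflTransGen.mono ?_ _ _ (F.dual d e)
    rintro a b (rfl | ⟨rfl, hG⟩)
    · rw [C.Tσ, Set.inter_self]; exact hne a
    · have hmE : (1/2 : ℝ) • C.p a + (1/2 : ℝ) • C.p (C.σ a) ∈ C.E a :=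
        C.mem_E.2 ⟨1/2, 1/2, by norm_num, by norm_num, by norm_num, rfl⟩
      have hmU : (1/2 : ℝ) • C.p a + (1/2 : ℝ) • C.p (C.σ a) ∉ U := by
        intro h
        obtain ⟨i, hi⟩ := Set.mem_iUnion.1 h
        obtain ⟨t, ht⟩ := Set.mem_iUnion.1 hi
        rcases C.edge_unique_mid ht with h | h
        · exact (hG i t).1 h.symm
        · exact (hG i t).2 (by rw [h, C.α2])
      exact ⟨_, ⟨C.E_sub_T _ hmE, hmU⟩, ⟨C.E_sub_T _ (by rw [C.Eα]; exact hmE), hmU⟩⟩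

end Fam
end Cx

open Relation

namespace Cx

theorem genus_eq (C : Cx n) (X : Set (Pt n)) (hX : C.S = X) (hS : IsPreconnected X) :
    12 * (genus ↥X : ℤ) = C.N := by
  subst hX
  have hup : ∀ m : ℕ, (∃ K : Fin m → Set ↥C.S,
    (Pairwise fun i j => Disjoint (K i) (K j)) ∧
    (∀ i, Nonempty (↥(K i) ≃ₜ ↥(Metric.sphere (0 : EuclideanSpace ℝ (Fin 2)) 1))) ∧
    IsConnected (⋃ i, K i)ᶜ) → 12 * (m : ℤ) ≤ C.N := by
    rintro m ⟨K, h1, h2, h3⟩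
    refine C.upper hS (fun i => Subtype.val '' K i) ?_ ?_ ?_ ?_
    · rintro i x ⟨y, -, rfl⟩; exact y.2
    · intro i j hij
      exact (Set.disjoint_image_iff Subtype.val_injective).2 (h1 hij)
    · intro i
      obtain ⟨e⟩ := h2 i
      exact ⟨(Topology.IsEmbedding.subtypeVal.homeomorphImage (K i)).symm.trans e⟩
    · have := h3.image Subtype.val continuous_subtype_val.continuousOn
      rwa [Set.image_compl_eq_range_sdiff_image Subtype.val_injective, Subtype.range_coe,
        Set.image_iUnion] at this
  obtain ⟨C', m, hS', hN', hm, ⟨F⟩⟩ := C.exists_fam hS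
  have hmem : ∃ K : Fin m → Set ↥C.S,
    (Pairwise fun i j => Disjoint (K i) (K j)) ∧
    (∀ i, Nonempty (↥(K i) ≃ₜ ↥(Metric.sphere (0 : EuclideanSpace ℝ (Fin 2)) 1))) ∧
    IsConnected (⋃ i, K i)ᶜ := by
    have himg : ∀ i, Subtype.val '' ((Subtype.val ⁻¹' F.K i : Set ↥C.S)) = F.K i := by
      intro i
      rw [Subtype.image_preimage_coe, ← hS', Set.inter_eq_right]
      exact F.K_sub i
    refine ⟨fun i => Subtype.val ⁻¹' F.K i, ?_, ?_, ?_⟩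
    · intro i j hij
      exact (F.K_disj hij).preimage _
    · intro i
      obtain ⟨e⟩ := F.K_homeo i
      exact ⟨(Topology.IsEmbedding.subtypeVal.homeomorphImage _).trans
        ((Homeomorph.setCongr (himg i)).trans e)⟩
    · have hc := F.P_conn
      rw [hS'] at hc
      have h0 : Subtype.val '' ((⋃ i, (Subtype.val ⁻¹' F.K i : Set ↥C.S))ᶜ)
          = C.S \ ⋃ i, F.K i := by
        rw [Set.image_compl_eq_range_sdiff_image Subtype.val_injective, Subtype.range_coe,
          Set.image_iUnion]
        simp only [himg]
      refine ⟨?_, ?_⟩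
      · rw [← Set.image_nonempty (f := Subtype.val), h0]; exact hc.1
      · exact Topology.IsInducing.subtypeVal.isPreconnected_image.1 (by rw [h0]; exact hc.2)
  have hm' := hup m hmem
  have hg : IsGreatest {m : ℕ | ∃ K : Fin m → Set ↥C.S,
    (Pairwise fun i j => Disjoint (K i) (K j)) ∧
    (∀ i, Nonempty (↥(K i) ≃ₜ ↥(Metric.sphere (0 : EuclideanSpace ℝ (Fin 2)) 1))) ∧
    IsConnected (⋃ i, K i)ᶜ} m := by
    refine ⟨hmem, ?_⟩
    intro m' h'
    have := hup m' h'
    omega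
  have : genus ↥C.S = m := hg.csSup_eq
  rw [this]; omega

end Cx

open Relation

/-- oriented triangles of a complex -/
structure OD (K : SimplicialComplex ℝ (Pt n)) (Dt : Pt n → Pt n → Pt n → Prop) : Prop where
  rot : ∀ {x y z}, Dt x y z → Dt y z x
  tr : ∀ {x y z}, Dt x y z → ∃ t ∈ K.faces, t.card = 3 ∧ (t : Set (Pt n)) = {x, y, z}
  uniq : ∀ {x y z w}, Dt x y z → Dt x y w → z = w
  opp : ∀ {x y z}, Dt x y z → ∃ w, Dt y x w
  noflip : ∀ {x y z}, Dt x y z → ¬ Dt y x z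
  cover : ∀ {t}, t ∈ K.faces → t.card = 3 → ∃ x y z, Dt x y z ∧ (t : Set (Pt n)) = {x, y, z}
  sup : ∀ {s}, s ∈ K.faces → ∃ t ∈ K.faces, t.card = 3 ∧ s ⊆ t

namespace OD

variable {K : SimplicialComplex ℝ (Pt n)} {Dt : Pt n → Pt n → Pt n → Prop} (H : OD K Dt)

/-- darts -/
def Dart (_ : OD K Dt) : Type := {o : Pt n × Pt n × Pt n // Dt o.1 o.2.1 o.2.2}

def p (a : H.Dart) : Pt n := a.1.1
def sg (a : H.Dart) : H.Dart := ⟨(a.1.2.1, a.1.2.2, a.1.1), H.rot a.2⟩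
noncomputable def al (a : H.Dart) : H.Dart :=
  ⟨(a.1.2.1, a.1.1, (H.opp a.2).choose), (H.opp a.2).choose_spec⟩
def vs (a : H.Dart) : Set (Pt n) := {a.1.1, a.1.2.1, a.1.2.2}

lemma vs_tr (a : H.Dart) : ∃ t ∈ K.faces, t.card = 3 ∧ (t : Set (Pt n)) = H.vs a := H.tr a.2

lemma ext2 {a b : H.Dart} (h1 : H.p a = H.p b) (h2 : H.p (H.sg a) = H.p (H.sg b)) : a = b := by
  obtain ⟨⟨x, y, z⟩, ha⟩ := a
  obtain ⟨⟨x', y', z'⟩, hb⟩ := b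
  simp only [p, sg] at h1 h2
  subst h1 h2
  have := H.uniq ha hb
  simp only at this
  subst this
  rfl

lemma sg3 (a : H.Dart) : H.sg (H.sg (H.sg a)) = a := rfl
lemma p_al (a : H.Dart) : H.p (H.al a) = H.p (H.sg a) := rfl
lemma p_sg_al (a : H.Dart) : H.p (H.sg (H.al a)) = H.p a := rfl
lemma al2 (a : H.Dart) : H.al (H.al a) = a := H.ext2 rfl rfl

lemma vs_eq (a : H.Dart) : H.vs a = {H.p a, H.p (H.sg a), H.p (H.sg (H.sg a))} := rfl

lemma vs_sg (a : H.Dart) : H.vs (H.sg a) = H.vs a := by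
  ext x; simp only [vs, sg, Set.mem_insert_iff, Set.mem_singleton_iff]; tauto

lemma vs_card (a : H.Dart) : (H.vs a).ncard = 3 := by
  obtain ⟨t, -, h3, he⟩ := H.vs_tr a
  rw [← he, Set.ncard_coe_finset, h3]

lemma ne1 (a : H.Dart) : H.p (H.sg a) ≠ H.p a := by
  intro h
  have h3 := H.vs_card a
  rw [vs_eq, h, Set.insert_eq_of_mem (by simp)] at h3
  have := Set.ncard_insert_le (H.p a) {H.p (H.sg (H.sg a))}
  rw [Set.ncard_singleton] at this
  omega

lemma ne2 (a : H.Dart) : H.p (H.sg (H.sg a)) ≠ H.p a := fun h => H.ne1 (H.sg (H.sg a)) h.symm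

lemma ind (a : H.Dart) : Ind (H.p a) (H.p (H.sg a)) (H.p (H.sg (H.sg a))) := by
  obtain ⟨t, ht, h3, he⟩ := H.vs_tr a
  have hi := K.indep ht
  intro u v w hs hz
  let q : Fin 3 → Pt n := ![H.p a, H.p (H.sg a), H.p (H.sg (H.sg a))]
  have hmem : ∀ i, q i ∈ t := by
    intro i
    rw [← Finset.mem_coe, he, vs_eq]
    fin_cases i <;> simp [q]
  have n1 := H.ne1 a
  have n2 := H.ne2 a
  have n3 := H.ne1 (H.sg a)
  have hq : Function.Injective (fun i => (⟨q i, hmem i⟩ : t)) := by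
    intro i j hij
    have hij : q i = q j := congrArg Subtype.val hij
    fin_cases i <;> fin_cases j <;> simp_all [q]
  have hq2 : AffineIndependent ℝ q := hi.comp_embedding ⟨_, hq⟩
  rw [affineIndependent_iff] at hq2
  have := hq2 Finset.univ ![u, v, w] (by simp [Fin.sum_univ_three, hs])
    (by simpa [Fin.sum_univ_three, q] using hz)
  exact ⟨this 0 (by simp), this 1 (by simp), this 2 (by simp)⟩

def Rt (a b : H.Dart) : Prop := b = a ∨ b = H.sg a ∨ b = H.sg (H.sg a)

variable {H}
lemma Rt.symm {a b : H.Dart} (h : H.Rt a b) : H.Rt b a := by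
  rcases h with rfl | rfl | rfl
  · exact Or.inl rfl
  · exact Or.inr (Or.inr (H.sg3 a).symm)
  · exact Or.inr (Or.inl (H.sg3 a).symm)

lemma Rt.vs {a b : H.Dart} (h : H.Rt a b) : H.vs b = H.vs a := by
  rcases h with rfl | rfl | rfl <;> simp [vs_sg]

variable (H)
def Step (x : Pt n) (a b : H.Dart) : Prop :=
  b = H.sg a ∨ (b = H.al a ∧ x ∈ segment ℝ (H.p a) (H.p (H.sg a)))

variable {H}
lemma Rt.chain {a b : H.Dart} (h : H.Rt a b) (x : Pt n) : ReflTransGen (H.Step x) a b := by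
  rcases h with rfl | rfl | rfl
  · exact .refl
  · exact .single (Or.inl rfl)
  · exact ReflTransGen.tail (b := H.sg a) (.single (Or.inl rfl)) (Or.inl rfl)

variable (H)
lemma rot_to {a : H.Dart} {v : Pt n} (hv : v ∈ H.vs a) : ∃ b, H.Rt a b ∧ H.p b = v := by
  rcases hv with rfl | rfl | rfl
  · exact ⟨a, Or.inl rfl, rfl⟩
  · exact ⟨_, Or.inr (Or.inl rfl), rfl⟩
  · exact ⟨_, Or.inr (Or.inr rfl), rfl⟩

lemma rot_to2 {a : H.Dart} {u v : Pt n} (hu : u ∈ H.vs a) (hv : v ∈ H.vs a) (huv : u ≠ v) :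
    ∃ b, H.Rt a b ∧ ((H.p b = u ∧ H.p (H.sg b) = v) ∨ (H.p b = v ∧ H.p (H.sg b) = u)) := by
  obtain ⟨b, hb, rfl⟩ := H.rot_to hu
  rw [← hb.vs] at hv
  rcases hv with rfl | rfl | rfl
  · exact absurd rfl huv
  · exact ⟨b, hb, Or.inl ⟨rfl, rfl⟩⟩
  · refine ⟨H.sg (H.sg b), ?_, Or.inr ⟨rfl, rfl⟩⟩
    rcases hb with rfl | rfl | rfl
    · exact Or.inr (Or.inr rfl)
    · exact Or.inl rfl
    · exact Or.inr (Or.inl rfl)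

lemma chain2 {a b : H.Dart} {u w v : Pt n} (h1 : u ∈ H.vs a) (h2 : w ∈ H.vs a) (h3 : u ∈ H.vs b)
    (h4 : w ∈ H.vs b) (huw : u ≠ w) (hv : v ∈ segment ℝ u w) : ReflTransGen (H.Step v) a b := by
  obtain ⟨a', ra, ha⟩ := H.rot_to2 h1 h2 huw
  obtain ⟨b', rb, hb⟩ := H.rot_to2 h3 h4 huw
  refine (ra.chain v).trans (ReflTransGen.trans ?_ (rb.symm.chain v))
  have hsame : H.p a' = H.p b' → H.p (H.sg a') = H.p (H.sg b') → ReflTransGen (H.Step v) a' b' := by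
    intro e1 e2
    rw [H.ext2 e1 e2]
  have hopp : H.p a' = H.p (H.sg b') → H.p (H.sg a') = H.p b' →
      v ∈ segment ℝ (H.p a') (H.p (H.sg a')) → ReflTransGen (H.Step v) a' b' := by
    intro e1 e2 hs
    refine .single (Or.inr ⟨H.ext2 ?_ ?_, hs⟩)
    · rw [p_al, e2]
    · rw [p_sg_al, e1]
  rcases ha with ⟨ha1, ha2⟩ | ⟨ha1, ha2⟩ <;> rcases hb with ⟨hb1, hb2⟩ | ⟨hb1, hb2⟩
  · exact hsame (by rw [ha1, hb1]) (by rw [ha2, hb2])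
  · exact hopp (by rw [ha1, hb2]) (by rw [ha2, hb1]) (by rw [ha1, ha2]; exact hv)
  · exact hopp (by rw [ha1, hb2]) (by rw [ha2, hb1]) (by rw [ha1, ha2, segment_symm]; exact hv)
  · exact hsame (by rw [ha1, hb1]) (by rw [ha2, hb2])

lemma rt_of_vs {a b : H.Dart} (h : H.vs a = H.vs b) : H.Rt a b := by
  obtain ⟨c, hc, he⟩ := H.rot_to (a := b) (v := H.p a) (by rw [← h, vs_eq]; simp)
  have hcv : H.vs c = H.vs a := by rw [hc.vs, h]
  have h1 : H.p (H.sg c) ∈ H.vs a := by rw [← hcv, vs_eq]; simp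
  have n1 := H.ne1 c
  have key : c = a := by
    rcases h1 with h1 | h1 | h1
    · exact absurd (h1.trans he.symm) n1
    · exact H.ext2 he h1
    · exfalso
      have h2 : H.p (H.sg (H.sg c)) ∈ H.vs a := by rw [← hcv, vs_eq]; simp
      have n2 := H.ne2 c
      have n3 := H.ne1 (H.sg c)
      rcases h2 with h2 | h2 | h2
      · exact n2 (h2.trans he.symm)
      · have hd := H.rot (H.rot c.2)
        have e1 : c.1.1 = a.1.1 := he
        have e2 : c.1.2.1 = a.1.2.2 := h1
        have e3 : c.1.2.2 = a.1.2.1 := h2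
        rw [e1, e2, e3] at hd
        exact H.noflip a.2 hd
      · exact n3 (h2.trans h1.symm)
  rw [← key]; exact hc.symm

lemma inter_hull (a b : H.Dart) :
    convexHull ℝ (H.vs a) ∩ convexHull ℝ (H.vs b) = convexHull ℝ (H.vs a ∩ H.vs b) := by
  obtain ⟨t, ht, -, he⟩ := H.vs_tr a
  obtain ⟨s, hs, -, he'⟩ := H.vs_tr b
  rw [← he, ← he']
  exact K.convexHull_inter_convexHull ht hs

/-- two darts at the same vertex or edge -/
lemma inter_cases {a b : H.Dart} {v : Pt n} (ha : v ∈ H.vs a) (hb : v ∈ H.vs b) :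
    H.Rt a b ∨ (∃ u, u ≠ v ∧ u ∈ H.vs a ∧ u ∈ H.vs b ∧ H.vs a ∩ H.vs b = {v, u}) ∨
      H.vs a ∩ H.vs b = {v} := by
  by_cases h1 : ∃ u, u ≠ v ∧ u ∈ H.vs a ∧ u ∈ H.vs b
  · obtain ⟨u, huv, hua, hub⟩ := h1
    by_cases h2 : ∃ w, w ≠ u ∧ w ≠ v ∧ w ∈ H.vs a ∧ w ∈ H.vs b
    · left
      obtain ⟨w, hwu, hwv, hwa, hwb⟩ := h2
      apply H.rt_of_vs
      have h3 : ({v, u, w} : Set (Pt n)).ncard = 3 := by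
        rw [Set.ncard_eq_three]; exact ⟨v, u, w, huv.symm, hwv.symm, hwu.symm, rfl⟩
      have hfin : ∀ c : H.Dart, (H.vs c).Finite := fun c => by rw [vs_eq]; exact Set.toFinite _
      have ea : ({v, u, w} : Set (Pt n)) = H.vs a :=
        Set.eq_of_subset_of_ncard_le (by rintro x (rfl | rfl | rfl) <;> assumption)
          (by rw [h3, H.vs_card]) (hfin a)
      have eb : ({v, u, w} : Set (Pt n)) = H.vs b :=
        Set.eq_of_subset_of_ncard_le (by rintro x (rfl | rfl | rfl) <;> assumption)
          (by rw [h3, H.vs_card]) (hfin b)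
      rw [← ea, ← eb]
    · right; left
      refine ⟨u, huv, hua, hub, ?_⟩
      ext x
      constructor
      · rintro ⟨hx, hx'⟩
        by_contra hc
        simp only [Set.mem_insert_iff, Set.mem_singleton_iff, not_or] at hc
        exact h2 ⟨x, hc.2, hc.1, hx, hx'⟩
      · rintro (rfl | rfl)
        · exact ⟨ha, hb⟩
        · exact ⟨hua, hub⟩
  · right; right
    ext x
    constructor
    · rintro ⟨hx, hx'⟩
      by_contra hc
      exact h1 ⟨x, hc, hx, hx'⟩
    · rintro rfl
      exact ⟨ha, hb⟩

/-- all darts around a vertex are linked -/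
def Linked : Prop := ∀ (v : Pt n) (a b : H.Dart), v ∈ H.vs a → v ∈ H.vs b →
  ReflTransGen (H.Step v) a b

lemma hloc (hl : H.Linked) (x : Pt n) (a b : H.Dart) (ha : x ∈ convexHull ℝ (H.vs a))
    (hb : x ∈ convexHull ℝ (H.vs b)) : ReflTransGen (H.Step x) a b := by
  have hx : x ∈ convexHull ℝ (H.vs a ∩ H.vs b) := by
    rw [← H.inter_hull]; exact ⟨ha, hb⟩
  obtain ⟨v, hva, hvb⟩ := convexHull_nonempty_iff.1 ⟨x, hx⟩
  rcases H.inter_cases hva hvb with h | ⟨u, huv, hua, hub, he⟩ | he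
  · exact h.chain x
  · rw [he, convexHull_pair] at hx
    exact H.chain2 hva hua hvb hub huv.symm hx
  · rw [he, convexHull_singleton] at hx
    obtain rfl : x = v := hx
    exact hl x a b hva hvb

lemma vert_fin (hfin : K.faces.Finite) : K.vertices.Finite := by
  refine Set.Finite.of_finite_image (f := fun x => ({x} : Finset (Pt n))) (hfin.subset ?_)
    (fun x _ y _ h => Finset.singleton_injective h)
  rintro _ ⟨x, hx, rfl⟩
  exact hx

lemma p_vert (a : H.Dart) : H.p a ∈ K.vertices := by
  obtain ⟨t, ht, -, he⟩ := H.vs_tr a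
  refine K.down_closed ht ?_ (Finset.singleton_nonempty _)
  rw [Finset.singleton_subset_iff, ← Finset.mem_coe, he, vs_eq]; simp

lemma dart_fin (hfin : K.faces.Finite) : Finite H.Dart := by
  have hv := vert_fin (K := K) hfin
  have h3 : (K.vertices ×ˢ (K.vertices ×ˢ K.vertices)).Finite := hv.prod (hv.prod hv)
  exact Set.Finite.subset h3 (fun o ho => by
    let a : H.Dart := ⟨o, ho⟩
    exact ⟨H.p_vert a, H.p_vert (H.sg a), H.p_vert (H.sg (H.sg a))⟩)

/-- the combinatorial surface -/
noncomputable def toCx (hfin : K.faces.Finite) (hne : Nonempty H.Dart) (hl : H.Linked) : Cx n where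
  D := H.Dart
  ft := @Fintype.ofFinite _ (H.dart_fin hfin)
  ne := hne
  σ := H.sg
  α := H.al
  p := H.p
  σ3 := H.sg3
  α2 := H.al2
  pα := H.p_al
  ind := H.ind
  loc := by
    intro x d e hd he
    rw [tri_eq] at hd he
    exact H.hloc hl x d e hd he

lemma space_eq : K.space = ⋃ a : H.Dart, convexHull ℝ (H.vs a) := by
  ext x
  rw [SimplicialComplex.mem_space_iff, Set.mem_iUnion]
  constructor
  · rintro ⟨s, hs, hx⟩
    obtain ⟨t, ht, h3, hst⟩ := H.sup hs
    obtain ⟨a, b, c, hd, he⟩ := H.cover ht h3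
    refine ⟨⟨(a, b, c), hd⟩, ?_⟩
    have : H.vs ⟨(a, b, c), hd⟩ = t := he.symm
    rw [this]
    exact convexHull_mono (by exact_mod_cast hst) hx
  · rintro ⟨a, hx⟩
    obtain ⟨t, ht, -, he⟩ := H.vs_tr a
    exact ⟨t, ht, by rw [he]; exact hx⟩

lemma toCx_S (hfin : K.faces.Finite) (hne : Nonempty H.Dart) (hl : H.Linked) :
    (H.toCx hfin hne hl).S = K.space := by
  rw [H.space_eq]
  unfold Cx.S
  refine Set.iUnion_congr ?_
  intro a
  rw [Cx.T_eq]; rfl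

end OD

open Relation

namespace OD

variable {K : SimplicialComplex ℝ (Pt n)} {Dt : Pt n → Pt n → Pt n → Prop} (H : OD K Dt)

lemma fiber_card {A B : Type*} [Fintype A] (f : A → B) (S : Set B) (c : ℕ)
    (hS : ∀ a, f a ∈ S) (hc : ∀ b ∈ S, {a | f a = b}.ncard = c) (hf : S.Finite) :
    Fintype.card A = c * S.ncard := by
  classical
  have h := Finset.card_eq_sum_card_fiberwise (f := f) (s := (Finset.univ : Finset A))
    (t := hf.toFinset) (by intro a _; simpa using hS a)
  rw [← Finset.card_univ, h, Finset.sum_const_nat (m := c), Set.ncard_eq_toFinset_card S hf, mul_comm]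
  intro b hb
  rw [← hc b (by simpa using hb), ← Set.ncard_coe_finset]
  congr 1
  ext a; simp

lemma vs_fin (a : H.Dart) : (H.vs a).Finite := by rw [vs_eq]; exact Set.toFinite _

/-- triangle -/
noncomputable def tf (a : H.Dart) : Finset (Pt n) := (H.vs_tr a).choose
lemma tf_face (a : H.Dart) : H.tf a ∈ K.faces := (H.vs_tr a).choose_spec.1
lemma tf_card (a : H.Dart) : (H.tf a).card = 3 := (H.vs_tr a).choose_spec.2.1
lemma tf_coe (a : H.Dart) : (H.tf a : Set (Pt n)) = H.vs a := (H.vs_tr a).choose_spec.2.2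

open Classical in
/-- edge -/
noncomputable def ef (a : H.Dart) : Finset (Pt n) := {H.p a, H.p (H.sg a)}
lemma ef_card (a : H.Dart) : (H.ef a).card = 2 := Finset.card_pair (H.ne1 a).symm
lemma ef_coe (a : H.Dart) : (H.ef a : Set (Pt n)) = {H.p a, H.p (H.sg a)} := by simp [ef]
lemma ef_face (a : H.Dart) : H.ef a ∈ K.faces := by
  refine K.down_closed (H.tf_face a) ?_ (Finset.card_pos.1 (by rw [ef_card]; norm_num))
  rw [← Finset.coe_subset, ef_coe, tf_coe, vs_eq]
  rintro x (rfl | rfl) <;> simp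

lemma exists_dart {s : Finset (Pt n)} (hs : s ∈ K.faces) : ∃ a : H.Dart, (s : Set (Pt n)) ⊆ H.vs a := by
  obtain ⟨t, ht, h3, hst⟩ := H.sup hs
  obtain ⟨a, b, c, hd, he⟩ := H.cover ht h3
  refine ⟨⟨(a, b, c), hd⟩, ?_⟩
  have : H.vs ⟨(a, b, c), hd⟩ = t := he.symm
  rw [this]; exact_mod_cast hst

lemma range_p : Set.range H.p = K.vertices := by
  ext v
  constructor
  · rintro ⟨a, rfl⟩; exact H.p_vert a
  · intro hv
    obtain ⟨a, ha⟩ := H.exists_dart (s := {v}) hv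
    obtain ⟨b, -, hb⟩ := H.rot_to (v := v) (ha (by simp))
    exact ⟨b, hb⟩

lemma toCx_N (hfin : K.faces.Finite) (hne : Nonempty H.Dart) (hl : H.Linked) :
    (H.toCx hfin hne hl).N = 12 - 6 * eulerChar K := by
  let _ : Fintype H.Dart := @Fintype.ofFinite _ (H.dart_fin hfin)
  have h3 : Fintype.card H.Dart = 3 * {t : Finset (Pt n) | t ∈ K.faces ∧ t.card = 3}.ncard := by
    refine fiber_card H.tf _ 3 (fun a => ⟨H.tf_face a, H.tf_card a⟩) ?_ (hfin.subset fun t h => h.1)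
    rintro t ⟨ht, ht3⟩
    obtain ⟨a, ha⟩ := H.exists_dart ht
    have hta : (t : Set (Pt n)) = H.vs a := Set.eq_of_subset_of_ncard_le ha
      (by rw [H.vs_card, Set.ncard_coe_finset, ht3]) (H.vs_fin a)
    have n1 := H.ne1 a
    have n2 := H.ne2 a
    have n3 := H.ne1 (H.sg a)
    rw [Set.ncard_eq_three]
    refine ⟨a, H.sg a, H.sg (H.sg a), fun h => n1 (congrArg H.p h).symm,
      fun h => n2 (congrArg H.p h).symm, fun h => n3 (congrArg H.p h).symm, ?_⟩
    ext b
    have : H.tf b = t ↔ H.Rt a b := by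
      rw [← Finset.coe_inj, tf_coe, hta]
      exact ⟨fun h => H.rt_of_vs h.symm, fun h => h.vs⟩
    exact this
  have h2 : Fintype.card H.Dart = 2 * {t : Finset (Pt n) | t ∈ K.faces ∧ t.card = 2}.ncard := by
    refine fiber_card H.ef _ 2 (fun a => ⟨H.ef_face a, H.ef_card a⟩) ?_ (hfin.subset fun t h => h.1)
    rintro t ⟨ht, ht2⟩
    obtain ⟨a, ha⟩ := H.exists_dart ht
    obtain ⟨u, v, huv, rfl⟩ := Finset.card_eq_two.1 ht2
    obtain ⟨b, -, hb⟩ := H.rot_to2 (a := a) (ha (by simp : u ∈ _)) (ha (by simp : v ∈ _)) huv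
    obtain ⟨b, hb1, hb2⟩ : ∃ b : H.Dart, H.p b = u ∧ H.p (H.sg b) = v := by
      rcases hb with hb | hb
      · exact ⟨b, hb⟩
      · exact ⟨H.al b, by rw [p_al, hb.2], by rw [p_sg_al, hb.1]⟩
    have n1 := H.ne1 b
    rw [Set.ncard_eq_two]
    refine ⟨b, H.al b, fun h => n1 (by rw [← p_al, ← h]), ?_⟩
    ext c
    simp only [Set.mem_ofPred_eq, Set.mem_insert_iff, Set.mem_singleton_iff]
    rw [← Finset.coe_inj, ef_coe, Finset.coe_pair, Set.pair_eq_pair_iff]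
    constructor
    · rintro (⟨h1, h2⟩ | ⟨h1, h2⟩)
      · left; exact H.ext2 (by rw [h1, hb1]) (by rw [h2, hb2])
      · right; exact H.ext2 (by rw [h1, p_al, hb2]) (by rw [h2, p_sg_al, hb1])
    · rintro (rfl | rfl)
      · left; exact ⟨hb1, hb2⟩
      · right; exact ⟨by rw [p_al, hb2], by rw [p_sg_al, hb1]⟩
  have hv : (H.toCx hfin hne hl).nV = K.vertices.ncard := by
    rw [← H.range_p]; rfl
  have hc : Fintype.card (H.toCx hfin hne hl).D = Fintype.card H.Dart := rfl
  unfold Cx.N eulerChar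
  rw [hv, hc]
  omega

end OD

open Relation

lemma punct {a b y1 y2 : ℝ} (ha : a < y1) (hb : y1 < b) {J : Set ℝ} (hJ : Convex ℝ J)
    (hy : y2 ∈ J) (hz : ∃ z ∈ J, y2 < z) :
    IsConnected ((Set.Ioo a b ×ˢ J) \ {(y1, y2)}) := by
  obtain ⟨z, hzJ, hz⟩ := hz
  let L : Set (ℝ × ℝ) := Set.Ioo a y1 ×ˢ J
  let R : Set (ℝ × ℝ) := Set.Ioo y1 b ×ˢ J
  let U : Set (ℝ × ℝ) := Set.Ioo a b ×ˢ (J ∩ Set.Ioi y2)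
  let B : Set (ℝ × ℝ) := Set.Ioo a b ×ˢ (J ∩ Set.Iio y2)
  have cL : IsPreconnected L := ((convex_Ioo a y1).prod hJ).isPreconnected
  have cR : IsPreconnected R := ((convex_Ioo y1 b).prod hJ).isPreconnected
  have cU : IsPreconnected U := ((convex_Ioo a b).prod (hJ.inter (convex_Ioi y2))).isPreconnected
  have cB : IsPreconnected B := ((convex_Ioo a b).prod (hJ.inter (convex_Iio y2))).isPreconnected
  have m1 : (a + y1) / 2 ∈ Set.Ioo a y1 := ⟨by linarith, by linarith⟩
  have m1' : (a + y1) / 2 ∈ Set.Ioo a b := ⟨by linarith, by linarith⟩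
  have m2 : (y1 + b) / 2 ∈ Set.Ioo y1 b := ⟨by linarith, by linarith⟩
  have m2' : (y1 + b) / 2 ∈ Set.Ioo a b := ⟨by linarith, by linarith⟩
  have h1 : IsPreconnected (L ∪ U) := cL.union ((a + y1) / 2, z) ⟨m1, hzJ⟩ ⟨m1', hzJ, hz⟩ cU
  have h2 : IsPreconnected (L ∪ U ∪ R) :=
    h1.union ((y1 + b) / 2, z) (Or.inr ⟨m2', hzJ, hz⟩) ⟨m2, hzJ⟩ cR
  have h3 : IsPreconnected (L ∪ U ∪ R ∪ B) := by
    rcases B.eq_empty_or_nonempty with h | ⟨⟨x1, x2⟩, -, hx, hx2⟩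
    · rw [h, Set.union_empty]; exact h2
    · exact h2.union ((a + y1) / 2, x2) (Or.inl (Or.inl ⟨m1, hx⟩)) ⟨m1', hx, hx2⟩ cB
  have heq : (Set.Ioo a b ×ˢ J) \ {(y1, y2)} = L ∪ U ∪ R ∪ B := by
    ext ⟨x1, x2⟩
    constructor
    · rintro ⟨⟨⟨hx1, hx1'⟩, hx2⟩, hne⟩
      dsimp only at hx1 hx1' hx2
      rcases lt_trichotomy x1 y1 with h | h | h
      · exact Or.inl (Or.inl (Or.inl ⟨⟨hx1, h⟩, hx2⟩))
      · rcases lt_trichotomy x2 y2 with h' | h' | h'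
        · exact Or.inr ⟨⟨hx1, hx1'⟩, hx2, h'⟩
        · exact absurd (by rw [h, h']; rfl) hne
        · exact Or.inl (Or.inl (Or.inr ⟨⟨hx1, hx1'⟩, hx2, h'⟩))
      · exact Or.inl (Or.inr ⟨⟨h, hx1'⟩, hx2⟩)
    · rintro (((⟨⟨g1, g2⟩, g3⟩ | ⟨⟨g1, g2⟩, g3, g4⟩) | ⟨⟨g1, g2⟩, g3⟩) | ⟨⟨g1, g2⟩, g3, g4⟩) <;>
        refine ⟨⟨⟨?_, ?_⟩, g3⟩, ?_⟩ <;>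
        simp only [Set.mem_singleton_iff, Prod.mk.injEq, Set.mem_Ioi, Set.mem_Iio] at * <;>
        first | linarith | (rintro ⟨rfl, rfl⟩; linarith)
  rw [heq]
  exact ⟨⟨((a + y1) / 2, y2), Or.inl (Or.inl (Or.inl ⟨m1, hy⟩))⟩, h3⟩

/-- points have small neighborhoods that stay connected after removal of the point -/
def Good (Z : Type) [TopologicalSpace Z] : Prop :=
  ∀ (y : Z), ∀ N ∈ nhds y, ∃ W ⊆ N, W ∈ nhds y ∧ IsConnected (W \ {y})

lemma good_plane : Good (ℝ × ℝ) := by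
  intro y N hN
  obtain ⟨r, hr, hb⟩ := Metric.mem_nhds_iff.1 hN
  refine ⟨Metric.ball y r, hb, Metric.ball_mem_nhds _ hr, ?_⟩
  obtain ⟨y1, y2⟩ := y
  rw [← ball_prod_same, Real.ball_eq_Ioo, Real.ball_eq_Ioo]
  exact punct (by linarith) (by linarith) (convex_Ioo _ _) ⟨by linarith, by linarith⟩
    ⟨y2 + r / 2, ⟨by linarith, by linarith⟩, by linarith⟩

lemma good_half : Good ↥HalfPlane := by
  intro y N hN
  obtain ⟨r, hr, hb⟩ := Metric.mem_nhds_iff.1 hN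
  refine ⟨Metric.ball y r, hb, Metric.ball_mem_nhds _ hr, ?_⟩
  obtain ⟨⟨y1, y2⟩, hy⟩ := y
  have hy : 0 ≤ y2 := hy
  have himg : Subtype.val '' (Metric.ball (⟨(y1, y2), hy⟩ : ↥HalfPlane) r \ {⟨(y1, y2), hy⟩}) =
      (Set.Ioo (y1 - r) (y1 + r) ×ˢ (Set.Ioo (y2 - r) (y2 + r) ∩ Set.Ici 0)) \ {(y1, y2)} := by
    have hba : ∀ x : ↥HalfPlane, x ∈ Metric.ball (⟨(y1, y2), hy⟩ : ↥HalfPlane) r ↔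
        x.1 ∈ Set.Ioo (y1 - r) (y1 + r) ×ˢ Set.Ioo (y2 - r) (y2 + r) := by
      intro x
      rw [← Real.ball_eq_Ioo, ← Real.ball_eq_Ioo, ball_prod_same]; rfl
    ext x
    constructor
    · rintro ⟨x, ⟨hx, hne⟩, rfl⟩
      have h1 := (hba x).1 hx
      exact ⟨⟨h1.1, h1.2, x.2⟩, fun h => hne (Subtype.ext h)⟩
    · rintro ⟨⟨h1, h2, h3⟩, hne⟩
      exact ⟨⟨x, h3⟩, ⟨(hba _).2 ⟨h1, h2⟩, fun h => hne (congrArg Subtype.val h)⟩, rfl⟩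
  have hc := punct (a := y1 - r) (b := y1 + r) (y1 := y1) (y2 := y2) (by linarith) (by linarith)
    ((convex_Ioo (y2 - r) (y2 + r)).inter (convex_Ici 0)) ⟨⟨by linarith, by linarith⟩, hy⟩
    ⟨y2 + r / 2, ⟨⟨by linarith, by linarith⟩, by simp only [Set.mem_Ici]; linarith⟩, by linarith⟩
  rw [← himg] at hc
  exact ⟨Set.image_nonempty.1 hc.1, Topology.IsInducing.subtypeVal.isPreconnected_image.1 hc.2⟩

lemma good_transfer {Z : Type} [TopologicalSpace Z] (hZ : Good Z) {X U : Set (Pt n)} {v : Pt n}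
    (hv : v ∈ X) (hU : U ⊆ X) (hUn : U ∈ nhdsWithin v X) {V : Set Z} (hV : IsOpen V)
    (h : ↥U ≃ₜ ↥V) {N : Set (Pt n)} (hN : N ∈ nhdsWithin v X) :
    ∃ W ⊆ N ∩ X, W ∈ nhdsWithin v X ∧ IsConnected (W \ {v}) := by
  have hvU : v ∈ U := mem_of_mem_nhdsWithin hv hUn
  have hnw : nhdsWithin v U = nhdsWithin v X := by
    apply le_antisymm (nhdsWithin_mono _ hU)
    exact nhdsWithin_le_of_mem hUn
  let j : ↥U → Z := fun x => (h x).1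
  have hj : Topology.IsOpenEmbedding j := hV.isOpenEmbedding_subtypeVal.comp h.isOpenEmbedding
  let v' : ↥U := ⟨v, hvU⟩
  have h1 : (Subtype.val ⁻¹' N : Set ↥U) ∈ nhds v' := by
    rw [← hnw, ← map_nhds_subtype_val v'] at hN
    exact hN
  obtain ⟨W', hW', hW'n, hW'c⟩ := hZ (j v') _ (hj.isOpenMap.image_mem_nhds h1)
  have hpre : j ⁻¹' W' ∈ nhds v' := hj.continuous.continuousAt.preimage_mem_nhds hW'n
  refine ⟨Subtype.val '' (j ⁻¹' W'), ?_, ?_, ?_⟩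
  · rintro _ ⟨x, hx, rfl⟩
    obtain ⟨x', hx', he⟩ := hW' hx
    rw [← hj.injective he]
    exact ⟨hx', hU x'.2⟩
  · rw [← hnw, ← map_nhds_subtype_val v']
    exact Filter.image_mem_map hpre
  · have e1 : Subtype.val '' (j ⁻¹' W') \ {v} = Subtype.val '' (j ⁻¹' (W' \ {j v'})) := by
      ext x
      constructor
      · rintro ⟨⟨x, hx, rfl⟩, hne⟩
        exact ⟨x, ⟨hx, fun hh => hne (congrArg Subtype.val (hj.injective hh))⟩, rfl⟩
      · rintro ⟨x, ⟨hx, hne⟩, rfl⟩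
        refine ⟨⟨x, hx, rfl⟩, fun hh => hne ?_⟩
        have : x = v' := Subtype.ext hh
        rw [this]; rfl
    have e2 : j '' (j ⁻¹' (W' \ {j v'})) = W' \ {j v'} := by
      rw [Set.image_preimage_eq_iff]
      rintro z ⟨hz, -⟩
      obtain ⟨x, -, he⟩ := hW' hz
      exact ⟨x, he⟩
    rw [e1]
    refine IsConnected.image ?_ _ continuous_subtype_val.continuousOn
    rw [← e2] at hW'c
    exact ⟨Set.image_nonempty.1 hW'c.1, hj.isInducing.isPreconnected_image.1 hW'c.2⟩

lemma lp_local {K : SimplicialComplex ℝ (Pt n)} {v : Pt n} (h : IsLocallyPlanarPt K v)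
    {N : Set (Pt n)} (hN : N ∈ nhdsWithin v K.space) :
    ∃ W ⊆ N ∩ K.space, W ∈ nhdsWithin v K.space ∧ IsConnected (W \ {v}) := by
  obtain ⟨hv, ⟨U, hU, hUn, V, hV, ⟨e⟩⟩ | ⟨U, hU, hUn, V, hV, ⟨e⟩⟩⟩ := h
  · exact good_transfer good_plane hv hU hUn hV e hN
  · exact good_transfer good_half hv hU hUn hV e hN

lemma star_nhd {K : SimplicialComplex ℝ (Pt n)} (hfin : K.faces.Finite) {v : Pt n}
    (hv : {v} ∈ K.faces) :
    (⋃ s ∈ {s | s ∈ K.faces ∧ v ∉ s}, convexHull ℝ (s : Set (Pt n)))ᶜ ∈ nhdsWithin v K.space := by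
  apply mem_nhdsWithin_of_mem_nhds
  apply IsOpen.mem_nhds
  · rw [isOpen_compl_iff]
    refine Set.Finite.isClosed_biUnion (hfin.subset fun s h => h.1) ?_
    intro s _
    exact (s.finite_toSet.isCompact_convexHull ℝ).isClosed
  · simp only [Set.mem_compl_iff, Set.mem_iUnion, not_exists]
    rintro s ⟨hs, hvs⟩ hmem
    have : v ∈ convexHull ℝ ((({v} : Finset (Pt n)) : Set (Pt n)) ∩ s) := by
      rw [← K.convexHull_inter_convexHull hv hs]
      exact ⟨by simp, hmem⟩
    obtain ⟨x, hx, hxs⟩ := convexHull_nonempty_iff.1 ⟨v, this⟩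
    simp only [Finset.coe_singleton, Set.mem_singleton_iff] at hx
    subst hx
    exact hvs hxs

/-- no isolated vertices -/
lemma not_isolated {K : SimplicialComplex ℝ (Pt n)} (hfin : K.faces.Finite) {v : Pt n}
    (hv : {v} ∈ K.faces) (h : IsLocallyPlanarPt K v) : ∃ s ∈ K.faces, v ∈ s ∧ s ≠ {v} := by
  by_contra hc
  push Not at hc
  obtain ⟨W, hW, -, ⟨x, hx, hne⟩, -⟩ := lp_local h (star_nhd hfin hv)
  obtain ⟨hx1, hx2⟩ := hW hx
  obtain ⟨s, hs, hxs⟩ := SimplicialComplex.mem_space_iff.1 hx2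
  by_cases hvs : v ∈ s
  · rw [hc s hs hvs] at hxs
    simp only [Finset.coe_singleton, convexHull_singleton] at hxs
    exact hne hxs
  · exact hx1 (Set.mem_biUnion (x := s) ⟨hs, hvs⟩ hxs)

namespace OD

variable {K : SimplicialComplex ℝ (Pt n)} {Dt : Pt n → Pt n → Pt n → Prop} (H : OD K Dt)

lemma near {v : Pt n} {a : H.Dart} (ha : v ∈ H.vs a) {W : Set (Pt n)}
    (hW : W ∈ nhdsWithin v K.space) : ((W \ {v}) ∩ convexHull ℝ (H.vs a)).Nonempty := by
  obtain ⟨b, hb, rfl⟩ := H.rot_to ha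
  rw [← hb.vs]
  have n1 := H.ne1 b
  let f : ℝ → Pt n := fun s => (1 - s) • H.p b + s • H.p (H.sg b)
  have hf : Continuous f := by fun_prop
  have hf0 : f 0 = H.p b := by simp [f]
  have hmem : ∀ s ∈ Set.Icc (0 : ℝ) 1, f s ∈ convexHull ℝ (H.vs b) := by
    intro s hs
    refine convex_convexHull ℝ _ (subset_convexHull _ _ ?_) (subset_convexHull _ _ ?_)
      (by linarith [hs.2]) hs.1 (by ring)
    · rw [vs_eq]; simp
    · rw [vs_eq]; simp
  have hsub : convexHull ℝ (H.vs b) ⊆ K.space := by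
    rw [H.space_eq]; exact Set.subset_iUnion (fun a : H.Dart => convexHull ℝ (H.vs a)) b
  have ht : Filter.Tendsto f (nhdsWithin 0 (Set.Ioc 0 1)) (nhdsWithin (H.p b) K.space) := by
    rw [tendsto_nhdsWithin_iff]
    refine ⟨?_, ?_⟩
    · have := hf.tendsto 0
      rw [hf0] at this
      exact this.mono_left nhdsWithin_le_nhds
    · filter_upwards [self_mem_nhdsWithin] with s hs
      exact hsub (hmem s ⟨hs.1.le, hs.2⟩)
  have : (nhdsWithin (0 : ℝ) (Set.Ioc 0 1)).NeBot := by
    rw [nhdsWithin_Ioc_eq_nhdsGT zero_lt_one]; infer_instance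
  have q1 : ∀ᶠ s in nhdsWithin (0 : ℝ) (Set.Ioc 0 1), f s ∈ W := ht hW
  have q2 : ∀ᶠ s in nhdsWithin (0 : ℝ) (Set.Ioc 0 1), s ∈ Set.Ioc (0 : ℝ) 1 := self_mem_nhdsWithin
  obtain ⟨s, hs1, hs2⟩ := (q1.and q2).exists
  refine ⟨f s, ⟨hs1, ?_⟩, hmem s ⟨hs2.1.le, hs2.2⟩⟩
  intro h
  have h : f s = H.p b := h
  have h2 : s • (H.p (H.sg b) - H.p b) = 0 := by
    rw [← sub_eq_zero] at h
    rw [← h]; simp only [f]; module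
  rcases smul_eq_zero.1 h2 with h3 | h3
  · exact hs2.1.ne' h3
  · exact n1 (sub_eq_zero.1 h3)

lemma linked (hfin : K.faces.Finite) (hlp : LocallyPlanar K) : H.Linked := by
  intro v d e hd he
  by_contra hnot
  have : Finite H.Dart := H.dart_fin hfin
  obtain ⟨b, hb, hbv⟩ := H.rot_to hd
  have hv : {v} ∈ K.faces := by rw [← hbv]; exact H.p_vert b
  have hvs : v ∈ K.space := by
    rw [H.space_eq]; exact Set.mem_iUnion.2 ⟨d, subset_convexHull _ _ hd⟩
  obtain ⟨W, hW, hWn, -, hWc⟩ := lp_local (hlp v hvs) (star_nhd hfin hv)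
  let SA : Set (Pt n) := ⋃ a ∈ {a : H.Dart | v ∈ H.vs a ∧ ReflTransGen (H.Step v) d a},
    convexHull ℝ (H.vs a)
  let SB : Set (Pt n) := ⋃ a ∈ {a : H.Dart | v ∈ H.vs a ∧ ¬ ReflTransGen (H.Step v) d a},
    convexHull ℝ (H.vs a)
  have hcA : IsClosed SA := Set.Finite.isClosed_biUnion (Set.toFinite _) fun a _ =>
    ((H.vs_fin a).isCompact_convexHull ℝ).isClosed
  have hcB : IsClosed SB := Set.Finite.isClosed_biUnion (Set.toFinite _) fun a _ =>
    ((H.vs_fin a).isCompact_convexHull ℝ).isClosed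
  have hcov : W \ {v} ⊆ SA ∪ SB := by
    rintro x ⟨hx, -⟩
    obtain ⟨hx1, hx2⟩ := hW hx
    rw [H.space_eq] at hx2
    obtain ⟨a, ha⟩ := Set.mem_iUnion.1 hx2
    have hva : v ∈ H.vs a := by
      by_contra hva
      refine hx1 (Set.mem_biUnion (x := H.tf a) ⟨H.tf_face a, ?_⟩ ?_)
      · rw [← Finset.mem_coe, tf_coe]; exact hva
      · rw [tf_coe]; exact ha
    by_cases hr : ReflTransGen (H.Step v) d a
    · exact Or.inl (Set.mem_biUnion (x := a) ⟨hva, hr⟩ ha)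
    · exact Or.inr (Set.mem_biUnion (x := a) ⟨hva, hr⟩ ha)
  have hA : ((W \ {v}) ∩ SA).Nonempty := (H.near hd hWn).mono
    (Set.inter_subset_inter_right _ (Set.subset_biUnion_of_mem (u := fun a : H.Dart =>
      convexHull ℝ (H.vs a)) (x := d) ⟨hd, .refl⟩))
  have hB : ((W \ {v}) ∩ SB).Nonempty := (H.near he hWn).mono
    (Set.inter_subset_inter_right _ (Set.subset_biUnion_of_mem (u := fun a : H.Dart =>
      convexHull ℝ (H.vs a)) (x := e) ⟨he, hnot⟩))
  obtain ⟨x, ⟨-, hxv⟩, hxA, hxB⟩ := isPreconnected_closed_iff.1 hWc SA SB hcA hcB hcov hA hB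
  obtain ⟨a, ⟨hva, hra⟩, hxa⟩ := Set.mem_iUnion₂.1 hxA
  obtain ⟨c, ⟨hvc, hrc⟩, hxc⟩ := Set.mem_iUnion₂.1 hxB
  apply hrc
  refine hra.trans ?_
  rcases H.inter_cases hva hvc with h | ⟨u, huv, hua, hub, -⟩ | h
  · exact h.chain v
  · exact H.chain2 hva hua hvc hub huv.symm (left_mem_segment _ _ _)
  · exfalso
    have hx : x ∈ convexHull ℝ (H.vs a ∩ H.vs c) := by
      rw [← H.inter_hull]; exact ⟨hxa, hxc⟩
    rw [h, convexHull_singleton] at hx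
    exact hxv hx

end OD

open Relation

/-- rotations of a triple -/
def Rot3 (o : Pt n × Pt n × Pt n) (x y z : Pt n) : Prop :=
  o = (x, y, z) ∨ o = (y, z, x) ∨ o = (z, x, y)

lemma distinct3 {t : Finset (Pt n)} {x y z : Pt n} (h3 : t.card = 3)
    (h : (t : Set (Pt n)) = {x, y, z}) : x ≠ y ∧ y ≠ z ∧ x ≠ z := by
  have h3' : ({x, y, z} : Set (Pt n)).ncard = 3 := by rw [← h, Set.ncard_coe_finset, h3]
  have key : ∀ a b : Pt n, ({a, b} : Set (Pt n)).ncard ≠ 3 := by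
    intro a b hab
    have := Set.ncard_insert_le a {b}
    rw [Set.ncard_singleton] at this
    omega
  refine ⟨?_, ?_, ?_⟩ <;> rintro rfl
  · rw [Set.insert_eq_of_mem (by simp)] at h3'; exact key _ _ h3'
  · rw [Set.pair_eq_singleton] at h3'; exact key _ _ h3'
  · rw [Set.insert_eq_of_mem (by simp)] at h3'; exact key _ _ h3'

lemma Rot3.set {o : Pt n × Pt n × Pt n} {x y z : Pt n} (h : Rot3 o x y z) :
    ({o.1, o.2.1, o.2.2} : Set (Pt n)) = {x, y, z} := by
  ext u
  rcases h with rfl | rfl | rfl <;> simp only [Set.mem_insert_iff, Set.mem_singleton_iff] <;> tauto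

lemma Rot3.dir {o : Pt n × Pt n × Pt n} {x y z : Pt n} (h : Rot3 o x y z) :
    (x, y) ∈ triDirs o := by
  rcases h with rfl | rfl | rfl <;> simp [triDirs]

lemma Rot3.of_dir {o : Pt n × Pt n × Pt n} {x y : Pt n} (h : (x, y) ∈ triDirs o) :
    ∃ z, Rot3 o x y z := by
  obtain ⟨a, b, c⟩ := o
  simp only [triDirs, Set.mem_insert_iff, Set.mem_singleton_iff, Prod.mk.injEq] at h
  rcases h with ⟨rfl, rfl⟩ | ⟨rfl, rfl⟩ | ⟨rfl, rfl⟩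
  · exact ⟨c, Or.inl rfl⟩
  · exact ⟨a, Or.inr (Or.inr rfl)⟩
  · exact ⟨b, Or.inr (Or.inl rfl)⟩

lemma Rot3.uniq {o : Pt n × Pt n × Pt n} {x y z w : Pt n} (h : Rot3 o x y z) (h' : Rot3 o x y w)
    (d : x ≠ y ∧ y ≠ z ∧ x ≠ z) : z = w := by
  obtain ⟨a, b, c⟩ := o
  simp only [Rot3, Prod.mk.injEq] at h h'
  grind

lemma Rot3.noflip {o : Pt n × Pt n × Pt n} {x y z w : Pt n} (h : Rot3 o x y z) (h' : Rot3 o y x w)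
    (d : x ≠ y ∧ y ≠ z ∧ x ≠ z) : False := by
  obtain ⟨a, b, c⟩ := o
  simp only [Rot3, Prod.mk.injEq] at h h'
  grind

lemma exists_OD (K : SimplicialComplex ℝ (Pt n))
    (hfin : K.faces.Finite) (hdim : TwoDimensional K) (hlp : LocallyPlanar K)
    (hnobd : ∀ e ∈ K.faces, e.card = 2 → IsInteriorEdge K e)
    (hor : Orientable K) : ∃ Dt, OD K Dt := by
  classical
  obtain ⟨ori, hset, hopp⟩ := hor
  have hco : ∀ {t x y z}, t ∈ K.faces → t.card = 3 → Rot3 (ori t) x y z →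
      (t : Set (Pt n)) = {x, y, z} := by
    intro t x y z ht h3 h
    rw [hset t ht h3, h.set]
  have hedge : ∀ {t x y z}, t ∈ K.faces → t.card = 3 → Rot3 (ori t) x y z →
      ({x, y} : Finset (Pt n)) ∈ K.faces ∧ ({x, y} : Finset (Pt n)) ⊆ t := by
    intro t x y z ht h3 h
    have hs : ({x, y} : Finset (Pt n)) ⊆ t := by
      rw [← Finset.coe_subset, hco ht h3 h]
      intro u hu
      simp only [Finset.coe_pair, Set.mem_insert_iff, Set.mem_singleton_iff] at hu ⊢
      tauto
    exact ⟨K.down_closed ht hs (by simp), hs⟩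
  have hup2 : ∀ {s : Finset (Pt n)}, s ∈ K.faces → 2 ≤ s.card →
      ∃ t ∈ K.faces, t.card = 3 ∧ s ⊆ t := by
    intro s hs h2
    rcases (hdim s hs).eq_or_lt with h3 | h3
    · exact ⟨s, hs, h3, subset_rfl⟩
    · obtain ⟨-, -, hn⟩ := hnobd s hs (by omega)
      obtain ⟨t, ht⟩ : (trianglesContaining K s).Nonempty := by
        rw [Set.nonempty_iff_ne_empty]; intro h0; rw [h0] at hn; simp at hn
      exact ⟨t, ht⟩
  refine ⟨fun x y z => ∃ t ∈ K.faces, t.card = 3 ∧ Rot3 (ori t) x y z, ?_, ?_, ?_, ?_, ?_, ?_, ?_⟩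
  · rintro x y z ⟨t, ht, h3, h⟩
    refine ⟨t, ht, h3, ?_⟩
    rcases h with h | h | h
    · exact Or.inr (Or.inr h)
    · exact Or.inl h
    · exact Or.inr (Or.inl h)
  · rintro x y z ⟨t, ht, h3, h⟩
    exact ⟨t, ht, h3, hco ht h3 h⟩
  · rintro x y z w ⟨t, ht, h3, h⟩ ⟨t', ht', h3', h'⟩
    have hd := distinct3 h3 (hco ht h3 h)
    have hd' := distinct3 h3' (hco ht' h3' h')
    by_cases he : t = t'
    · subst he; exact h.uniq h' hd
    · exfalso
      have := hopp t ht t' ht' h3 h3' he {x, y} (hedge ht h3 h).1 (Finset.card_pair hd.1)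
        (hedge ht h3 h).2 (hedge ht' h3' h').2 x y (by simp) (by simp) hd.1 h.dir
      obtain ⟨u, hu⟩ := Rot3.of_dir this
      exact h'.noflip hu hd'
  · rintro x y z ⟨t, ht, h3, h⟩
    have hd := distinct3 h3 (hco ht h3 h)
    obtain ⟨h1, h2⟩ := hedge ht h3 h
    obtain ⟨-, -, hn⟩ := hnobd _ h1 (Finset.card_pair hd.1)
    obtain ⟨t1, t2, h12, heq⟩ := Set.ncard_eq_two.1 hn
    obtain ⟨t', ⟨ht', h3', hs'⟩, hne⟩ : ∃ t' ∈ trianglesContaining K {x, y}, t ≠ t' := by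
      by_cases h : t = t1
      · exact ⟨t2, by rw [heq]; simp, by rw [h]; exact h12⟩
      · exact ⟨t1, by rw [heq]; simp, h⟩
    obtain ⟨w, hw⟩ := Rot3.of_dir (hopp t ht t' ht' h3 h3' hne {x, y} h1 (Finset.card_pair hd.1)
        h2 hs' x y (by simp) (by simp) hd.1 h.dir)
    exact ⟨w, t', ht', h3', hw⟩
  · rintro x y z ⟨t, ht, h3, h⟩ ⟨t', ht', h3', h'⟩
    have e : t = t' := by
      rw [← Finset.coe_inj, hco ht h3 h, hco ht' h3' h', Set.insert_comm]
    subst e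
    exact h.noflip h' (distinct3 h3 (hco ht h3 h))
  · intro t ht h3
    exact ⟨_, _, _, ⟨t, ht, h3, Or.inl rfl⟩, hset t ht h3⟩
  · intro s hs
    by_cases h2 : 2 ≤ s.card
    · exact hup2 hs h2
    · have h0 := Finset.card_pos.2 (K.nonempty_of_mem_faces hs)
      obtain ⟨v, rfl⟩ := Finset.card_eq_one.1 (show s.card = 1 by omega)
      have hv : v ∈ K.space := SimplicialComplex.mem_space_iff.2 ⟨{v}, hs, by simp⟩
      obtain ⟨s', hs', hvs, hne⟩ := not_isolated hfin hs (hlp v hv)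
      have hss : {v} ⊆ s' := Finset.singleton_subset_iff.2 hvs
      have : 2 ≤ s'.card := by
        have := Finset.card_lt_card (hss.ssubset_of_ne hne.symm)
        rw [Finset.card_singleton] at this
        omega
      obtain ⟨t, ht, h3, hst⟩ := hup2 hs' this
      exact ⟨t, ht, h3, hss.trans hst⟩

theorem eulerChar_closed_orientable (K : SimplicialComplex ℝ (Pt n))
    (hfin : K.faces.Finite) (hdim : TwoDimensional K)
    (hconn : IsConnected K.space) (hlp : LocallyPlanar K)
    (hnobd : ∀ e ∈ K.faces, e.card = 2 → IsInteriorEdge K e)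
    (hor : Orientable K) :
    eulerChar K = 2 - 2 * (genus ↥K.space : ℤ) := by
  obtain ⟨Dt, H⟩ := exists_OD K hfin hdim hlp hnobd hor
  have hne : Nonempty H.Dart := by
    obtain ⟨x, hx⟩ := hconn.1
    rw [H.space_eq] at hx
    obtain ⟨a, -⟩ := Set.mem_iUnion.1 hx
    exact ⟨a⟩
  have hl := H.linked hfin hlp
  have h1 := (H.toCx hfin hne hl).genus_eq K.space (H.toCx_S hfin hne hl) hconn.2
  rw [H.toCx_N hfin hne hl] at h1
  omega

end PaperAlg
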